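/- arXiv:dg-ga/9608005 — 3 statements merged into one kernel-verified Lean document; each statement's English description precedes it below -/
import Mathlib

section
/- Let T and E be real Banach spaces, S a Hausdorff topological space, s₀ ∈ S, and V ⊆ T an open neighbourhood of 0. Let H : S × V → E be continuous and, for each s ∈ S, Fréchet differentiable in the second variable, with partial differential D_V H : S × V → L(T,E) uniformly continuous at (s₀,0), i.e. for every ε > 0 there are a neighbourhood W of s₀ and δ > 0 such that ‖D_V H(s,v) − D_V H(s₀,0)‖ < ε whenever s ∈ W, v ∈ V and ‖v‖ < δ. Assume topological direct sum decompositions T = K ⊕ P and E = C ⊕ Q into closed subspaces such that σ := D_V H(s₀,0)|_P : P → Q is a toplinear isomorphism, and assume H(s₀,0) ∈ C. Then there exist an open neighbourhood S' ⊆ S of s₀, an open neighbourhood V' ⊆ V of 0, a map Φ : S' × V' → S' × V which, writing v = (k,p) ∈ K ⊕ P, has the form Φ(s,(k,p)) = (s,(k,φ(s,k,p))), is a homeomorphism onto an open subset of S' × V and satisfies Φ(s₀,0) = (s₀,0), and a continuous map κ : S' × V' → C such that H(Φ(s,(k,p))) = κ(s,(k,p)) + σ(p) for all (s,(k,p)) ∈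 S' × V'. -/
open Set Filter Topology


/-- Parametrised local surjectivity. -/
theorem kur_open {T S : Type*} [NormedAddCommGroup T] [NormedSpace ℝ T] [CompleteSpace T]
    [TopologicalSpace S] (F : S → T → T) (A B : T →L[ℝ] T) (hAB : ∀ x, A (B x) = x)
    (S₁ : Set S) (U : Set T) (hS₁ : IsOpen S₁) (hU : IsOpen U)
    (c N : NNReal) (hN : ‖B‖ ≤ N) (hc : (c : ℝ) < (N : ℝ)⁻¹)
    (hF : ContinuousOn (fun q : S × T => F q.1 q.2) (S₁ ×ˢ U))
    (happ : ∀ s ∈ S₁, ApproximatesLinearOn (F s) A U c)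
    (q : S × T) (hq : q ∈ S₁ ×ˢ U) (O : Set (S × T)) (hO : O ∈ 𝓝 q) :
    (fun q : S × T => (q.1, F q.1 q.2)) '' O ∈ 𝓝 (q.1, F q.1 q.2) := by
  obtain ⟨s, v⟩ := q
  obtain ⟨hs, hv⟩ := hq
  simp only at hs hv ⊢
  let R : A.NonlinearRightInverse :=
    { toFun := B
      nnnorm := N
      bound' := fun y => (B.le_opNorm y).trans (by gcongr)
      right_inv' := hAB }
  obtain ⟨W, hW, Y, hY, hWY⟩ := mem_nhds_prod_iff.1 hO
  obtain ⟨ε, ε0, hε⟩ := Metric.nhds_basis_closedBall.mem_iff.1 (inter_mem hY (hU.mem_nhds hv))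
  have hη : 0 < ((N : ℝ)⁻¹ - c) * ε := mul_pos (sub_pos.2 hc) ε0
  set η := ((N : ℝ)⁻¹ - c) * ε with hηd
  have hFat : ContinuousAt (fun q : S × T => F q.1 q.2) (s, v) :=
    hF.continuousAt ((hS₁.prod hU).mem_nhds ⟨hs, hv⟩)
  have hFs : ContinuousAt (fun s' : S => F s' v) s :=
    ContinuousAt.comp (f := fun s' : S => (s', v)) (x := s) hFat (by fun_prop)
  have h1 : ∀ᶠ s' in 𝓝 s, dist (F s' v) (F s v) < η / 2 :=
    hFs (Metric.ball_mem_nhds _ (half_pos hη))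
  have h2 : ∀ᶠ w in 𝓝 (F s v), dist w (F s v) < η / 2 := Metric.ball_mem_nhds _ (half_pos hη)
  have h4 : ∀ᶠ s' in 𝓝 s, s' ∈ S₁ := hS₁.mem_nhds hs
  have h5 : ∀ᶠ s' in 𝓝 s, s' ∈ W := hW
  have h3 := (h1.and (h4.and h5)).prodMk_nhds h2
  filter_upwards [h3] with p hp
  obtain ⟨s', w⟩ := p
  obtain ⟨⟨ha, hb, hc'⟩, hd⟩ := hp
  simp only at ha hb hc' hd
  have hsurj := (happ s' hb).surjOn_closedBall_of_nonlinearRightInverse R ε0.le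
    (hε.trans inter_subset_right)
  have hw : w ∈ Metric.closedBall (F s' v) (((R.nnnorm : ℝ)⁻¹ - c) * ε) := by
    rw [Metric.mem_closedBall]
    change dist w (F s' v) ≤ η
    have := dist_triangle_right w (F s' v) (F s v)
    linarith
  obtain ⟨v', hv', hfv'⟩ := hsurj hw
  exact ⟨(s', v'), hWY ⟨hc', (hε hv').1⟩, by simp [hfv']⟩

/-- Injectivity from approximation. -/
theorem kur_inj {T : Type*} [NormedAddCommGroup T] [NormedSpace ℝ T]
    (f : T → T) (A B : T →L[ℝ] T) (hBA : ∀ x, B (A x) = x) (U : Set T)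
    (c N : NNReal) (hN : ‖B‖ ≤ N) (hc : (N : ℝ) * c < 1)
    (happ : ApproximatesLinearOn f A U c) : InjOn f U := by
  intro x hx y hy hxy
  have h1 := happ x hx y hy
  rw [hxy, sub_self, zero_sub, norm_neg] at h1
  have h2 : ‖x - y‖ ≤ N * (c * ‖x - y‖) := by
    calc ‖x - y‖ = ‖B (A (x - y))‖ := by rw [hBA]
      _ ≤ ‖B‖ * ‖A (x - y)‖ := B.le_opNorm _
      _ ≤ N * (c * ‖x - y‖) := by gcongr
  have h3 : ‖x - y‖ = 0 := by
    have := norm_nonneg (x - y)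
    nlinarith
  exact sub_eq_zero.1 (norm_eq_zero.1 h3)

/-- Implicit function theorem for a continuous family of differentiable maps
with splittable differential (Proposition `diff_kuranishi`). -/
theorem kuranishi_implicit_function
    {T E : Type*} [NormedAddCommGroup T] [NormedSpace ℝ T] [CompleteSpace T]
    [NormedAddCommGroup E] [NormedSpace ℝ E] [CompleteSpace E]
    {S : Type*} [TopologicalSpace S] [T2Space S] (s₀ : S)
    (V : Set T) (hV : IsOpen V) (h0V : (0 : T) ∈ V)
    (H : S → T → E) (DH : S → T → T →L[ℝ] E)
    (Hcont : ContinuousOn (fun q : S × T => H q.1 q.2) (univ ×ˢ V))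
    (Hdiff : ∀ s : S, ∀ v ∈ V, HasFDerivAt (H s) (DH s v) v)
    (Hucont : ∀ ε > (0:ℝ), ∃ W ∈ 𝓝 s₀, ∃ δ > (0:ℝ),
      ∀ s ∈ W, ∀ v ∈ V, ‖v‖ < δ → ‖DH s v - DH s₀ 0‖ < ε)
    -- topological direct sum decompositions T = K ⊕ P, E = C ⊕ Q
    (K P : Submodule ℝ T) (hKcl : IsClosed (K : Set T)) (hPcl : IsClosed (P : Set T))
    (hKP : IsCompl K P)
    (C Q : Submodule ℝ E) (hCcl : IsClosed (C : Set E)) (hQcl : IsClosed (Q : Set E))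
    (hCQ : IsCompl C Q)
    -- the continuous projections of T onto K and P
    (πK πP : T →L[ℝ] T)
    (hπK : ∀ v, πK v ∈ K) (hπP : ∀ v, πP v ∈ P) (hπ : ∀ v, πK v + πP v = v)
    -- σ = D_V H(s₀,0)|_P : P → Q is a toplinear isomorphism
    (σ : P ≃L[ℝ] Q) (hσ : ∀ x : P, (σ x : E) = DH s₀ 0 x)
    (hHC : H s₀ 0 ∈ C) :
    ∃ (S' : Set S) (V' : Set T) (φ : S → T → T) (κ : S → T → E),
      IsOpen S' ∧ s₀ ∈ S' ∧ IsOpen V' ∧ (0:T) ∈ V' ∧ V' ⊆ V ∧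
      -- Φ(s,(k,p)) = (s,(k,φ(s,k,p))), encoded as Φ(s,v) = (s, πK v + φ s v) with φ s v ∈ P
      (∀ s ∈ S', ∀ v ∈ V', φ s v ∈ P) ∧
      -- Φ(s₀,0) = (s₀,0)
      φ s₀ 0 = 0 ∧
      -- Φ maps S' × V' into S' × V
      (∀ s ∈ S', ∀ v ∈ V', πK v + φ s v ∈ V) ∧
      -- Φ is a homeomorphism onto an open subset of S' × V :
      ContinuousOn (fun q : S × T => ((q.1, πK q.2 + φ q.1 q.2) : S × T)) (S' ×ˢ V') ∧
      InjOn (fun q : S × T => ((q.1, πK q.2 + φ q.1 q.2) : S × T)) (S' ×ˢ V') ∧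
      IsOpen ((fun q : S × T => ((q.1, πK q.2 + φ q.1 q.2) : S × T)) '' (S' ×ˢ V')) ∧
      (∃ Ψ : S × T → S × T,
        ContinuousOn Ψ
          ((fun q : S × T => ((q.1, πK q.2 + φ q.1 q.2) : S × T)) '' (S' ×ˢ V')) ∧
        ∀ q ∈ S' ×ˢ V', Ψ (q.1, πK q.2 + φ q.1 q.2) = q) ∧
      -- κ is continuous with values in C
      (∀ s ∈ S', ∀ v ∈ V', κ s v ∈ C) ∧
      ContinuousOn (fun q : S × T => κ q.1 q.2) (S' ×ˢ V') ∧
      -- H ∘ Φ = (κ, σ ∘ pr₂)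
      (∀ s ∈ S', ∀ v ∈ V', H s (πK v + φ s v) = κ s v + DH s₀ 0 (πP v)) := by
  have hKP0 : ∀ x, x ∈ K → x ∈ P → x = 0 := fun x h1 h2 =>
    Submodule.disjoint_def.1 hKP.disjoint x h1 h2
  have hKP' : ∀ x ∈ P, πK x = 0 := fun x hx => by
    refine hKP0 _ (hπK x) ?_
    have : πK x = x - πP x := eq_sub_of_add_eq (hπ x)
    rw [this]; exact P.sub_mem hx (hπP x)
  have hPK' : ∀ x ∈ K, πP x = 0 := fun x hx => by
    refine hKP0 _ ?_ (hπP x)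
    have : πP x = x - πK x := eq_sub_of_add_eq' (hπ x)
    rw [this]; exact K.sub_mem hx (hπK x)
  have hPP : ∀ x ∈ P, πP x = x := fun x hx => by
    have := hπ x; rwa [hKP' x hx, zero_add] at this
  have hKK : ∀ x ∈ K, πK x = x := fun x hx => by
    have := hπ x; rwa [hPK' x hx, add_zero] at this
  -- the projection to Q
  have htop : Q.IsTopCompl C := Submodule.IsCompl.isTopCompl_of_isClosed hCQ.symm hQcl hCcl
  obtain ⟨πQ, hπQ, hπQC⟩ : ∃ πQ : E →L[ℝ] Q, (∀ x : Q, πQ x = x) ∧ ∀ x, πQ x = 0 ↔ x ∈ C :=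
    ⟨Q.projectionOntoL C htop, fun x => by simp, fun x => by
      rw [Submodule.coe_projectionOntoL]
      exact Submodule.projectionOnto_apply_eq_zero_iff _⟩
  let J : E →L[ℝ] T := P.subtypeL ∘L (σ.symm : Q →L[ℝ] P) ∘L πQ
  have hJ : ∀ x, J x = (σ.symm (πQ x) : T) := fun x => rfl
  have hJP : ∀ x, J x ∈ P := fun x => (σ.symm (πQ x)).2
  have hJD : ∀ x ∈ P, J (DH s₀ 0 x) = x := fun x hx => by
    rw [hJ, ← hσ ⟨x, hx⟩, hπQ]; simp
  have hJ0 : ∀ x, J x = 0 → x ∈ C := fun x hx => by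
    rw [← hπQC]
    rw [hJ] at hx
    have : σ.symm (πQ x) = 0 := Subtype.ext hx
    simpa using this
  have hJC : ∀ x ∈ C, J x = 0 := fun x hx => by
    rw [hJ, (hπQC x).2 hx]; simp
  let F : S → T → T := fun s v => πK v + J (H s v)
  have hKF : ∀ s v, πK (F s v) = πK v := fun s v => by
    simp only [F, map_add]
    rw [hKP' _ (hJP _), hKK _ (hπK v), add_zero]
  have hPF : ∀ s v, πP (F s v) = J (H s v) := fun s v => by
    simp only [F, map_add]
    rw [hPP _ (hJP _), hPK' _ (hπK v), zero_add]
  have hF0 : F s₀ 0 = 0 := by simp [F, hJC _ hHC]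
  let A : T →L[ℝ] T := πK + J ∘L DH s₀ 0
  let B : T →L[ℝ] T := ContinuousLinearMap.id ℝ T - J ∘L DH s₀ 0 ∘L πK
  have hAx : ∀ x, A x = x + J (DH s₀ 0 (πK x)) := fun x => by
    have h : J (DH s₀ 0 x) = J (DH s₀ 0 (πK x)) + πP x := by
      conv_lhs => rw [← hπ x]
      rw [map_add, map_add, hJD _ (hπP x)]
    change πK x + J (DH s₀ 0 x) = _
    rw [h]
    conv_rhs => rw [← hπ x]
    rw [map_add, hKK _ (hπK x), hKP' _ (hπP x), add_zero]
    abel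
  have hBx : ∀ x, B x = x - J (DH s₀ 0 (πK x)) := fun x => rfl
  have hAB : ∀ x, A (B x) = x := fun x => by
    rw [hAx, hBx, map_sub πK, hKP' _ (hJP _), sub_zero]; abel
  have hBA : ∀ x, B (A x) = x := fun x => by
    rw [hBx, hAx, map_add πK, hKP' _ (hJP _), add_zero]; abel
  let N : NNReal := ‖B‖₊ + 1
  have hN : ‖B‖ ≤ N := by simp [N]
  have hNpos : (0:ℝ) < N := by positivity
  let c : NNReal := (2 * N)⁻¹
  have hcN : (N:ℝ) * c = 1 / 2 := by
    simp only [c]; push_cast; field_simp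
  have hcpos : (0:ℝ) < c := by
    by_contra h
    nlinarith
  have hc : (c : ℝ) < (N : ℝ)⁻¹ := by
    rw [lt_inv_comm₀ hcpos hNpos, lt_inv_comm₀ hNpos hcpos, ← one_div, lt_div_iff₀ hNpos]
    linarith
  obtain ⟨W, hW, δ, hδ, hD⟩ := Hucont (c / (‖J‖ + 1)) (by positivity)
  obtain ⟨S₁, hS₁W, hS₁, hs₀⟩ := mem_nhds_iff.1 hW
  obtain ⟨ρ₀, hρ₀, hρV⟩ := Metric.isOpen_iff.1 hV 0 h0V
  let ρ := min ρ₀ δ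
  have hρ : 0 < ρ := lt_min hρ₀ hδ
  let U : Set T := Metric.ball 0 ρ
  have hUV : U ⊆ V := (Metric.ball_subset_ball (min_le_left _ _)).trans hρV
  have hUo : IsOpen U := Metric.isOpen_ball
  have h0U : (0:T) ∈ U := Metric.mem_ball_self hρ
  have happ : ∀ s ∈ S₁, ApproximatesLinearOn (F s) A U c := by
    intro s hs x hx y hy
    refine (convex_ball (0:T) ρ).norm_image_sub_le_of_norm_hasFDerivWithin_le'
      (f' := fun v => πK + J ∘L DH s v) (fun v hv => ?_) (fun v hv => ?_) hy hx
    · exact (πK.hasFDerivAt.add (J.hasFDerivAt.comp v (Hdiff s v (hUV hv)))).hasFDerivWithinAt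
    · have h1 : ‖DH s v - DH s₀ 0‖ < c / (‖J‖ + 1) := by
        refine hD s (hS₁W hs) v (hUV hv) ?_
        exact (mem_ball_zero_iff.1 hv).trans_le (min_le_right _ _)
      have h2 : πK + J ∘L DH s v - A = J ∘L (DH s v - DH s₀ 0) := by
        ext z; simp [A]
      rw [h2]
      calc ‖J ∘L (DH s v - DH s₀ 0)‖ ≤ ‖J‖ * ‖DH s v - DH s₀ 0‖ := J.opNorm_comp_le _
        _ ≤ (‖J‖ + 1) * (c / (‖J‖ + 1)) := by gcongr; linarith
        _ = c := by field_simp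
  have hHc : ContinuousOn (fun q : S × T => H q.1 q.2) (S₁ ×ˢ U) :=
    Hcont.mono (prod_mono (subset_univ _) hUV)
  have hFc : ContinuousOn (fun q : S × T => F q.1 q.2) (S₁ ×ˢ U) := by
    have h1 : ContinuousOn (fun q : S × T => J (H q.1 q.2)) (S₁ ×ˢ U) :=
      J.continuous.comp_continuousOn hHc
    have h2 : ContinuousOn (fun q : S × T => πK q.2) (S₁ ×ˢ U) := by fun_prop
    exact h2.add h1
  let X : Set (S × T) := S₁ ×ˢ U
  have hXo : IsOpen X := hS₁.prod hUo
  let f : S × T → S × T := fun q => (q.1, F q.1 q.2)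
  have hfc : ContinuousOn f X := continuousOn_fst.prodMk hFc
  have hfo : ∀ q ∈ X, ∀ O ∈ 𝓝 q, f '' O ∈ 𝓝 (f q) := fun q hq O hO =>
    kur_open F A B hAB S₁ U hS₁ hUo c N hN hc hFc happ q hq O hO
  have hFi : ∀ s ∈ S₁, InjOn (F s) U := fun s hs =>
    kur_inj (F s) A B hBA U c N hN (by rw [hcN]; norm_num) (happ s hs)
  have hx₀ : (s₀, (0:T)) ∈ X := ⟨hs₀, h0U⟩
  have himg : f '' X ∈ 𝓝 (s₀, (0:T)) := by
    have := hfo _ hx₀ X (hXo.mem_nhds hx₀)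
    simpa [f, hF0] using this
  obtain ⟨S₂, Y, hS₂, hs₂, hY, hY0, hSY⟩ := mem_nhds_prod_iff'.1 himg
  let V' : Set T := Y ∩ V
  have hex : ∀ s ∈ S₂, ∀ w ∈ V', s ∈ S₁ ∧ ∃ v ∈ U, F s v = w := by
    intro s hs w hw
    obtain ⟨⟨s', v⟩, hx, hfx⟩ := hSY (show (s, w) ∈ S₂ ×ˢ Y from ⟨hs, hw.1⟩)
    simp only [f, Prod.mk.injEq] at hfx
    obtain ⟨rfl, h⟩ := hfx
    exact ⟨hx.1, v, hx.2, h⟩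
  let g : S → T → T := fun s => Function.invFunOn (F s) U
  have hgU : ∀ s ∈ S₂, ∀ w ∈ V', g s w ∈ U := fun s hs w hw =>
    Function.invFunOn_mem (hex s hs w hw).2
  have hFg : ∀ s ∈ S₂, ∀ w ∈ V', F s (g s w) = w := fun s hs w hw =>
    Function.invFunOn_eq (hex s hs w hw).2
  have hgF : ∀ s ∈ S₂, ∀ v ∈ U, F s v ∈ V' → g s (F s v) = v := fun s hs v hv hw =>
    hFi s (hex s hs _ hw).1 (hgU s hs _ hw) hv (hFg s hs _ hw)
  have hdec : ∀ s ∈ S₂, ∀ w ∈ V', πK w + πP (g s w) = g s w := fun s hs w hw => by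
    have h : πK w = πK (g s w) := by
      conv_lhs => rw [← hFg s hs w hw]
      exact hKF _ _
    rw [h]; exact hπ _
  have h0V' : (0:T) ∈ V' := ⟨hY0, h0V⟩
  have hVo : IsOpen V' := hY.inter hV
  let G : S × T → S × T := fun q => (q.1, πK q.2 + πP (g q.1 q.2))
  have hG : ∀ q ∈ S₂ ×ˢ V', G q = (q.1, g q.1 q.2) := fun q hq => by
    simp only [G]; rw [hdec _ hq.1 _ hq.2]
  have hGX : ∀ q ∈ S₂ ×ˢ V', G q ∈ X := fun q hq => by
    rw [hG q hq]; exact ⟨(hex _ hq.1 _ hq.2).1, hgU _ hq.1 _ hq.2⟩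
  have hfG : ∀ q ∈ S₂ ×ˢ V', f (G q) = q := fun q hq => by
    rw [hG q hq]; simp only [f]; rw [hFg _ hq.1 _ hq.2]
  have hGf : ∀ x ∈ X, f x ∈ S₂ ×ˢ V' → G (f x) = x := fun x hx hfx => by
    rw [hG _ hfx]; simp only [f]; rw [hgF _ hfx.1 _ hx.2 hfx.2]
  have hSV : IsOpen (S₂ ×ˢ V') := hS₂.prod hVo
  have hGc : ContinuousOn G (S₂ ×ˢ V') := by
    intro q hq
    apply ContinuousAt.continuousWithinAt
    intro O hO
    have h1 := hfo _ (hGX q hq) (O ∩ X) (inter_mem hO (hXo.mem_nhds (hGX q hq)))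
    rw [hfG q hq] at h1
    rw [mem_map]
    filter_upwards [h1, hSV.mem_nhds hq] with p hp hp'
    obtain ⟨x, ⟨hxO, hxX⟩, rfl⟩ := hp
    rw [mem_preimage, hGf x hxX hp']
    exact hxO
  have hGim : G '' (S₂ ×ˢ V') = X ∩ f ⁻¹' (S₂ ×ˢ V') := by
    ext x
    constructor
    · rintro ⟨q, hq, rfl⟩
      exact ⟨hGX q hq, by rw [mem_preimage, hfG q hq]; exact hq⟩
    · rintro ⟨hx, hfx⟩
      exact ⟨f x, hfx, hGf x hx hfx⟩
  have hHG : ContinuousOn (fun q : S × T => H q.1 (πK q.2 + πP (g q.1 q.2))) (S₂ ×ˢ V') :=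
    ContinuousOn.comp (f := G) hHc hGc hGX
  refine ⟨S₂, V', fun s w => πP (g s w),
    fun s w => H s (πK w + πP (g s w)) - DH s₀ 0 (πP w), hS₂, hs₂, hVo, h0V',
    inter_subset_right, fun s _ w _ => hπP _, ?_, ?_, hGc, ?_, ?_, ⟨f, ?_, hfG⟩, ?_, ?_, ?_⟩
  · have := hgF s₀ hs₂ 0 h0U (by rw [hF0]; exact h0V')
    rw [hF0] at this
    simp [this]
  · intro s hs w hw
    rw [hdec s hs w hw]
    exact hUV (hgU s hs w hw)
  · intro a ha b hb hab
    have := congrArg f hab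
    rwa [hfG a ha, hfG b hb] at this
  · change IsOpen (G '' (S₂ ×ˢ V'))
    rw [hGim]
    exact hfc.isOpen_inter_preimage hXo hSV
  · change ContinuousOn f (G '' (S₂ ×ˢ V'))
    rw [hGim]
    exact hfc.mono inter_subset_left
  · intro s hs w hw
    apply hJ0
    simp only
    rw [hdec s hs w hw, map_sub, hJD _ (hπP w), ← hPF, hFg s hs w hw, sub_self]
  · exact hHG.sub (by fun_prop)
  · intro s hs w hw
    simp
end

section
/- Let X be a Hausdorff topological space, Y a topological space, and f : X → Y a continuous open map. Then the set of injective points of f, namely {x ∈ X : f⁻¹({f(x)}) = {x}}, is closed in X. -/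
/-- For a continuous open map from a Hausdorff space, the set of injective points is closed. -/
theorem isClosed_injective_points
    {X Y : Type*} [TopologicalSpace X] [T2Space X] [TopologicalSpace Y]
    (f : X → Y) (hcont : Continuous f) (hopen : IsOpenMap f) :
    IsClosed {x : X | f ⁻¹' {f x} = {x}} := by
  rw [← isOpen_compl_iff, isOpen_iff_forall_mem_open]
  intro x hx
  have hex : ∃ y, f y = f x ∧ y ≠ x := by
    by_contra hcon
    push Not at hcon
    apply hx
    ext y
    constructor
    · intro hy
      exact hcon y hy
    · rintro rfl
      rfl
  obtain ⟨y, hy, hne⟩ := hex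
  obtain ⟨V, U, hV, hU, hyV, hxU, hd⟩ := t2_separation hne
  refine ⟨U ∩ f ⁻¹' (f '' V), ?_, hU.inter ((hopen V hV).preimage hcont), hxU, y, hyV, hy⟩
  rintro z ⟨hzU, v, hvV, hvz⟩ hz
  have hv : v ∈ f ⁻¹' {f z} := hvz
  have hz' : f ⁻¹' {f z} = {z} := hz
  rw [hz'] at hv
  have hvz' : v = z := hv
  subst hvz'
  exact Set.disjoint_left.mp hd hvV hzU
end

section
/- For g ∈ C_c^∞(𝔻) define the singular integral Sg(z) = lim_{ε→0⁺} −(1/π) ∫_{𝔻 ∖ B(z,ε)} g(w)/(w−z)² dμ(w) for z ∈ 𝔻. Then: (i) this principal value limit exists for every z ∈ 𝔻; and (ii) for every 1 < p < ∞ there exists a constant C > 0 such that for all g ∈ C_c^∞(𝔻), ∫_𝔻 |Sg(z)|ᵖ |z|⁻¹ dμ(z) ≤ C · ∫_𝔻 |g(z)|ᵖ |z|⁻¹ dμ(z). That is, S is bounded on Lᵖ of the unit disk with respect to the Muckenhoupt weight |z|⁻¹. -/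
open MeasureTheory Metric Filter Topology Set ENNReal NNReal

namespace BeurlingAux

/-- weighted Jensen / Hoelder -/
lemma jensen {α : Type*} [MeasurableSpace α] (ν : Measure α) {p : ℝ} (hp : 1 < p)
    {k F : α → ℝ≥0∞} (hk : AEMeasurable k ν) (hF : AEMeasurable F ν) :
    (∫⁻ a, k a * F a ∂ν) ^ p ≤ (∫⁻ a, k a ∂ν) ^ (p - 1) * ∫⁻ a, k a * F a ^ p ∂ν := by
  have hp0 : 0 < p := by linarith
  have hp1 : 0 < p - 1 := by linarith
  have hq : (Real.conjExponent p).HolderConjugate p := (Real.HolderConjugate.conjExponent hp).symm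
  set q := Real.conjExponent p with hqdef
  have hqe : q = p / (p - 1) := rfl
  have h1 := ENNReal.lintegral_mul_le_Lp_mul_Lq ν hq (f := fun a => k a ^ (1 / q))
    (g := fun a => k a ^ (1 / p) * F a) (hk.pow_const _) ((hk.pow_const _).mul hF)
  have hq0 : 0 < q := hq.pos
  have e1 : ∀ a, ((fun a => k a ^ (1 / q)) * (fun a => k a ^ (1 / p) * F a)) a = k a * F a := by
    intro a
    simp only [Pi.mul_apply]
    rw [← mul_assoc, ← ENNReal.rpow_add_of_nonneg _ _ (by positivity) (by positivity)]
    have : 1 / q + 1 / p = 1 := by have := hq.inv_add_inv_eq_one; simpa using this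
    rw [this, ENNReal.rpow_one]
  simp only [e1] at h1
  have e2 : ∀ a, (k a ^ (1 / q)) ^ q = k a := by
    intro a
    rw [← ENNReal.rpow_mul, one_div_mul_cancel hq0.ne', ENNReal.rpow_one]
  have e3 : ∀ a, (k a ^ (1 / p) * F a) ^ p = k a * F a ^ p := by
    intro a
    rw [ENNReal.mul_rpow_of_nonneg _ _ hp0.le, ← ENNReal.rpow_mul, one_div_mul_cancel hp0.ne',
      ENNReal.rpow_one]
  simp only [e2, e3] at h1
  calc _ ≤ ((∫⁻ a, k a ∂ν) ^ (1 / q) * (∫⁻ a, k a * F a ^ p ∂ν) ^ (1 / p)) ^ p :=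
        ENNReal.rpow_le_rpow h1 hp0.le
    _ = _ := by
        rw [ENNReal.mul_rpow_of_nonneg _ _ hp0.le, ← ENNReal.rpow_mul, ← ENNReal.rpow_mul,
          one_div_mul_cancel hp0.ne', ENNReal.rpow_one]
        congr 2
        rw [hqe]; field_simp

/-- Minkowski integral inequality (uniform version). -/
lemma minkowski {α β : Type*} [MeasurableSpace α] [MeasurableSpace β] (ν : Measure α)
    (μ : Measure β) [SFinite ν] [SFinite μ] {p : ℝ} (hp : 1 < p)
    {k : α → ℝ≥0∞} {F : β → α → ℝ≥0∞} (hk : Measurable k)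
    (hF : Measurable (Function.uncurry F)) {M : ℝ≥0∞}
    (hM : ∀ a, ∫⁻ b, F b a ^ p ∂μ ≤ M) :
    ∫⁻ b, (∫⁻ a, k a * F b a ∂ν) ^ p ∂μ ≤ (∫⁻ a, k a ∂ν) ^ p * M := by
  calc ∫⁻ b, (∫⁻ a, k a * F b a ∂ν) ^ p ∂μ
      ≤ ∫⁻ b, (∫⁻ a, k a ∂ν) ^ (p - 1) * ∫⁻ a, k a * F b a ^ p ∂ν ∂μ := by
        refine lintegral_mono fun b => jensen ν hp hk.aemeasurable ?_
        exact (hF.comp measurable_prodMk_left).aemeasurable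
    _ = (∫⁻ a, k a ∂ν) ^ (p - 1) * ∫⁻ b, ∫⁻ a, k a * F b a ^ p ∂ν ∂μ := by
        refine lintegral_const_mul _ ?_
        refine Measurable.lintegral_prod_right (f := fun b a => k a * F b a ^ p) ?_
        exact (hk.comp measurable_snd).mul (hF.pow_const p)
    _ = (∫⁻ a, k a ∂ν) ^ (p - 1) * ∫⁻ a, ∫⁻ b, k a * F b a ^ p ∂μ ∂ν := by
        rw [lintegral_lintegral_swap]
        exact ((hk.comp measurable_snd).mul (hF.pow_const p)).aemeasurable
    _ ≤ (∫⁻ a, k a ∂ν) ^ (p - 1) * ∫⁻ a, k a * M ∂ν := by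
        gcongr with a
        rw [lintegral_const_mul]
        · gcongr; exact hM a
        · exact (hF.comp measurable_prodMk_right).pow_const p
    _ = _ := by
        rw [lintegral_mul_const _ hk, ← mul_assoc]
        congr 1
        nth_rewrite 2 [← ENNReal.rpow_one (∫⁻ a, k a ∂ν)]
        rw [← ENNReal.rpow_add_of_nonneg _ _ (by linarith) (by norm_num)]
        congr 1; ring

lemma add_rpow_le' {p : ℝ} (hp : 1 < p) (a b : ℝ≥0∞) :
    (a + b) ^ p ≤ (2 : ℝ≥0∞) ^ (p - 1) * (a ^ p + b ^ p) :=
  ENNReal.rpow_add_le_mul_rpow_add_rpow a b hp.le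

/-- Fatou's lemma for `p`-th powers of enorms. -/
lemma fatou_enorm {α : Type*} [MeasurableSpace α] (μ : Measure α) {p : ℝ} (hp : 0 < p)
    {F : ℕ → α → ℂ} {G : α → ℂ} (hF : ∀ n, Measurable (F n))
    (h : ∀ᵐ a ∂μ, Tendsto (fun n => F n a) atTop (𝓝 (G a))) {M : ℝ≥0∞}
    (hM : ∀ n, ∫⁻ a, ‖F n a‖ₑ ^ p ∂μ ≤ M) : ∫⁻ a, ‖G a‖ₑ ^ p ∂μ ≤ M := by
  calc ∫⁻ a, ‖G a‖ₑ ^ p ∂μ ≤ ∫⁻ a, liminf (fun n => ‖F n a‖ₑ ^ p) atTop ∂μ := by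
        refine lintegral_mono_ae ?_
        filter_upwards [h] with a ha
        have : Tendsto (fun n => ‖F n a‖ₑ ^ p) atTop (𝓝 (‖G a‖ₑ ^ p)) :=
          (ENNReal.continuous_rpow_const.tendsto _).comp ha.enorm
        exact this.liminf_eq.ge
    _ ≤ liminf (fun n => ∫⁻ a, ‖F n a‖ₑ ^ p ∂μ) atTop :=
        lintegral_liminf_le fun n => (hF n).enorm.pow_const p
    _ ≤ M := by
        refine liminf_le_of_frequently_le' ?_
        exact Frequently.of_forall hM

end BeurlingAux

namespace BeurlingAux

lemma arg_ineq {p : ℝ} (hp : 1 < p) (hp2 : p ≤ 2) :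
    ∃ A B : ℝ, 0 < A ∧ 0 < B ∧ ∀ w : ℂ, 0 < w.re →
      |w.im| ^ p ≤ A * w.re ^ p - B * (w ^ (p : ℂ)).re := by
  have hpi := Real.pi_pos
  set β : ℝ := (1 + p) / 2 * (Real.pi / 2) with hβ
  have hβ1 : Real.pi / 2 < β := by rw [hβ]; nlinarith
  have hβ2 : β < p * (Real.pi / 2) := by rw [hβ]; nlinarith
  have hβ3 : β ≤ Real.pi := by nlinarith
  have hc : Real.cos β < 0 := Real.cos_neg_of_pi_div_two_lt_of_lt hβ1 (by linarith)
  have hβp : β / p < Real.pi / 2 := by rw [div_lt_iff₀ (by linarith)]; linarith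
  have hβp0 : 0 < β / p := by apply div_pos <;> linarith
  have hd : 0 < Real.cos (β / p) := Real.cos_pos_of_mem_Ioo ⟨by linarith, hβp⟩
  set c := -Real.cos β with hcdef
  have hc0 : 0 < c := by linarith
  set d := Real.cos (β / p) with hddef
  have hB : 0 < 1 / c := by positivity
  refine ⟨(1 + 1 / c) / d ^ p, 1 / c, by positivity, hB, ?_⟩
  intro w hw
  set r := ‖w‖ with hr
  set θ := w.arg with hθ
  have hw0 : w ≠ 0 := by rintro rfl; simp at hw
  have hr0 : 0 < r := norm_pos_iff.mpr hw0
  have hre : w.re = r * Real.cos θ := (Complex.norm_mul_cos_arg w).symm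
  have him : w.im = r * Real.sin θ := (Complex.norm_mul_sin_arg w).symm
  have habs : |θ| < Real.pi / 2 := by
    rw [hθ, Complex.abs_arg_lt_pi_div_two_iff]; left; exact hw
  have hcos : 0 < Real.cos θ := by
    rw [← Real.cos_abs]; apply Real.cos_pos_of_mem_Ioo
    exact ⟨by linarith [abs_nonneg θ], habs⟩
  have hpow : (w ^ (p : ℂ)).re = r ^ p * Real.cos (p * |θ|) := by
    rw [Complex.cpow_ofReal_re]
    congr 1
    rw [← Real.cos_abs, abs_mul, abs_of_pos (by linarith : 0 < p), mul_comm]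
  rw [hpow, him, hre, abs_mul, abs_of_pos hr0, Real.mul_rpow hr0.le (abs_nonneg _),
    Real.mul_rpow hr0.le hcos.le]
  have key : |Real.sin θ| ^ p ≤ (1 + 1 / c) / d ^ p * Real.cos θ ^ p
      - 1 / c * Real.cos (p * |θ|) := by
    have hs : |Real.sin θ| ^ p ≤ 1 :=
      Real.rpow_le_one (abs_nonneg _) (Real.abs_sin_le_one θ) (by linarith)
    have hAn : 0 ≤ (1 + 1 / c) / d ^ p * Real.cos θ ^ p := by positivity
    by_cases hcase : β ≤ p * |θ|
    · have : Real.cos (p * |θ|) ≤ Real.cos β := by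
        apply Real.cos_le_cos_of_nonneg_of_le_pi (by linarith) _ hcase
        nlinarith [abs_nonneg θ]
      have h2 : 1 ≤ - (1 / c * Real.cos (p * |θ|)) := by
        rw [← mul_neg, one_div, inv_mul_eq_div, le_div_iff₀ hc0]; linarith
      linarith
    · push Not at hcase
      have h3 : |θ| ≤ β / p := by rw [le_div_iff₀ (by linarith)]; linarith
      have h4 : d ≤ Real.cos θ := by
        rw [← Real.cos_abs θ]
        exact Real.cos_le_cos_of_nonneg_of_le_pi (abs_nonneg _) (by linarith) h3
      have h5 : d ^ p ≤ Real.cos θ ^ p := Real.rpow_le_rpow hd.le h4 (by linarith)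
      have h6 : 1 + 1 / c ≤ (1 + 1 / c) / d ^ p * Real.cos θ ^ p := by
        rw [div_mul_eq_mul_div, le_div_iff₀ (by positivity)]
        gcongr
      have h7 : 1 / c * Real.cos (p * |θ|) ≤ 1 / c * 1 := by
        gcongr; exact Real.cos_le_one _
      linarith
  calc r ^ p * |Real.sin θ| ^ p ≤ r ^ p * ((1 + 1 / c) / d ^ p * Real.cos θ ^ p
      - 1 / c * Real.cos (p * |θ|)) := by gcongr
    _ = _ := by ring

/-- Poisson kernel -/
noncomputable def Pk (y s : ℝ) : ℝ := y / (Real.pi * (s ^ 2 + y ^ 2))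
/-- conjugate Poisson kernel -/
noncomputable def Qk (y s : ℝ) : ℝ := s / (Real.pi * (s ^ 2 + y ^ 2))

lemma Pk_pos {y : ℝ} (hy : 0 < y) (s : ℝ) : 0 < Pk y s := by
  unfold Pk; have := Real.pi_pos; positivity

lemma continuous_Pk {y : ℝ} (hy : 0 < y) : Continuous (Pk y) := by
  unfold Pk
  refine continuous_const.div (by fun_prop) fun s => ?_
  have := Real.pi_pos; positivity

lemma continuous_Qk {y : ℝ} (hy : 0 < y) : Continuous (Qk y) := by
  unfold Qk
  refine continuous_id.div (by fun_prop) fun s => ?_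
  have := Real.pi_pos; positivity

lemma abs_Qk_le {y : ℝ} (hy : 0 < y) (s : ℝ) : |Qk y s| ≤ 1 / y := by
  unfold Qk
  have hpi := Real.pi_gt_three
  rw [abs_div, abs_of_pos (by positivity : 0 < Real.pi * (s ^ 2 + y ^ 2)),
    div_le_div_iff₀ (by positivity) hy]
  nlinarith [sq_nonneg (|s| - y), sq_abs s, abs_nonneg s, sq_nonneg s]

lemma lintegral_Pk {y : ℝ} (hy : 0 < y) : ∫⁻ s, ENNReal.ofReal (Pk y s) = 1 := by
  have hpi := Real.pi_pos
  have e : Pk y = fun s => (Real.pi * y)⁻¹ * (1 + (y⁻¹ * s) ^ 2)⁻¹ := by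
    ext s; unfold Pk; field_simp; ring
  have hIntg : Integrable (Pk y) := by
    rw [e]
    exact (integrable_inv_one_add_sq.comp_mul_left' (by positivity)).const_mul _
  rw [← ofReal_integral_eq_lintegral_ofReal hIntg (Eventually.of_forall fun s => (Pk_pos hy s).le),
    e, integral_const_mul, Measure.integral_comp_mul_left (fun s => (1 + s ^ 2)⁻¹),
    integral_univ_inv_one_add_sq]
  simp [abs_of_pos hy]
  field_simp

/-- The holomorphic extension. -/
noncomputable def Fh (f : ℝ → ℝ) (z : ℂ) : ℂ :=
  ∫ t : ℝ, (f t : ℂ) * ((Complex.I / Real.pi) / (z - t))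

lemma kernel_id {y : ℝ} (hy : 0 < y) (x t : ℝ) :
    (Complex.I / Real.pi) / ((x : ℂ) + y * Complex.I - t) =
      (Pk y (x - t) : ℂ) + (Qk y (x - t) : ℂ) * Complex.I := by
  have hpi : (Real.pi : ℂ) ≠ 0 := by exact_mod_cast Real.pi_ne_zero
  have h1 : (x : ℂ) + y * Complex.I - t ≠ 0 := by
    intro h
    have := congrArg Complex.im h
    simp at this; linarith
  have h2 : ((x : ℂ) - t) ^ 2 + (y : ℂ) ^ 2 ≠ 0 := by
    have : (0:ℝ) < (x - t) ^ 2 + y ^ 2 := by positivity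
    exact_mod_cast this.ne'
  unfold Pk Qk
  push_cast
  have h3 : (Real.pi : ℂ) * (((x : ℂ) - t) ^ 2 + (y : ℂ) ^ 2) ≠ 0 := mul_ne_zero hpi h2
  rw [div_div, div_mul_eq_mul_div, ← add_div, div_eq_div_iff (mul_ne_zero hpi h1) h3]
  linear_combination (-(Real.pi : ℂ) * ((x : ℂ) - t) * y) * Complex.I_sq

/-- bounded, compactly supported measurable nonnegative data -/
structure Good (N : ℝ) (f : ℝ → ℝ) : Prop where
  pos : 0 < N
  meas : Measurable f
  nonneg : ∀ t, 0 ≤ f t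
  le : ∀ t, f t ≤ N
  supp : ∀ t, N < |t| → f t = 0

lemma Good.integrable {N : ℝ} {f : ℝ → ℝ} (h : Good N f) : Integrable f := by
  have : Integrable (indicator (Icc (-N) N) (fun _ => N)) :=
    (integrable_indicator_iff measurableSet_Icc).2 (integrableOn_const (by simp))
  refine this.mono' h.meas.aestronglyMeasurable (Eventually.of_forall fun t => ?_)
  by_cases ht : t ∈ Icc (-N) N
  · rw [indicator_of_mem ht, Real.norm_of_nonneg (h.nonneg t)]; exact h.le t
  · rw [indicator_of_notMem ht, h.supp t, norm_zero]
    by_contra hc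
    exact ht (abs_le.mp (not_lt.mp hc))

lemma im_le_norm_sub (z : ℂ) (t : ℝ) : |z.im| ≤ ‖z - t‖ := by
  have := Complex.abs_im_le_norm (z - t)
  simpa using this

lemma Good.integrand {N : ℝ} {f : ℝ → ℝ} (h : Good N f) {z : ℂ} (hz : 0 < z.im) :
    Integrable fun t : ℝ => (f t : ℂ) * ((Complex.I / Real.pi) / (z - t)) := by
  refine Integrable.mul_bdd (c := ‖(Complex.I / Real.pi : ℂ)‖ / z.im) h.integrable.ofReal ?_ ?_
  · exact Measurable.aestronglyMeasurable (by fun_prop)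
  · refine Eventually.of_forall fun t => ?_
    rw [norm_div]
    have := im_le_norm_sub z t
    rw [abs_of_pos hz] at this
    gcongr

lemma Good.differentiableOn {N : ℝ} {f : ℝ → ℝ} (h : Good N f) :
    DifferentiableOn ℂ (Fh f) {z | 0 < z.im} := by
  intro z₀ hz₀
  have hz₀ : 0 < z₀.im := hz₀
  refine DifferentiableAt.differentiableWithinAt ?_
  have hball : ∀ z ∈ ball z₀ (z₀.im / 2), z₀.im / 2 < z.im := by
    intro z hz
    have h1 := Complex.abs_im_le_norm (z - z₀)
    rw [mem_ball, dist_eq_norm] at hz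
    have := (abs_le.mp h1).1
    simp at this; linarith
  have := hasDerivAt_integral_of_dominated_loc_of_deriv_le (μ := volume) (𝕜 := ℂ)
    (F := fun (z : ℂ) (t : ℝ) => (f t : ℂ) * ((Complex.I / Real.pi) / (z - t)))
    (F' := fun (z : ℂ) (t : ℝ) => (f t : ℂ) * (-(Complex.I / Real.pi) / (z - t) ^ 2))
    (x₀ := z₀) (s := ball z₀ (z₀.im / 2))
    (bound := fun t => f t * (‖(Complex.I / Real.pi : ℂ)‖ / (z₀.im / 2) ^ 2))
    (ball_mem_nhds _ (by linarith)) ?_ (h.integrand hz₀) ?_ ?_ ?_ ?_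
  · exact this.2.differentiableAt
  · refine Eventually.of_forall fun z => ?_
    have := h.meas
    exact Measurable.aestronglyMeasurable (by fun_prop)
  · have := h.meas
    exact Measurable.aestronglyMeasurable (by fun_prop)
  · refine Eventually.of_forall fun t z hz => ?_
    have h1 := hball z hz
    have h2 := im_le_norm_sub z t
    rw [abs_of_pos (by linarith)] at h2
    rw [norm_mul, norm_div, norm_neg, norm_pow, Complex.norm_real, Real.norm_of_nonneg (h.nonneg t)]
    have := h.nonneg t
    gcongr
    linarith
  · exact h.integrable.mul_const _
  · refine Eventually.of_forall fun t z hz => ?_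
    have h1 := hball z hz
    have h0 : z - t ≠ 0 := by
      intro h0
      have := im_le_norm_sub z t
      rw [h0, abs_of_pos (by linarith)] at this
      simp at this; linarith
    have := ((hasDerivAt_id z).sub_const (t : ℂ)).inv h0
    have := (this.const_mul (Complex.I / Real.pi : ℂ)).const_mul (f t : ℂ)
    refine (this.congr_deriv ?_)
    simp only [id]; ring

lemma Good.bound {N : ℝ} {f : ℝ → ℝ} (h : Good N f) {z : ℂ} (hz : 2 * N ≤ ‖z‖) :
    ‖Fh f z‖ ≤ (2 * ∫ t, f t) / ‖z‖ := by
  have hN := h.pos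
  have hz0 : 0 < ‖z‖ := by linarith
  have : ‖Fh f z‖ ≤ ∫ t, f t * (2 / ‖z‖) := by
    refine norm_integral_le_of_norm_le (h.integrable.mul_const _) (Eventually.of_forall fun t => ?_)
    rw [norm_mul, Complex.norm_real, Real.norm_of_nonneg (h.nonneg t)]
    by_cases ht : N < |t|
    · simp [h.supp t ht]
    · push Not at ht
      have h1 : ‖z‖ / 2 ≤ ‖z - t‖ := by
        have := norm_sub_norm_le z t
        rw [Complex.norm_real, Real.norm_eq_abs] at this
        linarith
      gcongr
      · exact h.nonneg t
      rw [norm_div, norm_div, Complex.norm_I, Complex.norm_real,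
        Real.norm_of_nonneg Real.pi_pos.le]
      have hpi := Real.pi_gt_three
      have h2 : 1 / Real.pi ≤ 1 := by rw [div_le_one (by linarith)]; linarith
      calc 1 / Real.pi / ‖z - t‖ ≤ 1 / (‖z‖ / 2) := by gcongr
        _ = 2 / ‖z‖ := by field_simp
  rw [integral_mul_const] at this
  convert this using 1; ring

lemma Good.Fh_eq {N : ℝ} {f : ℝ → ℝ} (h : Good N f) {y : ℝ} (hy : 0 < y) (x : ℝ) :
    Fh f (x + y * Complex.I) =
      ((∫ t, f t * Pk y (x - t) : ℝ) : ℂ) + ((∫ t, f t * Qk y (x - t) : ℝ) : ℂ) * Complex.I := by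
  have h1 : Integrable fun t => f t * Pk y (x - t) := by
    have := (h.integrand (z := (x : ℂ) + y * Complex.I) (by simpa using hy)).re
    refine this.congr (Eventually.of_forall fun t => ?_)
    simp only [kernel_id hy]
    simp
  have h2 : Integrable fun t => f t * Qk y (x - t) := by
    have := (h.integrand (z := (x : ℂ) + y * Complex.I) (by simpa using hy)).im
    refine this.congr (Eventually.of_forall fun t => ?_)
    simp only [kernel_id hy]
    simp
  unfold Fh
  rw [← integral_complex_ofReal, ← integral_complex_ofReal, ← integral_mul_const, ← integral_add]
  · congr 1; ext t
    simp only [kernel_id hy]; push_cast; ring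
  · exact h1.ofReal
  · exact h2.ofReal.mul_const _

end BeurlingAux

namespace BeurlingAux

lemma Good.kerint {N : ℝ} {f : ℝ → ℝ} (h : Good N f) {k : ℝ → ℝ} (hk : Continuous k) {c : ℝ}
    (hc : ∀ s, |k s| ≤ c) (x : ℝ) : Integrable fun t => f t * k (x - t) := by
  refine Integrable.mul_bdd (c := c) h.integrable ?_ ?_
  · exact (hk.comp (by fun_prop)).aestronglyMeasurable
  · exact Eventually.of_forall fun t => hc _

lemma abs_Pk_le {y : ℝ} (hy : 0 < y) (s : ℝ) : |Pk y s| ≤ 1 / y := by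
  rw [abs_of_pos (Pk_pos hy s)]
  unfold Pk
  have hpi := Real.pi_gt_three
  rw [div_le_div_iff₀ (by positivity) hy]
  nlinarith [sq_nonneg s, sq_nonneg y]

lemma Good.re_pos {N : ℝ} {f : ℝ → ℝ} (h : Good N f) (hf : 0 < ∫ t, f t) {y : ℝ} (hy : 0 < y)
    (x : ℝ) : 0 < ∫ t, f t * Pk y (x - t) := by
  rw [integral_pos_iff_support_of_nonneg]
  · rw [integral_pos_iff_support_of_nonneg (fun t => h.nonneg t) h.integrable] at hf
    convert hf using 2
    ext t
    simp [(Pk_pos hy (x - t)).ne']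
  · intro t
    exact mul_nonneg (h.nonneg t) (Pk_pos hy _).le
  · exact h.kerint (continuous_Pk hy) (abs_Pk_le hy) x

lemma Good.Fh_re_pos {N : ℝ} {f : ℝ → ℝ} (h : Good N f) (hf : 0 < ∫ t, f t) {z : ℂ}
    (hz : 0 < z.im) : 0 < (Fh f z).re := by
  have := h.Fh_eq hz z.re
  rw [Complex.re_add_im] at this
  rw [this]
  simpa using h.re_pos hf hz z.re

lemma Good.contour {N : ℝ} {f : ℝ → ℝ} (h : Good N f) (hf : 0 < ∫ t, f t) {y p : ℝ} (hy : 0 < y)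
    (hp : 1 < p) :
    Tendsto (fun T : ℝ => ∫ x in (-T)..T, Fh f (x + y * Complex.I) ^ (p : ℂ)) atTop (𝓝 0) := by
  set M := 2 * ∫ t, f t with hM
  have hM0 : 0 < M := by positivity
  have hN := h.pos
  set G : ℂ → ℂ := fun z => Fh f z ^ (p : ℂ) with hG
  have hdiff : DifferentiableOn ℂ G {z | 0 < z.im} := by
    refine h.differentiableOn.cpow_const ?_
    intro z hz
    exact Or.inl (h.Fh_re_pos hf hz)
  have hbd : ∀ T : ℝ, 2 * N ≤ T → ∀ z : ℂ, T ≤ ‖z‖ → ‖G z‖ ≤ (M / T) ^ p := by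
    intro T hT z hz
    have hT0 : 0 < T := by linarith
    simp only [hG]
    rw [Complex.norm_cpow_real]
    refine Real.rpow_le_rpow (norm_nonneg _) ?_ (by linarith)
    refine (h.bound (by linarith)).trans ?_
    gcongr
  have hlim : Tendsto (fun T : ℝ => 4 * M ^ p * T ^ (-(p - 1))) atTop (𝓝 0) := by
    have := (tendsto_rpow_neg_atTop (by linarith : 0 < p - 1)).const_mul (4 * M ^ p)
    simpa using this
  refine squeeze_zero_norm' ?_ hlim
  filter_upwards [eventually_ge_atTop (2 * N)] with T hT
  have hT0 : 0 < T := by linarith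
  have hrect := Complex.integral_boundary_rect_eq_zero_of_differentiableOn G
    (⟨-T, y⟩ : ℂ) (⟨T, y + T⟩ : ℂ) (hdiff.mono ?_)
  · simp only at hrect
    have h2 : ‖∫ x : ℝ in (-T)..T, G (x + ((y + T : ℝ) : ℂ) * Complex.I)‖ ≤
        (M / T) ^ p * |T - -T| := by
      refine intervalIntegral.norm_integral_le_of_norm_le_const fun x _ => hbd T hT _ ?_
      have := Complex.abs_im_le_norm (x + ((y + T : ℝ) : ℂ) * Complex.I)
      rw [show ((x : ℂ) + ((y + T : ℝ) : ℂ) * Complex.I).im = y + T by simp] at this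
      rw [abs_of_pos (by linarith)] at this; linarith
    have h3 : ‖∫ x : ℝ in y..(y + T), G ((T : ℝ) + x * Complex.I)‖ ≤
        (M / T) ^ p * |y + T - y| := by
      refine intervalIntegral.norm_integral_le_of_norm_le_const fun x _ => hbd T hT _ ?_
      have := Complex.abs_re_le_norm ((T : ℂ) + x * Complex.I)
      rw [show ((T : ℂ) + x * Complex.I).re = T by simp] at this
      rwa [abs_of_pos hT0] at this
    have h4 : ‖∫ x : ℝ in y..(y + T), G (((-T : ℝ) : ℂ) + x * Complex.I)‖ ≤
        (M / T) ^ p * |y + T - y| := by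
      refine intervalIntegral.norm_integral_le_of_norm_le_const fun x _ => hbd T hT _ ?_
      have := Complex.abs_re_le_norm (((-T : ℝ) : ℂ) + x * Complex.I)
      rw [show (((-T : ℝ) : ℂ) + x * Complex.I).re = -T by simp] at this
      rwa [abs_neg, abs_of_pos hT0] at this
    rw [show |T - -T| = 2 * T by rw [abs_of_pos] <;> linarith] at h2
    rw [show |y + T - y| = T by rw [abs_of_pos] <;> linarith] at h3 h4
    set I1 := ∫ x : ℝ in (-T)..T, G (x + y * Complex.I)
    set I2 := ∫ x : ℝ in (-T)..T, G (x + ((y + T : ℝ) : ℂ) * Complex.I)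
    set I3 := ∫ x : ℝ in y..(y + T), G ((T : ℝ) + x * Complex.I)
    set I4 := ∫ x : ℝ in y..(y + T), G (((-T : ℝ) : ℂ) + x * Complex.I)
    have e : I1 = I2 - Complex.I * I3 + Complex.I * I4 := by
      simp only [smul_eq_mul] at hrect
      linear_combination hrect
    have : ‖I1‖ ≤ ‖I2‖ + ‖I3‖ + ‖I4‖ := by
      rw [e]
      refine (norm_add_le _ _).trans ?_
      have := norm_sub_le I2 (Complex.I * I3)
      simp only [norm_mul, Complex.norm_I, one_mul] at this ⊢
      linarith
    calc ‖I1‖ ≤ (M / T) ^ p * (4 * T) := by linarith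
      _ = _ := by
        rw [Real.div_rpow hM0.le hT0.le, neg_sub, Real.rpow_sub hT0, Real.rpow_one]
        field_simp
  · intro z hz
    have := hz.2
    simp only [mem_preimage] at this
    rw [uIcc_of_le (by linarith)] at this
    exact lt_of_lt_of_le hy this.1

lemma Good.poisson {N : ℝ} {f : ℝ → ℝ} (h : Good N f) {y p : ℝ} (hy : 0 < y) (hp : 1 < p) :
    ∫⁻ x, ENNReal.ofReal (∫ t, f t * Pk y (x - t)) ^ p ≤ ∫⁻ t, ‖f t‖ₑ ^ p := by
  have e : ∀ x, ENNReal.ofReal (∫ t, f t * Pk y (x - t)) =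
      ∫⁻ s, ENNReal.ofReal (Pk y s) * ‖f (x - s)‖ₑ := by
    intro x
    rw [ofReal_integral_eq_lintegral_ofReal (h.kerint (continuous_Pk hy) (abs_Pk_le hy) x)
      (Eventually.of_forall fun t => mul_nonneg (h.nonneg t) (Pk_pos hy _).le),
      ← lintegral_sub_left_eq_self _ x]
    congr 1; ext s
    rw [ENNReal.ofReal_mul (h.nonneg _), mul_comm, _root_.sub_sub_cancel,
      Real.enorm_of_nonneg (h.nonneg _)]
  simp only [e]
  have := minkowski (volume : Measure ℝ) (volume : Measure ℝ) hp
    (k := fun s => ENNReal.ofReal (Pk y s)) (F := fun x s => ‖f (x - s)‖ₑ)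
    (M := ∫⁻ t, ‖f t‖ₑ ^ p) (continuous_Pk hy).measurable.ennreal_ofReal ?_ ?_
  · simpa [lintegral_Pk hy] using this
  · exact (h.meas.comp (measurable_fst.sub measurable_snd)).enorm
  · intro s
    exact (lintegral_sub_right_eq_self (fun x => ‖f x‖ₑ ^ p) s).le

lemma riesz_nonneg {p : ℝ} (hp : 1 < p) (hp2 : p ≤ 2) :
    ∃ C : ℝ≥0∞, C ≠ ⊤ ∧ ∀ N f, Good N f → ∀ y, 0 < y →
      ∫⁻ x, ‖∫ t, f t * Qk y (x - t)‖ₑ ^ p ≤ C * ∫⁻ t, ‖f t‖ₑ ^ p := by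
  obtain ⟨A, B, hA, hB, hAB⟩ := arg_ineq hp hp2
  refine ⟨ENNReal.ofReal A, ENNReal.ofReal_ne_top, fun N f h y hy => ?_⟩
  have hp0 : 0 < p := by linarith
  rcases (integral_nonneg h.nonneg : 0 ≤ ∫ t, f t).eq_or_lt with h0 | hf
  · have hz : f =ᵐ[volume] 0 :=
      (integral_eq_zero_iff_of_nonneg h.nonneg h.integrable).1 h0.symm
    have : ∀ x, ∫ t, f t * Qk y (x - t) = 0 := by
      intro x
      rw [← integral_zero ℝ ℝ]
      refine integral_congr_ae ?_
      filter_upwards [hz] with t ht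
      simp [ht]
    simp [this, hp0]
  set u : ℝ → ℝ := fun x => ∫ t, f t * Pk y (x - t) with hu
  set v : ℝ → ℝ := fun x => ∫ t, f t * Qk y (x - t) with hv
  set G : ℝ → ℂ := fun x => Fh f (x + y * Complex.I) with hG
  have hGe : ∀ x, G x = (u x : ℂ) + (v x : ℂ) * Complex.I := fun x => h.Fh_eq hy x
  have hGc : Continuous G := by
    have : ContinuousOn (Fh f) {z | 0 < z.im} := h.differentiableOn.continuousOn
    refine this.comp_continuous (by fun_prop) ?_
    intro x; simpa using hy
  have hur : ∀ x, (G x).re = u x := by intro x; simp [hGe]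
  have hvr : ∀ x, (G x).im = v x := by intro x; simp [hGe]
  have huc : Continuous u := by
    have : u = fun x => (G x).re := by ext x; exact (hur x).symm
    rw [this]; fun_prop
  have hvc : Continuous v := by
    have : v = fun x => (G x).im := by ext x; exact (hvr x).symm
    rw [this]; fun_prop
  have hupos : ∀ x, 0 < u x := fun x => h.re_pos hf hy x
  have hGp : Continuous fun x => G x ^ (p : ℂ) := by
    refine hGc.cpow continuous_const fun x => Or.inl ?_
    rw [hur]; exact hupos x
  have hpt : ∀ x, |v x| ^ p ≤ A * u x ^ p - B * (G x ^ (p : ℂ)).re := by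
    intro x
    have := hAB (G x) (by rw [hur]; exact hupos x)
    rwa [hur, hvr] at this
  set X := ENNReal.ofReal A * ∫⁻ t, ‖f t‖ₑ ^ p with hX
  have hmain : ∀ T : ℝ, 0 ≤ T → ∫⁻ x in Ioc (-T) T, ‖v x‖ₑ ^ p ≤
      X + ENNReal.ofReal (B * ‖∫ x in (-T)..T, G x ^ (p : ℂ)‖) := by
    intro T hT
    have hle : -T ≤ T := by linarith
    have c1 : Continuous fun x => |v x| ^ p := hvc.abs.rpow_const fun x => Or.inr hp0.le
    have c2 : Continuous fun x => u x ^ p := huc.rpow_const fun x => Or.inr hp0.le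
    have c3 : Continuous fun x => (G x ^ (p : ℂ)).re := by fun_prop
    have c4 : IntervalIntegrable (fun x => A * u x ^ p) volume (-T) T :=
      (continuous_const.mul c2).intervalIntegrable _ _
    have c5 : IntervalIntegrable (fun x => B * (G x ^ (p : ℂ)).re) volume (-T) T :=
      (continuous_const.mul c3).intervalIntegrable _ _
    have e1 : ∫⁻ x in Ioc (-T) T, ‖v x‖ₑ ^ p = ENNReal.ofReal (∫ x in (-T)..T, |v x| ^ p) := by
      rw [intervalIntegral.integral_of_le hle, ofReal_integral_eq_lintegral_ofReal]
      · congr 1; ext x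
        rw [← ENNReal.ofReal_rpow_of_nonneg (abs_nonneg _) hp0.le, ← Real.enorm_eq_ofReal_abs]
      · exact (c1.integrableOn_Icc).mono_set Ioc_subset_Icc_self
      · exact Eventually.of_forall fun x => by positivity
    have e2 : ∫ x in (-T)..T, |v x| ^ p ≤
        A * (∫ x in (-T)..T, u x ^ p) + B * ‖∫ x in (-T)..T, G x ^ (p : ℂ)‖ := by
      have i1 : ∫ x in (-T)..T, |v x| ^ p ≤
          ∫ x in (-T)..T, (A * u x ^ p - B * (G x ^ (p : ℂ)).re) := by
        refine intervalIntegral.integral_mono_on hle (c1.intervalIntegrable _ _) ?_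
          fun x _ => hpt x
        exact ((continuous_const.mul c2).sub (continuous_const.mul c3)).intervalIntegrable _ _
      rw [intervalIntegral.integral_sub c4 c5, intervalIntegral.integral_const_mul,
        intervalIntegral.integral_const_mul] at i1
      have i2 : ∫ x in (-T)..T, (G x ^ (p : ℂ)).re = (∫ x in (-T)..T, G x ^ (p : ℂ)).re :=
        Complex.reCLM.intervalIntegral_comp_comm (hGp.intervalIntegrable _ _)
      have i3 := (abs_le.mp (Complex.abs_re_le_norm (∫ x in (-T)..T, G x ^ (p : ℂ)))).1
      rw [i2] at i1
      nlinarith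
    rw [e1]
    refine (ENNReal.ofReal_le_ofReal e2).trans ?_
    refine ENNReal.ofReal_add_le.trans ?_
    gcongr
    rw [hX, ENNReal.ofReal_mul hA.le]
    gcongr
    refine le_trans ?_ (h.poisson hy hp)
    rw [intervalIntegral.integral_of_le hle, ofReal_integral_eq_lintegral_ofReal]
    · refine (lintegral_mono fun x => ?_).trans (setLIntegral_le_lintegral _ _)
      rw [ENNReal.ofReal_rpow_of_nonneg (hupos x).le hp0.le]
    · exact (c2.integrableOn_Icc).mono_set Ioc_subset_Icc_self
    · exact Eventually.of_forall fun x => Real.rpow_nonneg (hupos x).le _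
  have hl1 : Tendsto (fun T : ℝ => ∫⁻ x in Ioc (-T) T, ‖v x‖ₑ ^ p) atTop
      (𝓝 (∫⁻ x, ‖v x‖ₑ ^ p)) :=
    (aecover_Ioc tendsto_neg_atTop_atBot tendsto_id).lintegral_tendsto_of_countably_generated
      (hvc.measurable.enorm.pow_const p).aemeasurable
  have hl2 : Tendsto (fun T : ℝ => X + ENNReal.ofReal (B * ‖∫ x in (-T)..T, G x ^ (p : ℂ)‖)) atTop
      (𝓝 (X + ENNReal.ofReal (B * ‖(0:ℂ)‖))) := by
    refine tendsto_const_nhds.add (ENNReal.tendsto_ofReal ?_)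
    exact ((h.contour hf hy hp).norm).const_mul B
  simp only [norm_zero, mul_zero, ENNReal.ofReal_zero, add_zero] at hl2
  exact le_of_tendsto_of_tendsto hl1 hl2 ((eventually_ge_atTop 0).mono hmain)

end BeurlingAux

namespace BeurlingAux

/-- the truncated Hilbert kernel -/
noncomputable def Kk (y Y s : ℝ) : ℝ := Qk y s - Qk Y s

lemma Kk_neg (y Y s : ℝ) : Kk y Y (-s) = - Kk y Y s := by
  unfold Kk Qk; rw [neg_sq]; ring

lemma continuous_Kk {y Y : ℝ} (hy : 0 < y) (hY : 0 < Y) : Continuous (Kk y Y) :=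
  (continuous_Qk hy).sub (continuous_Qk hY)

lemma abs_Kk_le {y Y : ℝ} (hy : 0 < y) (hY : 0 < Y) (s : ℝ) : |Kk y Y s| ≤ 1 / y + 1 / Y := by
  unfold Kk
  exact (abs_sub _ _).trans (add_le_add (abs_Qk_le hy s) (abs_Qk_le hY s))

lemma integrable_Kk {y Y : ℝ} (hy : 0 < y) (hY : 0 < Y) : Integrable (Kk y Y) := by
  have hpi := Real.pi_gt_three
  have e : Kk y Y = fun s => (1 + (y⁻¹ * s) ^ 2)⁻¹ *
      ((Y ^ 2 - y ^ 2) / y ^ 2 * Qk Y s) := by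
    ext s; unfold Kk Qk
    have h1 : s ^ 2 + y ^ 2 ≠ 0 := by positivity
    have h2 : s ^ 2 + Y ^ 2 ≠ 0 := by positivity
    have h3 : 1 + (y⁻¹ * s) ^ 2 ≠ 0 := by positivity
    have h4 : (1 + (y⁻¹ * s) ^ 2)⁻¹ = y ^ 2 / (s ^ 2 + y ^ 2) := by
      field_simp; ring
    rw [h4]
    field_simp
    ring
  rw [e]
  refine Integrable.mul_bdd (c := |(Y ^ 2 - y ^ 2) / y ^ 2| * (1 / Y)) ?_ ?_ ?_
  · exact integrable_inv_one_add_sq.comp_mul_left' (by positivity)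
  · exact (continuous_const.mul (continuous_Qk hY)).aestronglyMeasurable
  · refine Eventually.of_forall fun s => ?_
    rw [Real.norm_eq_abs, abs_mul]
    gcongr
    exact abs_Qk_le hY s

/-- convolution with a real kernel -/
noncomputable def conv (K : ℝ → ℝ) (f : ℝ → ℂ) (x : ℝ) : ℂ := ∫ s, (K s : ℂ) * f (x - s)

lemma conv_eq (K : ℝ → ℝ) (f : ℝ → ℂ) (x : ℝ) : conv K f x = ∫ t, (K (x - t) : ℂ) * f t := by
  unfold conv
  rw [← integral_sub_left_eq_self _ volume x]
  simp

lemma measurable_conv {K : ℝ → ℝ} {f : ℝ → ℂ} (hK : Measurable K) (hf : Measurable f) :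
    Measurable (conv K f) := by
  have : StronglyMeasurable (fun q : ℝ × ℝ => (K q.2 : ℂ) * f (q.1 - q.2)) :=
    Measurable.stronglyMeasurable (by fun_prop)
  exact this.integral_prod_right'.measurable

/-- bounded, compactly supported measurable data -/
structure GoodC (N : ℝ) (f : ℝ → ℂ) : Prop where
  pos : 0 < N
  meas : Measurable f
  le : ∀ t, ‖f t‖ ≤ N
  supp : ∀ t, N < |t| → f t = 0

lemma GoodC.good {N : ℝ} {f : ℝ → ℂ} (h : GoodC N f) {φ : ℂ → ℝ} (hφ : Measurable φ)
    (h0 : φ 0 = 0) (h1 : ∀ z, 0 ≤ φ z) (h2 : ∀ z, φ z ≤ ‖z‖) : Good N fun t => φ (f t) where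
  pos := h.pos
  meas := hφ.comp h.meas
  nonneg t := h1 _
  le t := (h2 _).trans (h.le t)
  supp t ht := by rw [h.supp t ht, h0]

lemma riesz_nonnegK {p : ℝ} (hp : 1 < p) (hp2 : p ≤ 2) :
    ∃ C : ℝ≥0∞, C ≠ ⊤ ∧ ∀ N f, Good N f → ∀ y Y, 0 < y → 0 < Y →
      ∫⁻ x, ‖∫ t, f t * Kk y Y (x - t)‖ₑ ^ p ≤ C * ∫⁻ t, ‖f t‖ₑ ^ p := by
  obtain ⟨C, hC, H⟩ := riesz_nonneg hp hp2
  refine ⟨2 ^ (p - 1) * (C + C), ?_, fun N f h y Y hy hY => ?_⟩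
  · finiteness
  have e : ∀ x, ∫ t, f t * Kk y Y (x - t) =
      (∫ t, f t * Qk y (x - t)) - ∫ t, f t * Qk Y (x - t) := by
    intro x
    rw [← integral_sub (h.kerint (continuous_Qk hy) (abs_Qk_le hy) x)
      (h.kerint (continuous_Qk hY) (abs_Qk_le hY) x)]
    simp only [Kk, mul_sub]
  have hm : Measurable fun x => ∫ t, f t * Qk y (x - t) := by
    have : StronglyMeasurable (fun q : ℝ × ℝ => f q.2 * Qk y (q.1 - q.2)) := by
      have := h.meas
      have := (continuous_Qk hy).measurable
      exact Measurable.stronglyMeasurable (by fun_prop)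
    exact this.integral_prod_right'.measurable
  calc ∫⁻ x, ‖∫ t, f t * Kk y Y (x - t)‖ₑ ^ p
      ≤ ∫⁻ x, 2 ^ (p - 1) * (‖∫ t, f t * Qk y (x - t)‖ₑ ^ p + ‖∫ t, f t * Qk Y (x - t)‖ₑ ^ p) := by
        refine lintegral_mono fun x => ?_
        refine le_trans ?_ (add_rpow_le' hp _ _)
        rw [e]
        gcongr
        exact enorm_sub_le
    _ = 2 ^ (p - 1) * ((∫⁻ x, ‖∫ t, f t * Qk y (x - t)‖ₑ ^ p) +
          ∫⁻ x, ‖∫ t, f t * Qk Y (x - t)‖ₑ ^ p) := by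
        rw [lintegral_const_mul' _ _ (by finiteness), lintegral_add_left (hm.enorm.pow_const p)]
    _ ≤ 2 ^ (p - 1) * (C * (∫⁻ t, ‖f t‖ₑ ^ p) + C * ∫⁻ t, ‖f t‖ₑ ^ p) := by
        gcongr
        · exact H N f h y hy
        · exact H N f h Y hY
    _ = _ := by ring

lemma riesz_goodC {p : ℝ} (hp : 1 < p) (hp2 : p ≤ 2) :
    ∃ C : ℝ≥0∞, C ≠ ⊤ ∧ ∀ N f, GoodC N f → ∀ y Y, 0 < y → 0 < Y →
      ∫⁻ x, ‖conv (Kk y Y) f x‖ₑ ^ p ≤ C * ∫⁻ t, ‖f t‖ₑ ^ p := by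
  obtain ⟨C, hC, H⟩ := riesz_nonnegK hp hp2
  have hp0 : 0 < p := by linarith
  refine ⟨2 ^ (p - 1) * (2 ^ (p - 1) * (C + C) + 2 ^ (p - 1) * (C + C)), ?_,
    fun N f h y Y hy hY => ?_⟩
  · finiteness
  set T : (ℝ → ℝ) → ℝ → ℝ := fun g x => ∫ t, g t * Kk y Y (x - t) with hT
  set f1 : ℝ → ℝ := fun t => max (f t).re 0 with hf1
  set f2 : ℝ → ℝ := fun t => max (-(f t).re) 0 with hf2
  set f3 : ℝ → ℝ := fun t => max (f t).im 0 with hf3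
  set f4 : ℝ → ℝ := fun t => max (-(f t).im) 0 with hf4
  have g1 : Good N f1 := h.good (φ := fun z => max z.re 0) (by fun_prop) (by simp)
    (fun z => le_max_right _ _)
    (fun z => max_le ((le_abs_self _).trans (Complex.abs_re_le_norm z)) (norm_nonneg _))
  have g2 : Good N f2 := h.good (φ := fun z => max (-z.re) 0) (by fun_prop) (by simp)
    (fun z => le_max_right _ _)
    (fun z => max_le ((neg_le_abs _).trans (Complex.abs_re_le_norm z)) (norm_nonneg _))
  have g3 : Good N f3 := h.good (φ := fun z => max z.im 0) (by fun_prop) (by simp)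
    (fun z => le_max_right _ _)
    (fun z => max_le ((le_abs_self _).trans (Complex.abs_im_le_norm z)) (norm_nonneg _))
  have g4 : Good N f4 := h.good (φ := fun z => max (-z.im) 0) (by fun_prop) (by simp)
    (fun z => le_max_right _ _)
    (fun z => max_le ((neg_le_abs _).trans (Complex.abs_im_le_norm z)) (norm_nonneg _))
  have hK := continuous_Kk hy hY
  have hKb := abs_Kk_le hy hY
  have hTm : ∀ g : ℝ → ℝ, Measurable g → Measurable (T g) := by
    intro g hg
    have : StronglyMeasurable (fun q : ℝ × ℝ => g q.2 * Kk y Y (q.1 - q.2)) := by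
      have := hK.measurable
      exact Measurable.stronglyMeasurable (by fun_prop)
    exact this.integral_prod_right'.measurable
  have hb : ∀ g : ℝ → ℝ, Good N g → (∀ t, ‖g t‖ₑ ≤ ‖f t‖ₑ) →
      ∫⁻ x, ‖T g x‖ₑ ^ p ≤ C * ∫⁻ t, ‖f t‖ₑ ^ p := by
    intro g hg hle
    refine (H N g hg y Y hy hY).trans ?_
    gcongr with t
    exact hle t
  have hle : ∀ g : ℝ → ℝ, (∀ t, 0 ≤ g t) → (∀ t, g t ≤ ‖f t‖) → ∀ t, ‖g t‖ₑ ≤ ‖f t‖ₑ := by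
    intro g h0 h1 t
    rw [Real.enorm_of_nonneg (h0 t), ← ofReal_norm]
    exact ENNReal.ofReal_le_ofReal (h1 t)
  have b1 := hb f1 g1 (hle _ g1.nonneg fun t =>
    max_le ((le_abs_self _).trans (Complex.abs_re_le_norm _)) (norm_nonneg _))
  have b2 := hb f2 g2 (hle _ g2.nonneg fun t =>
    max_le ((neg_le_abs _).trans (Complex.abs_re_le_norm _)) (norm_nonneg _))
  have b3 := hb f3 g3 (hle _ g3.nonneg fun t =>
    max_le ((le_abs_self _).trans (Complex.abs_im_le_norm _)) (norm_nonneg _))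
  have b4 := hb f4 g4 (hle _ g4.nonneg fun t =>
    max_le ((neg_le_abs _).trans (Complex.abs_im_le_norm _)) (norm_nonneg _))
  have hdec : ∀ x, conv (Kk y Y) f x =
      ((T f1 x : ℂ) - T f2 x) + ((T f3 x : ℂ) - T f4 x) * Complex.I := by
    intro x
    rw [conv_eq]
    simp only [hT]
    rw [← integral_complex_ofReal, ← integral_complex_ofReal, ← integral_complex_ofReal,
      ← integral_complex_ofReal, ← integral_sub (g1.kerint hK hKb x).ofReal
      (g2.kerint hK hKb x).ofReal, ← integral_sub (g3.kerint hK hKb x).ofReal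
      (g4.kerint hK hKb x).ofReal, ← integral_mul_const, ← integral_add]
    · congr 1; ext t
      have hmx : ∀ a : ℝ, max a 0 - max (-a) 0 = a := by
        intro a; rcases le_total a 0 with h | h
        · rw [max_eq_right h, max_eq_left (by linarith)]; ring
        · rw [max_eq_left h, max_eq_right (by linarith)]; ring
      have e1 : ((f1 t : ℂ) - f2 t) = ((f t).re : ℂ) := by exact_mod_cast hmx _
      have e2 : ((f3 t : ℂ) - f4 t) = ((f t).im : ℂ) := by exact_mod_cast hmx _
      have e3 := Complex.re_add_im (f t)
      rw [← e1, ← e2] at e3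
      push_cast
      linear_combination (-(Kk y Y (x - t)) : ℂ) * e3
    · exact (g1.kerint hK hKb x).ofReal.sub (g2.kerint hK hKb x).ofReal
    · exact ((g3.kerint hK hKb x).ofReal.sub (g4.kerint hK hKb x).ofReal).mul_const _
  have hpt : ∀ x, ‖conv (Kk y Y) f x‖ₑ ^ p ≤ 2 ^ (p - 1) *
      (2 ^ (p - 1) * (‖T f1 x‖ₑ ^ p + ‖T f2 x‖ₑ ^ p) +
        2 ^ (p - 1) * (‖T f3 x‖ₑ ^ p + ‖T f4 x‖ₑ ^ p)) := by
    intro x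
    have s1 : ‖conv (Kk y Y) f x‖ₑ ≤ (‖T f1 x‖ₑ + ‖T f2 x‖ₑ) + (‖T f3 x‖ₑ + ‖T f4 x‖ₑ) := by
      rw [hdec]
      refine (enorm_add_le _ _).trans ?_
      rw [enorm_mul]
      have hI : ‖Complex.I‖ₑ = 1 := by simp [enorm_eq_nnnorm]
      have hr : ∀ a : ℝ, ‖(a : ℂ)‖ₑ = ‖a‖ₑ := by intro a; simp [enorm_eq_nnnorm]
      rw [hI, mul_one, ← hr, ← hr, ← hr, ← hr]
      gcongr <;> exact enorm_sub_le
    refine (ENNReal.rpow_le_rpow s1 hp0.le).trans ?_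
    refine (add_rpow_le' hp _ _).trans ?_
    gcongr <;> exact add_rpow_le' hp _ _
  have m1 := (hTm f1 g1.meas).enorm.pow_const p
  have m2 := (hTm f2 g2.meas).enorm.pow_const p
  have m3 := (hTm f3 g3.meas).enorm.pow_const p
  have m4 := (hTm f4 g4.meas).enorm.pow_const p
  refine (lintegral_mono hpt).trans ?_
  rw [lintegral_const_mul' _ _ (by finiteness), lintegral_add_left (by fun_prop),
    lintegral_const_mul' _ _ (by finiteness), lintegral_const_mul' _ _ (by finiteness),
    lintegral_add_left (by fun_prop), lintegral_add_left (by fun_prop)]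
  set Z := ∫⁻ t, ‖f t‖ₑ ^ p
  calc _ ≤ 2 ^ (p - 1) * (2 ^ (p - 1) * (C * Z + C * Z) + 2 ^ (p - 1) * (C * Z + C * Z)) := by
        gcongr
    _ = _ := by ring

lemma extend_goodC {p : ℝ} (hp0 : 0 < p) {K : ℝ → ℝ} (hK : Measurable K) {C : ℝ≥0∞}
    (H : ∀ N f, GoodC N f → ∫⁻ x, ‖conv K f x‖ₑ ^ p ≤ C * ∫⁻ t, ‖f t‖ₑ ^ p)
    {f : ℝ → ℂ} (hf : Measurable f) :
    ∫⁻ x, ‖conv K f x‖ₑ ^ p ≤ C * ∫⁻ t, ‖f t‖ₑ ^ p := by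
  classical
  set S : ℕ → Set ℝ := fun n => {t | |t| ≤ n + 1 ∧ ‖f t‖ ≤ n + 1} with hS
  have hSm : ∀ n, MeasurableSet (S n) := fun n =>
    (measurableSet_le continuous_abs.measurable measurable_const).inter
      (measurableSet_le hf.norm measurable_const)
  set g : ℕ → ℝ → ℂ := fun n => (S n).indicator f with hg
  have hgood : ∀ n : ℕ, GoodC (n + 1) (g n) := by
    intro n
    refine ⟨by positivity, hf.indicator (hSm n), fun t => ?_, fun t ht => ?_⟩
    · by_cases h : t ∈ S n
      · simp only [hg, indicator_of_mem h]; exact h.2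
      · simp only [hg, indicator_of_notMem h, norm_zero]; positivity
    · have h : t ∉ S n := fun h => not_lt.mpr h.1 ht
      simp only [hg, indicator_of_notMem h]
  have hgle : ∀ n t, ‖g n t‖ ≤ ‖f t‖ := fun n t => norm_indicator_le_norm_self _ _
  have hglim : ∀ t, ∀ᶠ n in atTop, g n t = f t := by
    intro t
    obtain ⟨m, hm⟩ := exists_nat_ge (max |t| ‖f t‖)
    filter_upwards [eventually_ge_atTop m] with n hn
    have hn' : (m : ℝ) ≤ n := by exact_mod_cast hn
    have h1 := le_max_left |t| ‖f t‖
    have h2 := le_max_right |t| ‖f t‖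
    have : t ∈ S n := ⟨by linarith, by linarith⟩
    simp only [hg, indicator_of_mem this]
  set E : Set ℝ := {x | Integrable fun s => (K s : ℂ) * f (x - s)} with hE
  have hjoint : StronglyMeasurable (fun q : ℝ × ℝ => (K q.2 : ℂ) * f (q.1 - q.2)) :=
    Measurable.stronglyMeasurable (by fun_prop)
  have hEm : MeasurableSet E := measurableSet_integrable hjoint
  refine fatou_enorm volume hp0 (F := fun n => E.indicator (conv K (g n)))
    (fun n => (measurable_conv hK (hgood n).meas).indicator hEm)
    (Eventually.of_forall fun x => ?_) fun n => ?_
  · by_cases hx : x ∈ E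
    · simp only [indicator_of_mem hx]
      have hx' : Integrable fun s => (K s : ℂ) * f (x - s) := hx
      unfold conv
      refine tendsto_integral_of_dominated_convergence (fun s => ‖(K s : ℂ) * f (x - s)‖) ?_
        hx'.norm ?_ ?_
      · intro n
        have := (hgood n).meas
        exact Measurable.aestronglyMeasurable (by fun_prop)
      · intro n
        refine Eventually.of_forall fun s => ?_
        rw [norm_mul, norm_mul]
        gcongr
        exact hgle n _
      · refine Eventually.of_forall fun s => ?_
        refine tendsto_const_nhds.congr' ?_
        filter_upwards [hglim (x - s)] with n hn
        rw [hn]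
    · simp only [indicator_of_notMem hx]
      have : conv K f x = 0 := integral_undef hx
      rw [this]; exact tendsto_const_nhds
  · calc ∫⁻ x, ‖E.indicator (conv K (g n)) x‖ₑ ^ p ≤ ∫⁻ x, ‖conv K (g n) x‖ₑ ^ p := by
          gcongr with x
          exact enorm_indicator_le_enorm_self _ _
      _ ≤ C * ∫⁻ t, ‖g n t‖ₑ ^ p := H _ _ (hgood n)
      _ ≤ C * ∫⁻ t, ‖f t‖ₑ ^ p := by
          gcongr with t
          exact enorm_le_iff_norm_le.mpr (hgle n t)

end BeurlingAux

namespace BeurlingAux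

lemma GoodC.integrable {N : ℝ} {f : ℝ → ℂ} (h : GoodC N f) : Integrable f := by
  have : Integrable (indicator (Icc (-N) N) (fun _ => N)) :=
    (integrable_indicator_iff measurableSet_Icc).2 (integrableOn_const (by simp))
  refine this.mono' h.meas.aestronglyMeasurable (Eventually.of_forall fun t => ?_)
  by_cases ht : t ∈ Icc (-N) N
  · rw [indicator_of_mem ht]; exact h.le t
  · rw [indicator_of_notMem ht, h.supp t, norm_zero]
    by_contra hc
    exact ht (abs_le.mp (not_lt.mp hc))

lemma GoodC.lintegral_lt_top {N : ℝ} {f : ℝ → ℂ} (h : GoodC N f) {p : ℝ} (hp : 1 < p) :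
    ∫⁻ t, ‖f t‖ₑ ^ p ≠ ⊤ := by
  have hb : ∀ t, ‖f t‖ₑ ^ p ≤ ENNReal.ofReal N ^ (p - 1) * ‖f t‖ₑ := by
    intro t
    have e : ‖f t‖ₑ ^ p = ‖f t‖ₑ ^ (p - 1) * ‖f t‖ₑ := by
      nth_rewrite 3 [← ENNReal.rpow_one ‖f t‖ₑ]
      rw [← ENNReal.rpow_add_of_nonneg _ _ (by linarith) (by norm_num)]
      congr 1; ring
    rw [e]
    gcongr
    rw [← ofReal_norm]
    exact ENNReal.ofReal_le_ofReal (h.le t)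
  refine ne_top_of_le_ne_top ?_ (lintegral_mono hb)
  rw [lintegral_const_mul' _ _ (by finiteness [h.pos])]
  have := h.integrable.2
  exact ENNReal.mul_ne_top (ENNReal.rpow_ne_top_of_nonneg (by linarith) ENNReal.ofReal_ne_top)
    this.ne

lemma conv_young {p : ℝ} (hp : 1 < p) {K : ℝ → ℝ} (hK : Measurable K) {f : ℝ → ℂ}
    (hf : Measurable f) :
    ∫⁻ x, ‖conv K f x‖ₑ ^ p ≤ (∫⁻ s, ‖K s‖ₑ) ^ p * ∫⁻ t, ‖f t‖ₑ ^ p := by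
  calc ∫⁻ x, ‖conv K f x‖ₑ ^ p ≤ ∫⁻ x, (∫⁻ s, ‖K s‖ₑ * ‖f (x - s)‖ₑ) ^ p := by
        gcongr with x
        refine (enorm_integral_le_lintegral_enorm _).trans (lintegral_mono fun s => ?_)
        rw [enorm_mul]
        simp [enorm_eq_nnnorm]
    _ ≤ _ := by
        refine minkowski _ _ hp hK.enorm ?_ ?_
        · exact (hf.comp (measurable_fst.sub measurable_snd)).enorm
        · intro s
          exact (lintegral_sub_right_eq_self (fun x => ‖f x‖ₑ ^ p) s).le

lemma conv_dual {K : ℝ → ℝ} (hKm : Measurable K) (hK : Integrable K) (hodd : ∀ s, K (-s) = - K s)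
    {f g : ℝ → ℂ} (hf : Integrable f) (hg : Measurable g) {c : ℝ} (hgc : ∀ x, ‖g x‖ ≤ c) :
    ∫ x, conv K f x * g x = - ∫ t, f t * conv K g t := by
  simp only [conv_eq, ← integral_mul_const, ← integral_const_mul]
  rw [integral_integral_swap, ← integral_neg]
  · congr 1; ext t
    rw [← integral_neg]
    congr 1; ext x
    rw [← neg_sub t x, hodd]
    push_cast; ring
  · have h1 := Integrable.convolution_integrand (ContinuousLinearMap.mul ℝ ℂ) (μ := volume)
      (ν := volume) hf (hK.ofReal (𝕜 := ℂ))
    refine Integrable.mul_bdd (c := c) ?_ ?_ ?_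
    · refine h1.congr (Eventually.of_forall fun q => ?_)
      simp [mul_comm]
    · exact (hg.comp measurable_fst).aestronglyMeasurable
    · exact Eventually.of_forall fun q => hgc _

lemma dual_goodC {p q : ℝ} (hpq : p.HolderConjugate q) (hp2 : 2 ≤ p)
    {K : ℝ → ℝ} (hKm : Measurable K) (hK : Integrable K) (hodd : ∀ s, K (-s) = - K s)
    {c : ℝ} (hKc : ∀ s, |K s| ≤ c) {C : ℝ≥0∞}
    (H : ∀ g : ℝ → ℂ, Measurable g → ∫⁻ x, ‖conv K g x‖ₑ ^ q ≤ C * ∫⁻ t, ‖g t‖ₑ ^ q)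
    {N : ℝ} {f : ℝ → ℂ} (h : GoodC N f) :
    ∫⁻ x, ‖conv K f x‖ₑ ^ p ≤ C ^ (p / q) * ∫⁻ t, ‖f t‖ₑ ^ p := by
  have hp1 : 1 < p := hpq.lt
  have hp0 : 0 < p := hpq.pos
  have hq0 : 0 < q := hpq.symm.pos
  set G := conv K f with hG
  have hGm : Measurable G := measurable_conv hKm h.meas
  set Y := ∫⁻ x, ‖G x‖ₑ ^ p with hY
  have hYtop : Y ≠ ⊤ := by
    refine ne_top_of_le_ne_top ?_ (conv_young hp1 hKm h.meas)
    refine ENNReal.mul_ne_top (ENNReal.rpow_ne_top_of_nonneg hp0.le hK.2.ne)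
      (h.lintegral_lt_top hp1)
  have hGb : ∀ x, ‖G x‖ ≤ c * ∫ t, ‖f t‖ := by
    intro x
    rw [hG, conv_eq, ← integral_const_mul]
    refine norm_integral_le_of_norm_le (h.integrable.norm.const_mul c)
      (Eventually.of_forall fun t => ?_)
    rw [norm_mul, Complex.norm_real]
    gcongr
    exact hKc _
  set g : ℝ → ℂ := fun x => (starRingEnd ℂ) (G x) * ((‖G x‖ ^ (p - 2) : ℝ) : ℂ) with hg
  have hgm : Measurable g := by
    have : Measurable fun x => (starRingEnd ℂ) (G x) :=
      Complex.continuous_conj.measurable.comp hGm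
    fun_prop
  have hgn : ∀ x, ‖g x‖ = ‖G x‖ ^ (p - 1) := by
    intro x
    simp only [hg, norm_mul, RCLike.norm_conj, Complex.norm_real]
    rw [Real.norm_of_nonneg (by positivity)]
    by_cases h0 : ‖G x‖ = 0
    · rw [h0, zero_mul, Real.zero_rpow (by linarith)]
    · have : 0 < ‖G x‖ := lt_of_le_of_ne (norm_nonneg _) (Ne.symm h0)
      nth_rewrite 1 [← Real.rpow_one ‖G x‖]
      rw [← Real.rpow_add this]; congr 1; ring
  have hGg : ∀ x, G x * g x = ((‖G x‖ ^ p : ℝ) : ℂ) := by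
    intro x
    simp only [hg]
    rw [← mul_assoc, Complex.mul_conj, ← Complex.ofReal_mul]
    congr 1
    rw [Complex.normSq_eq_norm_sq]
    by_cases h0 : ‖G x‖ = 0
    · rw [h0, Real.zero_rpow hp0.ne']; simp
    · have : 0 < ‖G x‖ := lt_of_le_of_ne (norm_nonneg _) (Ne.symm h0)
      rw [← Real.rpow_natCast, ← Real.rpow_add this]; congr 1; push_cast; ring
  have hgb : ∀ x, ‖g x‖ ≤ (c * ∫ t, ‖f t‖) ^ (p - 1) := by
    intro x
    rw [hgn]
    exact Real.rpow_le_rpow (norm_nonneg _) (hGb x) (by linarith)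
  have hdual := conv_dual hKm hK hodd h.integrable hgm hgb
  have henorm : ∀ x, ENNReal.ofReal (‖G x‖ ^ p) = ‖G x‖ₑ ^ p := by
    intro x
    rw [← ENNReal.ofReal_rpow_of_nonneg (norm_nonneg _) hp0.le, ofReal_norm]
  have hYe : Y = ‖∫ x, G x * g x‖ₑ := by
    simp only [hGg]
    rw [integral_complex_ofReal]
    have hnn : 0 ≤ ∫ x, ‖G x‖ ^ p := integral_nonneg fun x => by positivity
    rw [show ‖((∫ x, ‖G x‖ ^ p : ℝ) : ℂ)‖ₑ = ENNReal.ofReal (∫ x, ‖G x‖ ^ p) by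
      rw [← ofReal_norm, Complex.norm_real, Real.norm_of_nonneg hnn]]
    rw [ofReal_integral_eq_lintegral_ofReal]
    · simp only [henorm]; rfl
    · refine ⟨(hGm.norm.pow_const p).aestronglyMeasurable, ?_⟩
      have : ∫⁻ x, ‖‖G x‖ ^ p‖ₑ = Y := by
        rw [hY]; congr 1; ext x
        rw [Real.enorm_of_nonneg (by positivity), henorm]
      rw [HasFiniteIntegral, this]
      exact hYtop.lt_top
    · exact Eventually.of_forall fun x => by positivity
  have hgq : ∫⁻ x, ‖g x‖ₑ ^ q = Y := by
    rw [hY]; congr 1; ext x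
    rw [← ofReal_norm, hgn, ← ENNReal.ofReal_rpow_of_nonneg (norm_nonneg _) (by linarith),
      ofReal_norm, ← ENNReal.rpow_mul]
    congr 1
    have := hpq.sub_one_mul_conj
    linarith
  have hmain : Y ≤ (∫⁻ t, ‖f t‖ₑ ^ p) ^ (1 / p) * (C * Y) ^ (1 / q) := by
    calc Y = ‖∫ t, f t * conv K g t‖ₑ := by rw [hYe, hdual, enorm_neg]
      _ ≤ ∫⁻ t, ‖f t‖ₑ * ‖conv K g t‖ₑ := by
          refine (enorm_integral_le_lintegral_enorm _).trans (lintegral_mono fun s => ?_)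
          rw [enorm_mul]
      _ ≤ (∫⁻ t, ‖f t‖ₑ ^ p) ^ (1 / p) * (∫⁻ t, ‖conv K g t‖ₑ ^ q) ^ (1 / q) :=
          ENNReal.lintegral_mul_le_Lp_mul_Lq volume hpq h.meas.enorm.aemeasurable
            (measurable_conv hKm hgm).enorm.aemeasurable
      _ ≤ _ := by
          gcongr
          exact (H g hgm).trans_eq (by rw [hgq])
  by_cases hY0 : Y = 0
  · rw [hY0]; exact zero_le
  have hs : 1 / p + 1 / q = 1 := by have := hpq.inv_add_inv_eq_one; simpa using this
  have hYp : Y ^ (1 / p) ≤ (∫⁻ t, ‖f t‖ₑ ^ p) ^ (1 / p) * C ^ (1 / q) := by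
    rw [ENNReal.mul_rpow_of_nonneg _ _ (by positivity), ← mul_assoc] at hmain
    have e : Y = Y ^ (1 / p) * Y ^ (1 / q) := by
      rw [← ENNReal.rpow_add _ _ hY0 hYtop, hs, ENNReal.rpow_one]
    nth_rewrite 1 [e] at hmain
    refine (ENNReal.mul_le_mul_iff_left ?_ ?_).1 hmain
    · exact (ENNReal.rpow_pos (pos_iff_ne_zero.2 hY0) hYtop).ne'
    · exact ENNReal.rpow_ne_top_of_nonneg (by positivity) hYtop
  have := ENNReal.rpow_le_rpow hYp hp0.le
  rw [← ENNReal.rpow_mul, one_div_mul_cancel hp0.ne', ENNReal.rpow_one,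
    ENNReal.mul_rpow_of_nonneg _ _ hp0.le, ← ENNReal.rpow_mul, one_div_mul_cancel hp0.ne',
    ENNReal.rpow_one, ← ENNReal.rpow_mul, mul_comm] at this
  convert this using 3
  ring

/-- uniform `L^p` bound for the truncated Hilbert transforms. -/
theorem hilbert_bound {p : ℝ} (hp : 1 < p) :
    ∃ C : ℝ≥0∞, C ≠ ⊤ ∧ ∀ y Y, 0 < y → 0 < Y → ∀ f : ℝ → ℂ, Measurable f →
      ∫⁻ x, ‖conv (Kk y Y) f x‖ₑ ^ p ≤ C * ∫⁻ t, ‖f t‖ₑ ^ p := by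
  have small : ∀ p : ℝ, 1 < p → p ≤ 2 →
      ∃ C : ℝ≥0∞, C ≠ ⊤ ∧ ∀ y Y, 0 < y → 0 < Y → ∀ f : ℝ → ℂ, Measurable f →
        ∫⁻ x, ‖conv (Kk y Y) f x‖ₑ ^ p ≤ C * ∫⁻ t, ‖f t‖ₑ ^ p := by
    intro p hp hp2
    obtain ⟨C, hC, H⟩ := riesz_goodC hp hp2
    exact ⟨C, hC, fun y Y hy hY f hf => extend_goodC (by linarith)
      (continuous_Kk hy hY).measurable (fun N g hg => H N g hg y Y hy hY) hf⟩
  by_cases hp2 : p ≤ 2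
  · exact small p hp hp2
  push Not at hp2
  have hpq := Real.HolderConjugate.conjExponent hp
  set q := Real.conjExponent p with hq
  have hq2 : q ≤ 2 := by
    have : q = p / (p - 1) := rfl
    rw [this, div_le_iff₀ (by linarith)]; linarith
  obtain ⟨C, hC, H⟩ := small q hpq.symm.lt hq2
  refine ⟨C ^ (p / q), ENNReal.rpow_ne_top_of_nonneg (by
    have := hpq.symm.pos; positivity) hC, fun y Y hy hY f hf => ?_⟩
  refine extend_goodC (by linarith) (continuous_Kk hy hY).measurable (fun N g hg => ?_) hf
  exact dual_goodC hpq hp2.le (continuous_Kk hy hY).measurable (integrable_Kk hy hY) (Kk_neg y Y)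
    (abs_Kk_le hy hY) (H y Y hy hY) hg

end BeurlingAux

namespace BeurlingAux

/-- directional convolution -/
noncomputable def Hd (K : ℝ → ℝ) (e : ℂ) (g : ℂ → ℂ) (x : ℂ) : ℂ := ∫ s : ℝ, (K s : ℂ) * g (x - s * e)

lemma lintegral_complex {φ : ℂ → ℝ≥0∞} (hφ : Measurable φ) :
    ∫⁻ x, φ x = ∫⁻ b : ℝ, ∫⁻ a : ℝ, φ (a + b * Complex.I) := by
  rw [← (Complex.volume_preserving_equiv_real_prod.symm).lintegral_comp hφ]
  rw [Measure.volume_eq_prod, lintegral_prod_symm _ (by fun_prop)]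
  congr 1; ext b; congr 1; ext a
  congr 1
  apply Complex.ext <;> simp

lemma lintegral_rot {φ : ℂ → ℝ≥0∞} (e : Circle) :
    ∫⁻ x, φ (e * x) = ∫⁻ x, φ x := by
  have h := (rotation e).measurePreserving
  have := h.lintegral_comp_emb (rotation e).toHomeomorph.measurableEmbedding φ
  simpa using this

lemma measurable_Hd {K : ℝ → ℝ} (hK : Measurable K) {g : ℂ → ℂ} (hg : Measurable g) :
    Measurable (fun q : ℂ × ℂ => Hd K q.1 g q.2) := by
  have : StronglyMeasurable (fun q : (ℂ × ℂ) × ℝ => (K q.2 : ℂ) * g (q.1.2 - q.2 * q.1.1)) :=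
    Measurable.stronglyMeasurable (by fun_prop)
  exact this.integral_prod_right'.measurable

lemma Hd_bound {p : ℝ} {K : ℝ → ℝ} (hK : Measurable K) {C : ℝ≥0∞}
    (H : ∀ f : ℝ → ℂ, Measurable f → ∫⁻ x, ‖conv K f x‖ₑ ^ p ≤ C * ∫⁻ t, ‖f t‖ₑ ^ p)
    (e : Circle) {g : ℂ → ℂ} (hg : Measurable g) :
    ∫⁻ x, ‖Hd K e g x‖ₑ ^ p ≤ C * ∫⁻ x, ‖g x‖ₑ ^ p := by
  have m1 : Measurable fun x => ‖Hd K e g x‖ₑ ^ p :=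
    ((measurable_Hd hK hg).comp (measurable_const.prodMk measurable_id)).enorm.pow_const p
  have m2 : Measurable fun x : ℂ => ‖g (e * x)‖ₑ ^ p := by fun_prop
  rw [← lintegral_rot e, ← lintegral_rot (φ := fun x => ‖g x‖ₑ ^ p) e]
  rw [lintegral_complex (φ := fun x => ‖Hd K e g (e * x)‖ₑ ^ p) (m1.comp (measurable_const_mul (e : ℂ))), lintegral_complex m2]
  rw [← lintegral_const_mul]
  · refine lintegral_mono fun b => ?_
    have := H (fun a : ℝ => g (e * (a + b * Complex.I))) (by fun_prop)
    refine le_trans (le_of_eq ?_) this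
    congr 1; ext a
    unfold Hd conv
    congr 3; ext s
    congr 2
    push_cast; ring
  · exact Measurable.lintegral_prod_right
      (f := fun (b a : ℝ) => ‖g (e * (a + b * Complex.I))‖ₑ ^ p) (by fun_prop)

/-- averaged directional convolution: a truncated complex Riesz transform -/
noncomputable def Rt (K : ℝ → ℝ) (g : ℂ → ℂ) (x : ℂ) : ℂ :=
  ∫ θ : ℝ in Ioc 0 (2 * Real.pi),
    Complex.exp (-(θ : ℂ) * Complex.I) * Hd K (Complex.exp (θ * Complex.I)) g x

lemma measurable_Rt {K : ℝ → ℝ} (hK : Measurable K) {g : ℂ → ℂ} (hg : Measurable g) :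
    Measurable (Rt K g) := by
  have h := measurable_Hd hK hg
  have : StronglyMeasurable (fun q : ℂ × ℝ => Complex.exp (-(q.2 : ℂ) * Complex.I) *
      Hd K (Complex.exp (q.2 * Complex.I)) g q.1) := by
    refine Measurable.stronglyMeasurable (Measurable.mul (by fun_prop) ?_)
    exact h.comp (f := fun q : ℂ × ℝ => (Complex.exp (q.2 * Complex.I), q.1)) (by fun_prop)
  exact this.integral_prod_right'.measurable

lemma Rt_bound {p : ℝ} (hp : 1 < p) {K : ℝ → ℝ} (hK : Measurable K) {C : ℝ≥0∞}
    (H : ∀ f : ℝ → ℂ, Measurable f → ∫⁻ x, ‖conv K f x‖ₑ ^ p ≤ C * ∫⁻ t, ‖f t‖ₑ ^ p)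
    {g : ℂ → ℂ} (hg : Measurable g) :
    ∫⁻ x, ‖Rt K g x‖ₑ ^ p ≤
      (ENNReal.ofReal (2 * Real.pi)) ^ p * (C * ∫⁻ x, ‖g x‖ₑ ^ p) := by
  have h := measurable_Hd hK hg
  calc ∫⁻ x, ‖Rt K g x‖ₑ ^ p
      ≤ ∫⁻ x, (∫⁻ θ : ℝ in Ioc 0 (2 * Real.pi),
          1 * ‖Hd K (Complex.exp (θ * Complex.I)) g x‖ₑ) ^ p := by
        have : 0 ≤ p := by linarith
        gcongr with x
        refine (enorm_integral_le_lintegral_enorm _).trans (lintegral_mono fun θ => ?_)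
        rw [enorm_mul]
        gcongr
        rw [← ofReal_norm, ← Complex.ofReal_neg, Complex.norm_exp_ofReal_mul_I]
        simp
    _ ≤ (∫⁻ θ : ℝ in Ioc 0 (2 * Real.pi), 1) ^ p * (C * ∫⁻ x, ‖g x‖ₑ ^ p) := by
        refine minkowski _ _ hp measurable_const ?_ ?_
        · refine Measurable.enorm ?_
          exact h.comp (f := fun q : ℂ × ℝ => (Complex.exp (q.2 * Complex.I), q.1)) (by fun_prop)
        · intro θ
          have := Hd_bound hK H (Circle.exp θ) hg
          simpa [Circle.coe_exp] using this
    _ = _ := by simp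

/-- the character `e(t) = exp (2 π i t)` -/
noncomputable def ch (t : ℝ) : ℂ := Complex.exp ((2 * Real.pi * t : ℝ) * Complex.I)

lemma norm_ch (t : ℝ) : ‖ch t‖ = 1 := Complex.norm_exp_ofReal_mul_I _

lemma ch_add (s t : ℝ) : ch (s + t) = ch s * ch t := by
  unfold ch; rw [← Complex.exp_add]; congr 1; push_cast; ring

@[fun_prop] lemma continuous_ch : Continuous ch := by unfold ch; fun_prop

@[fun_prop] lemma measurable_ch : Measurable ch := continuous_ch.measurable

/-- the multiplier -/
noncomputable def mult (h : ℝ → ℂ) (ξ : ℂ) : ℂ :=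
  ∫ θ : ℝ in Ioc 0 (2 * Real.pi), Complex.exp (-(θ : ℂ) * Complex.I) *
    h (inner ℝ (Complex.exp (θ * Complex.I)) ξ)

lemma measurable_mult {h : ℝ → ℂ} (hm : Measurable h) : Measurable (mult h) := by
  have : StronglyMeasurable (fun q : ℂ × ℝ => Complex.exp (-(q.2 : ℂ) * Complex.I) *
      h (inner ℝ (Complex.exp (q.2 * Complex.I)) q.1)) := by
    refine Measurable.stronglyMeasurable (Measurable.mul (by fun_prop) ?_)
    refine hm.comp ?_
    exact Continuous.measurable (by fun_prop)
  exact this.integral_prod_right'.measurable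

lemma norm_mult_le {h : ℝ → ℂ} (hb : ∀ τ, ‖h τ‖ ≤ 1) (ξ : ℂ) : ‖mult h ξ‖ ≤ 2 * Real.pi := by
  have hpi := Real.pi_pos
  have := norm_setIntegral_le_of_norm_le_const (μ := volume) (s := Ioc 0 (2 * Real.pi)) (C := 1)
    (f := fun θ : ℝ => Complex.exp (-(θ : ℂ) * Complex.I) *
      h (inner ℝ (Complex.exp (θ * Complex.I)) ξ)) measure_Ioc_lt_top ?_
  · refine this.trans (le_of_eq ?_)
    simp [hpi.le]
  · intro θ _
    rw [norm_mul, ← Complex.ofReal_neg, Complex.norm_exp_ofReal_mul_I, one_mul]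
    exact hb _

lemma Hd_fourier {K : ℝ → ℝ} (hKi : Integrable K) {h : ℝ → ℂ}
    (hh : ∀ τ, ∫ s, (K s : ℂ) * ch (-(s * τ)) = h τ)
    {a : ℂ → ℂ} (ha : Integrable a) {g : ℂ → ℂ}
    (hg : ∀ x, g x = ∫ ξ, a ξ * ch (inner ℝ x ξ)) (e x : ℂ) :
    Hd K e g x = ∫ ξ, a ξ * h (inner ℝ e ξ) * ch (inner ℝ x ξ) := by
  unfold Hd
  simp only [hg, ← integral_const_mul]
  rw [integral_integral_swap]
  · congr 1; ext ξ
    rw [← hh, ← integral_const_mul, ← integral_mul_const]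
    congr 1; ext s
    have : inner ℝ (x - s * e) ξ = inner ℝ x ξ + -(s * inner ℝ e ξ) := by
      rw [inner_sub_left, ← Complex.real_smul, inner_smul_left]; simp; ring
    rw [this, ch_add]; ring
  · have h1 : Integrable (fun q : ℝ × ℂ => (K q.1 : ℂ) * a q.2) (volume.prod volume) :=
      (hKi.ofReal (𝕜 := ℂ)).mul_prod ha
    have h2 := h1.mul_bdd (c := 1) (g := fun q : ℝ × ℂ => ch (inner ℝ (x - q.1 * e) q.2))
      (Continuous.aestronglyMeasurable (by fun_prop))
      (Eventually.of_forall fun q => (norm_ch _).le)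
    refine h2.congr (Eventually.of_forall fun q => ?_)
    simp [Function.uncurry, mul_assoc]

lemma Rt_fourier {K : ℝ → ℝ} (hKi : Integrable K) {h : ℝ → ℂ} (hm : Measurable h)
    (hb : ∀ τ, ‖h τ‖ ≤ 1)
    (hh : ∀ τ, ∫ s, (K s : ℂ) * ch (-(s * τ)) = h τ)
    {a : ℂ → ℂ} (ha : Integrable a) {g : ℂ → ℂ}
    (hg : ∀ x, g x = ∫ ξ, a ξ * ch (inner ℝ x ξ)) (x : ℂ) :
    Rt K g x = ∫ ξ, (a ξ * mult h ξ) * ch (inner ℝ x ξ) := by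
  unfold Rt
  simp only [Hd_fourier hKi hh ha hg, ← integral_const_mul]
  rw [integral_integral_swap]
  · congr 1; ext ξ
    unfold mult
    rw [← integral_const_mul, ← integral_mul_const]
    congr 1; ext θ
    ring
  · have h1 : Integrable (fun q : ℝ × ℂ => (1 : ℂ) * a q.2)
        ((volume.restrict (Ioc 0 (2 * Real.pi))).prod volume) :=
      (integrable_const (1 : ℂ)).mul_prod ha
    have h2 := h1.mul_bdd (c := 1) (g := fun q : ℝ × ℂ =>
      Complex.exp (-(q.1 : ℂ) * Complex.I) *
        (h (inner ℝ (Complex.exp (q.1 * Complex.I)) q.2) * ch (inner ℝ x q.2)))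
      ?_ (Eventually.of_forall fun q => ?_)
    · refine h2.congr (Eventually.of_forall fun q => ?_)
      simp [Function.uncurry]; ring
    · refine Measurable.aestronglyMeasurable ?_
      refine Measurable.mul (by fun_prop) (Measurable.mul ?_ ?_)
      · exact hm.comp (Continuous.measurable (by fun_prop))
      · exact Continuous.measurable (by fun_prop)
    · rw [norm_mul, ← Complex.ofReal_neg, Complex.norm_exp_ofReal_mul_I, one_mul, norm_mul,
        norm_ch, mul_one]
      exact hb _

end BeurlingAux

namespace BeurlingAux

/-- difference of exponentials -/
noncomputable def Ex (y Y t : ℝ) : ℝ := Real.exp (-(2 * Real.pi * y * t)) - Real.exp (-(2 * Real.pi * Y * t))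

/-- Fourier transform of `Kk` -/
noncomputable def hK (y Y τ : ℝ) : ℂ := -Complex.I * ((Ex y Y (max τ 0) - Ex y Y (max (-τ) 0) : ℝ) : ℂ)

@[fun_prop] lemma continuous_Ex (y Y : ℝ) : Continuous (Ex y Y) := by unfold Ex; fun_prop

@[fun_prop] lemma continuous_hK (y Y : ℝ) : Continuous (hK y Y) := by
  unfold hK; fun_prop

lemma Ex_zero (y Y : ℝ) : Ex y Y 0 = 0 := by simp [Ex]

lemma abs_Ex_le {y Y t : ℝ} (hy : 0 < y) (hY : 0 < Y) (ht : 0 ≤ t) : |Ex y Y t| ≤ 1 := by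
  have hpi := Real.pi_pos
  unfold Ex
  have h1 : Real.exp (-(2 * Real.pi * y * t)) ≤ 1 := Real.exp_le_one_iff.2 (by
    have : 0 ≤ 2 * Real.pi * y * t := by positivity
    linarith)
  have h2 : Real.exp (-(2 * Real.pi * Y * t)) ≤ 1 := Real.exp_le_one_iff.2 (by
    have : 0 ≤ 2 * Real.pi * Y * t := by positivity
    linarith)
  have := Real.exp_pos (-(2 * Real.pi * y * t))
  have := Real.exp_pos (-(2 * Real.pi * Y * t))
  rw [abs_le]; constructor <;> linarith

lemma hK_pos {y Y τ : ℝ} (h : 0 ≤ τ) : hK y Y τ = -Complex.I * Ex y Y τ := by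
  unfold hK; rw [max_eq_left h, max_eq_right (by linarith), Ex_zero]; simp

lemma hK_neg {y Y τ : ℝ} (h : τ ≤ 0) : hK y Y τ = Complex.I * Ex y Y (-τ) := by
  unfold hK; rw [max_eq_right h, max_eq_left (by linarith), Ex_zero]; simp

lemma norm_hK_le {y Y : ℝ} (hy : 0 < y) (hY : 0 < Y) (τ : ℝ) : ‖hK y Y τ‖ ≤ 1 := by
  rcases le_total 0 τ with h | h
  · rw [hK_pos h]; simpa using abs_Ex_le hy hY h
  · rw [hK_neg h]; simpa using abs_Ex_le hy hY (neg_nonneg.2 h)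

lemma exp_int_pos {y : ℝ} (hy : 0 < y) (w : ℝ) :
    IntegrableOn (fun v : ℝ => Complex.exp (-(2 * Real.pi * (y + w * Complex.I)) * v)) (Ioi 0) ∧
    ∫ v : ℝ in Ioi 0, Complex.exp (-(2 * Real.pi * (y + w * Complex.I)) * v) =
      1 / (2 * Real.pi * (y + w * Complex.I)) := by
  have hpi := Real.pi_pos
  have hre : (-(2 * Real.pi * (y + w * Complex.I)) : ℂ).re < 0 := by
    simp; positivity
  refine ⟨integrableOn_exp_mul_complex_Ioi hre 0, ?_⟩
  rw [integral_exp_mul_complex_Ioi hre 0]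
  simp
  
lemma exp_int_neg {y : ℝ} (hy : 0 < y) (w : ℝ) :
    IntegrableOn (fun v : ℝ => Complex.exp ((2 * Real.pi * (y - w * Complex.I)) * v)) (Iic 0) ∧
    ∫ v : ℝ in Iic 0, Complex.exp ((2 * Real.pi * (y - w * Complex.I)) * v) =
      1 / (2 * Real.pi * (y - w * Complex.I)) := by
  have hpi := Real.pi_pos
  have hre : 0 < ((2 * Real.pi * (y - w * Complex.I)) : ℂ).re := by
    simp; positivity
  refine ⟨integrableOn_exp_mul_complex_Iic hre 0, ?_⟩
  rw [integral_exp_mul_complex_Iic hre 0]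
  simp

lemma hK_ch_pos (y Y w : ℝ) {v : ℝ} (hv : 0 ≤ v) : ch (-(v * w)) * hK y Y v =
    -Complex.I * (Complex.exp (-(2 * Real.pi * (y + w * Complex.I)) * v) -
      Complex.exp (-(2 * Real.pi * (Y + w * Complex.I)) * v)) := by
  rw [hK_pos hv]; unfold ch Ex
  push_cast
  rw [show (-(2 * Real.pi * (y + w * Complex.I)) * v : ℂ) = 2 * Real.pi * -(v * w) * Complex.I +
    -(2 * Real.pi * y * v) by ring, show (-(2 * Real.pi * (Y + w * Complex.I)) * v : ℂ) =
    2 * Real.pi * -(v * w) * Complex.I + -(2 * Real.pi * Y * v) by ring, Complex.exp_add,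
    Complex.exp_add]
  ring

lemma hK_ch_neg (y Y w : ℝ) {v : ℝ} (hv : v ≤ 0) : ch (-(v * w)) * hK y Y v =
    Complex.I * (Complex.exp ((2 * Real.pi * (y - w * Complex.I)) * v) -
      Complex.exp ((2 * Real.pi * (Y - w * Complex.I)) * v)) := by
  rw [hK_neg hv]; unfold ch Ex
  push_cast
  rw [show ((2 * Real.pi * (y - w * Complex.I)) * v : ℂ) = 2 * Real.pi * -(v * w) * Complex.I +
    -(2 * Real.pi * y * -v) by ring, show ((2 * Real.pi * (Y - w * Complex.I)) * v : ℂ) =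
    2 * Real.pi * -(v * w) * Complex.I + -(2 * Real.pi * Y * -v) by ring, Complex.exp_add,
    Complex.exp_add]
  ring

lemma hK_int {y Y : ℝ} (hy : 0 < y) (hY : 0 < Y) (w : ℝ) :
    Integrable (fun v => ch (-(v * w)) * hK y Y v) ∧
    ∫ v, ch (-(v * w)) * hK y Y v = -(Kk y Y w : ℂ) := by
  have i1 : IntegrableOn (fun v => ch (-(v * w)) * hK y Y v) (Ioi 0) := by
    refine IntegrableOn.congr_fun (((exp_int_pos hy w).1.sub (exp_int_pos hY w).1).const_mul
      (-Complex.I)) (fun v hv => ?_) measurableSet_Ioi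
    exact (hK_ch_pos y Y w (le_of_lt hv)).symm
  have i2 : IntegrableOn (fun v => ch (-(v * w)) * hK y Y v) (Iic 0) := by
    refine IntegrableOn.congr_fun (((exp_int_neg hy w).1.sub (exp_int_neg hY w).1).const_mul
      (Complex.I)) (fun v hv => ?_) measurableSet_Iic
    exact (hK_ch_neg y Y w hv).symm
  constructor
  · rw [← integrableOn_univ, ← Iic_union_Ioi (a := (0:ℝ))]
    exact i2.union i1
  rw [← intervalIntegral.integral_Iic_add_Ioi i2 i1]
  rw [setIntegral_congr_fun measurableSet_Ioi (fun v (hv : 0 < v) => hK_ch_pos y Y w hv.le),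
    setIntegral_congr_fun measurableSet_Iic (fun v hv => hK_ch_neg y Y w hv),
    integral_const_mul, integral_const_mul, integral_sub (exp_int_pos hy w).1 (exp_int_pos hY w).1,
    integral_sub (exp_int_neg hy w).1 (exp_int_neg hY w).1, (exp_int_pos hy w).2,
    (exp_int_pos hY w).2, (exp_int_neg hy w).2, (exp_int_neg hY w).2]
  unfold Kk Qk
  have key : ∀ y : ℝ, 0 < y → Complex.I * (1 / (2 * Real.pi * (y - w * Complex.I))) -
      Complex.I * (1 / (2 * Real.pi * (y + w * Complex.I))) =
      - (w / (Real.pi * (w ^ 2 + y ^ 2)) : ℂ) := by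
    intro y hy
    have hpi : (Real.pi : ℂ) ≠ 0 := by exact_mod_cast Real.pi_ne_zero
    have h1 : (y - w * Complex.I : ℂ) ≠ 0 := fun h => by
      have := congrArg Complex.re h; simp at this; linarith
    have h2 : (y + w * Complex.I : ℂ) ≠ 0 := fun h => by
      have := congrArg Complex.re h; simp at this; linarith
    have h3 : (w ^ 2 + y ^ 2 : ℂ) = (y - w * Complex.I) * (y + w * Complex.I) := by
      linear_combination ((w : ℂ) ^ 2) * Complex.I_sq
    rw [h3]
    have h4 : (y + w * Complex.I : ℂ) - (y - w * Complex.I) = 2 * w * Complex.I := by ring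
    generalize (y - w * Complex.I : ℂ) = A at *
    generalize (y + w * Complex.I : ℂ) = B at *
    field_simp
    linear_combination Complex.I * h4 + 2 * w * Complex.I_sq
  have k1 := key y hy
  have k2 := key Y hY
  push_cast
  linear_combination k1 - k2

lemma Kk_fourier {y Y : ℝ} (hy : 0 < y) (hY : 0 < Y) (τ : ℝ) :
    ∫ s, (Kk y Y s : ℂ) * ch (-(s * τ)) = hK y Y τ := by
  have hi : Integrable (hK y Y) := by
    have := (hK_int hy hY 0).1
    simpa [ch] using this
  have hF : FourierTransform.fourier (hK y Y) = fun w => -(Kk y Y w : ℂ) := by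
    ext w
    rw [Real.fourier_real_eq_integral_exp_smul, ← (hK_int hy hY w).2]
    congr 1; ext v
    unfold ch
    rw [smul_eq_mul]; congr 3; push_cast; ring
  have hFi : FourierTransformInv.fourierInv (hK y Y) = fun w => (Kk y Y w : ℂ) := by
    ext w
    rw [Real.fourierInv_eq_fourier_neg, hF]; simp [Kk_neg]
  have := (continuous_hK y Y).fourier_fourierInv_eq hi
    (by rw [hF]; exact ((integrable_Kk hy hY).ofReal (𝕜 := ℂ)).neg)
  rw [hFi] at this
  have := congrFun this τ
  rw [← this, Real.fourier_real_eq_integral_exp_smul]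
  congr 1; ext v
  unfold ch
  rw [smul_eq_mul, mul_comm]; congr 3; push_cast; ring

end BeurlingAux

namespace BeurlingAux

/-- parameters -/
noncomputable def yn (n : ℕ) : ℝ := 1 / ((n : ℝ) + 1)

/-- parameters -/
noncomputable def Yn (n : ℕ) : ℝ := (n : ℝ) + 1

lemma yn_pos (n : ℕ) : 0 < yn n := by unfold yn; positivity
lemma Yn_pos (n : ℕ) : 0 < Yn n := by unfold Yn; positivity

lemma tendsto_Ex {t : ℝ} (ht : 0 < t) : Tendsto (fun n => Ex (yn n) (Yn n) t) atTop (𝓝 1) := by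
  have hpi := Real.pi_pos
  unfold Ex
  have h1 : Tendsto yn atTop (𝓝 0) := tendsto_one_div_add_atTop_nhds_zero_nat
  have h2 : Tendsto Yn atTop atTop := by
    unfold Yn; exact tendsto_atTop_add_const_right _ _ tendsto_natCast_atTop_atTop
  have h3 : Tendsto (fun n => Real.exp (-(2 * Real.pi * yn n * t))) atTop (𝓝 1) := by
    have : Tendsto (fun n => -(2 * Real.pi * yn n * t)) atTop (𝓝 (-(2 * Real.pi * 0 * t))) :=
      ((h1.const_mul _).mul_const _).neg
    have := (Real.continuous_exp.tendsto _).comp this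
    simpa [Function.comp_def] using this
  have h4 : Tendsto (fun n => Real.exp (-(2 * Real.pi * Yn n * t))) atTop (𝓝 0) := by
    refine Real.tendsto_exp_neg_atTop_nhds_zero.comp ?_
    exact (h2.const_mul_atTop (by positivity)).atTop_mul_const ht
  simpa using h3.sub h4

lemma tendsto_hK (τ : ℝ) : Tendsto (fun n => hK (yn n) (Yn n) τ) atTop
    (𝓝 (-Complex.I * (Real.sign τ : ℂ))) := by
  rcases lt_trichotomy τ 0 with h | h | h
  · simp_rw [hK_neg h.le, Real.sign_of_neg h]
    have := (((Complex.continuous_ofReal.tendsto _).comp (tendsto_Ex (neg_pos.2 h))).const_mul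
      Complex.I)
    simpa using this
  · subst h
    simp_rw [hK_pos le_rfl, Ex_zero]; simp
  · simp_rw [hK_pos h.le, Real.sign_of_pos h]
    have := (((Complex.continuous_ofReal.tendsto _).comp (tendsto_Ex h)).const_mul
      (-Complex.I))
    simpa using this

lemma sign_integral :
    ∫ θ : ℝ in (-(Real.pi / 2))..(-(Real.pi / 2) + 2 * Real.pi),
      Complex.exp (-(θ : ℂ) * Complex.I) * (Real.sign (Real.cos θ) : ℂ) = 4 := by
  have hpi := Real.pi_pos
  have e : ∀ a b : ℝ, ∫ θ : ℝ in a..b, Complex.exp (-(θ : ℂ) * Complex.I) =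
      Complex.I * (Complex.exp (-(b : ℂ) * Complex.I) - Complex.exp (-(a : ℂ) * Complex.I)) := by
    intro a b
    have := integral_exp_mul_complex (a := a) (b := b) (c := -Complex.I) (by simp)
    have e2 : ∀ θ : ℝ, -(θ : ℂ) * Complex.I = -Complex.I * θ := fun θ => by ring
    simp only [e2]
    rw [this, div_eq_iff (by simp)]
    linear_combination (Complex.exp (-Complex.I * b) - Complex.exp (-Complex.I * a)) * Complex.I_sq
  have c1 : EqOn (fun θ : ℝ => Complex.exp (-(θ : ℂ) * Complex.I) * (Real.sign (Real.cos θ) : ℂ))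
      (fun θ : ℝ => Complex.exp (-(θ : ℂ) * Complex.I)) (Ioo (-(Real.pi / 2)) (Real.pi / 2)) := by
    intro θ hθ
    simp only
    rw [Real.sign_of_pos (Real.cos_pos_of_mem_Ioo hθ)]; simp
  have c2 : EqOn (fun θ : ℝ => Complex.exp (-(θ : ℂ) * Complex.I) * (Real.sign (Real.cos θ) : ℂ))
      (fun θ : ℝ => -Complex.exp (-(θ : ℂ) * Complex.I))
      (Ioo (Real.pi / 2) (-(Real.pi / 2) + 2 * Real.pi)) := by
    intro θ hθ
    simp only
    rw [Real.sign_of_neg (Real.cos_neg_of_pi_div_two_lt_of_lt hθ.1 (by linarith [hθ.2]))]; simp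
  have i1 : IntervalIntegrable (fun θ : ℝ => Complex.exp (-(θ : ℂ) * Complex.I) *
      (Real.sign (Real.cos θ) : ℂ)) volume (-(Real.pi / 2)) (Real.pi / 2) := by
    rw [intervalIntegrable_iff_integrableOn_Ioo_of_le (by linarith)]
    refine IntegrableOn.congr_fun ?_ c1.symm measurableSet_Ioo
    rw [← intervalIntegrable_iff_integrableOn_Ioo_of_le (by linarith)]
    exact Continuous.intervalIntegrable (by fun_prop) _ _
  have i2 : IntervalIntegrable (fun θ : ℝ => Complex.exp (-(θ : ℂ) * Complex.I) *
      (Real.sign (Real.cos θ) : ℂ)) volume (Real.pi / 2) (-(Real.pi / 2) + 2 * Real.pi) := by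
    rw [intervalIntegrable_iff_integrableOn_Ioo_of_le (by linarith)]
    refine IntegrableOn.congr_fun ?_ c2.symm measurableSet_Ioo
    rw [← intervalIntegrable_iff_integrableOn_Ioo_of_le (by linarith)]
    exact Continuous.intervalIntegrable (by fun_prop) _ _
  rw [← intervalIntegral.integral_add_adjacent_intervals i1 i2]
  rw [intervalIntegral.integral_of_le (by linarith), intervalIntegral.integral_of_le (by linarith),
    integral_Ioc_eq_integral_Ioo, integral_Ioc_eq_integral_Ioo,
    setIntegral_congr_fun measurableSet_Ioo c1, setIntegral_congr_fun measurableSet_Ioo c2,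
    ← integral_Ioc_eq_integral_Ioo, ← integral_Ioc_eq_integral_Ioo,
    ← intervalIntegral.integral_of_le (by linarith), ← intervalIntegral.integral_of_le (by linarith),
    intervalIntegral.integral_neg, e, e]
  have f1 : Complex.exp (-((Real.pi / 2 : ℝ) : ℂ) * Complex.I) = -Complex.I := by
    push_cast
    rw [show (-(Real.pi / 2 : ℂ) * Complex.I) = -(Real.pi / 2 * Complex.I) by ring,
      Complex.exp_neg, Complex.exp_pi_div_two_mul_I]; simp
  have f2 : Complex.exp (-((-(Real.pi / 2) : ℝ) : ℂ) * Complex.I) = Complex.I := by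
    push_cast
    rw [neg_neg, Complex.exp_pi_div_two_mul_I]
  have f3 : Complex.exp (-((-(Real.pi / 2) + 2 * Real.pi : ℝ) : ℂ) * Complex.I) = Complex.I := by
    push_cast
    rw [show (-(-(Real.pi / 2 : ℂ) + 2 * Real.pi) * Complex.I) = Real.pi / 2 * Complex.I
      - 2 * Real.pi * Complex.I by ring, Complex.exp_sub, Complex.exp_pi_div_two_mul_I,
      Complex.exp_two_pi_mul_I]; simp
  rw [f1, f2, f3]
  ring_nf; simp

lemma mult_sign {ξ : ℂ} (hξ : ξ ≠ 0) :
    mult (fun τ => -Complex.I * (Real.sign τ : ℂ)) ξ =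
      -4 * Complex.I * (starRingEnd ℂ ξ / ‖ξ‖) := by
  have hpi := Real.pi_pos
  have hr : 0 < ‖ξ‖ := norm_pos_iff.2 hξ
  set f : ℝ → ℂ := fun θ => Complex.exp (-(θ : ℂ) * Complex.I) * (Real.sign (Real.cos θ) : ℂ) with hf
  have hper : Function.Periodic f (2 * Real.pi) := by
    intro θ
    simp only [hf]
    rw [Real.cos_add_two_pi]
    congr 1
    push_cast
    rw [show (-((θ : ℂ) + 2 * Real.pi) * Complex.I) = -θ * Complex.I - 2 * Real.pi * Complex.I by
      ring, Complex.exp_sub, Complex.exp_two_pi_mul_I]; simp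
  have key : ∀ θ : ℝ, Complex.exp (-(θ : ℂ) * Complex.I) * (-Complex.I *
      (Real.sign (inner ℝ (Complex.exp (θ * Complex.I)) ξ) : ℂ)) =
      (-Complex.I * (starRingEnd ℂ ξ / ‖ξ‖)) * f (θ - ξ.arg) := by
    intro θ
    have h1 : starRingEnd ℂ ξ / ‖ξ‖ = Complex.exp (-(ξ.arg : ℂ) * Complex.I) := by
      rw [div_eq_iff (by exact_mod_cast hr.ne')]
      conv_lhs => rw [← Complex.norm_mul_exp_arg_mul_I ξ]
      rw [map_mul, ← Complex.exp_conj]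
      simp; ring
    have h2 : inner ℝ (Complex.exp (θ * Complex.I)) ξ = ‖ξ‖ * Real.cos (θ - ξ.arg) := by
      rw [Complex.inner]
      conv_lhs => rw [← Complex.norm_mul_exp_arg_mul_I ξ]
      rw [← Complex.exp_conj, mul_assoc, Complex.re_ofReal_mul, ← Complex.exp_add]
      have : ξ.arg * Complex.I + starRingEnd ℂ (θ * Complex.I) =
          ((-(θ - ξ.arg) : ℝ) : ℂ) * Complex.I := by
        simp; ring
      rw [this, Complex.exp_ofReal_mul_I_re, Real.cos_neg]
    have h3 : Real.sign (‖ξ‖ * Real.cos (θ - ξ.arg)) = Real.sign (Real.cos (θ - ξ.arg)) := by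
      unfold Real.sign; simp [mul_pos_iff_of_pos_left hr, mul_neg_iff, hr, hr.not_gt]
    rw [h2, h3, h1]
    simp only [hf]
    have : Complex.exp (-(θ : ℂ) * Complex.I) = Complex.exp (-(ξ.arg : ℂ) * Complex.I) *
        Complex.exp (-((θ - ξ.arg : ℝ) : ℂ) * Complex.I) := by
      rw [← Complex.exp_add]; congr 1; push_cast; ring
    rw [this]; ring
  unfold mult
  simp_rw [key]
  rw [integral_const_mul, ← intervalIntegral.integral_of_le (by positivity),
    intervalIntegral.integral_comp_sub_right (fun θ => f θ)]
  have := hper.intervalIntegral_add_eq (0 - ξ.arg) (-(Real.pi / 2))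
  rw [show 2 * Real.pi - ξ.arg = 0 - ξ.arg + 2 * Real.pi by ring, this, hf, sign_integral]
  ring

lemma tendsto_mult {ξ : ℂ} (hξ : ξ ≠ 0) :
    Tendsto (fun n => mult (hK (yn n) (Yn n)) ξ) atTop
      (𝓝 (-4 * Complex.I * (starRingEnd ℂ ξ / ‖ξ‖))) := by
  rw [← mult_sign hξ]
  unfold mult
  refine tendsto_integral_of_dominated_convergence (fun _ => 1) (fun n => ?_) ?_ (fun n => ?_) ?_
  · exact Continuous.aestronglyMeasurable (by fun_prop)
  · exact integrable_const _
  · refine Eventually.of_forall fun θ => ?_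
    rw [norm_mul, ← Complex.ofReal_neg, Complex.norm_exp_ofReal_mul_I, one_mul]
    exact norm_hK_le (yn_pos n) (Yn_pos n) _
  · refine Eventually.of_forall fun θ => ?_
    exact (tendsto_hK _).const_mul _

/-- double truncated Riesz transform tends to the Beurling multiplier -/
lemma tendsto_Rt_Rt {a : ℂ → ℂ} (ha : Integrable a) {g : ℂ → ℂ}
    (hg : ∀ x, g x = ∫ ξ, a ξ * ch (inner ℝ x ξ)) (x : ℂ) :
    Tendsto (fun n => Rt (Kk (yn n) (Yn n)) (Rt (Kk (yn n) (Yn n)) g) x) atTop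
      (𝓝 (∫ ξ, (a ξ * (-16 * (starRingEnd ℂ ξ / ξ))) * ch (inner ℝ x ξ))) := by
  have hIntg : ∀ n, Integrable (fun ξ => a ξ * mult (hK (yn n) (Yn n)) ξ) := fun n =>
    ha.mul_bdd (measurable_mult (continuous_hK _ _).measurable).aestronglyMeasurable
      (Eventually.of_forall fun ξ => norm_mult_le (norm_hK_le (yn_pos n) (Yn_pos n)) ξ)
  have h1 : ∀ n x, Rt (Kk (yn n) (Yn n)) g x =
      ∫ ξ, (a ξ * mult (hK (yn n) (Yn n)) ξ) * ch (inner ℝ x ξ) := fun n x =>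
    Rt_fourier (integrable_Kk (yn_pos n) (Yn_pos n)) (continuous_hK _ _).measurable
      (norm_hK_le (yn_pos n) (Yn_pos n)) (Kk_fourier (yn_pos n) (Yn_pos n)) ha hg x
  have h2 : ∀ n, Rt (Kk (yn n) (Yn n)) (Rt (Kk (yn n) (Yn n)) g) x =
      ∫ ξ, (a ξ * mult (hK (yn n) (Yn n)) ξ * mult (hK (yn n) (Yn n)) ξ) * ch (inner ℝ x ξ) :=
    fun n =>
    Rt_fourier (integrable_Kk (yn_pos n) (Yn_pos n)) (continuous_hK _ _).measurable
      (norm_hK_le (yn_pos n) (Yn_pos n)) (Kk_fourier (yn_pos n) (Yn_pos n)) (hIntg n) (h1 n) x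
  simp_rw [h2]
  refine tendsto_integral_of_dominated_convergence
    (fun ξ => ‖a ξ‖ * (2 * Real.pi) * (2 * Real.pi)) (fun n => ?_) ?_ (fun n => ?_) ?_
  · refine (((hIntg n).1.mul
      (measurable_mult (continuous_hK _ _).measurable).aestronglyMeasurable).mul ?_)
    exact Continuous.aestronglyMeasurable (by fun_prop)
  · exact (ha.norm.mul_const _).mul_const _
  · refine Eventually.of_forall fun ξ => ?_
    have := norm_mult_le (norm_hK_le (yn_pos n) (Yn_pos n)) ξ
    rw [norm_mul, norm_mul, norm_mul, norm_ch, mul_one]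
    have hpi := Real.pi_pos
    gcongr
  · have : ∀ᵐ ξ : ℂ, ξ ≠ 0 := by
      simp [ae_iff, measure_singleton]
    filter_upwards [this] with ξ hξ
    refine Tendsto.mul_const _ ?_
    have t := (tendsto_mult hξ)
    have := ((t.const_mul (a ξ)).mul t)
    convert this using 2
    have h1 : (‖ξ‖ : ℂ) ≠ 0 := by exact_mod_cast norm_ne_zero_iff.2 hξ
    have h2 : (‖ξ‖ : ℂ) ^ 2 = ξ * starRingEnd ℂ ξ := (Complex.mul_conj' ξ).symm
    have h3 : starRingEnd ℂ ξ / ‖ξ‖ * (starRingEnd ℂ ξ / ‖ξ‖) = starRingEnd ℂ ξ / ξ := by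
      rw [div_mul_div_comm, ← sq (‖ξ‖ : ℂ), h2, mul_div_mul_right]
      simpa using hξ
    linear_combination (-16 * a ξ * (starRingEnd ℂ ξ / ‖ξ‖) ^ 2) * Complex.I_sq + (16 * a ξ) * h3

end BeurlingAux

namespace BeurlingAux

/-- twice the holomorphic derivative -/
noncomputable def dz (v : ℂ → ℂ) (x : ℂ) : ℂ := fderiv ℝ v x 1 - Complex.I * fderiv ℝ v x Complex.I

/-- twice the antiholomorphic derivative -/
noncomputable def db (v : ℂ → ℂ) (x : ℂ) : ℂ := fderiv ℝ v x 1 + Complex.I * fderiv ℝ v x Complex.I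

open LineDeriv FourierTransform in
lemma schwartz_fourier (v : SchwartzMap ℂ ℂ) : ∃ a : ℂ → ℂ, ∀ m : ℂ,
    Integrable (fun ξ : ℂ => (2 * Real.pi * Complex.I) * ((inner ℝ ξ m : ℝ) : ℂ) * a ξ) ∧
    ∀ x, fderiv ℝ v x m = ∫ ξ, ((2 * Real.pi * Complex.I) * ((inner ℝ ξ m : ℝ) : ℂ) * a ξ) *
      ch (inner ℝ x ξ) := by
  refine ⟨fun ξ => (𝓕 v : SchwartzMap ℂ ℂ) ξ, fun m => ?_⟩
  have e : ∀ ξ : ℂ, (2 * Real.pi * Complex.I) * ((inner ℝ ξ m : ℝ) : ℂ) * (𝓕 v : SchwartzMap ℂ ℂ) ξ =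
      (𝓕 (∂_{m} v) : SchwartzMap ℂ ℂ) ξ := by
    intro ξ
    have ht : (fun ξ : ℂ => inner ℝ ξ m).HasTemperateGrowth := by fun_prop
    rw [SchwartzMap.fourier_lineDerivOp_eq]
    rw [smul_apply, SchwartzMap.smulLeftCLM_apply_apply ht]
    simp [mul_assoc]
  constructor
  · simp_rw [e]; exact SchwartzMap.integrable _
  · intro x
    simp_rw [e]
    have h : (𝓕⁻ (𝓕 (∂_{m} v) : SchwartzMap ℂ ℂ) : SchwartzMap ℂ ℂ) = ∂_{m} v :=
      FourierTransform.fourierInv_fourier_eq _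
    have h2 := congrArg (fun u : SchwartzMap ℂ ℂ => u x) h
    simp only [SchwartzMap.lineDerivOp_apply_eq_fderiv] at h2
    rw [← h2, SchwartzMap.fourierInv_coe, Real.fourierInv_eq']
    congr 1; ext ξ
    rw [smul_eq_mul, mul_comm, real_inner_comm]
    rfl

/-- comparision of the two Wirtinger derivatives in `L^p`. -/
lemma dz_le_db {p : ℝ} (hp : 1 < p) : ∃ C : ℝ≥0∞, C ≠ ⊤ ∧ ∀ v : ℂ → ℂ,
    ContDiff ℝ (⊤ : ℕ∞) v → HasCompactSupport v →
    ∫⁻ x, ‖dz v x‖ₑ ^ p ≤ C * ∫⁻ x, ‖db v x‖ₑ ^ p := by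
  obtain ⟨C, hC, H⟩ := hilbert_bound hp
  have hp0 : 0 < p := by linarith
  set A : ℝ≥0∞ := (ENNReal.ofReal (2 * Real.pi)) ^ p with hA
  have hAt : A ≠ ⊤ := ENNReal.rpow_ne_top_of_nonneg hp0.le ENNReal.ofReal_ne_top
  refine ⟨A * (C * (A * C)), by finiteness, fun v hv hc => ?_⟩
  obtain ⟨a, ha⟩ := schwartz_fourier (hc.toSchwartzMap hv)
  have hcoe : ((hc.toSchwartzMap hv : SchwartzMap ℂ ℂ) : ℂ → ℂ) = v := rfl
  rw [hcoe] at ha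
  set b : ℂ → ℂ := fun ξ => 2 * Real.pi * Complex.I * ξ * a ξ with hb
  have e1 : ∀ ξ : ℂ, b ξ = (2 * Real.pi * Complex.I) * ((inner ℝ ξ 1 : ℝ) : ℂ) * a ξ +
      Complex.I * ((2 * Real.pi * Complex.I) * ((inner ℝ ξ Complex.I : ℝ) : ℂ) * a ξ) := by
    intro ξ
    have : ξ = ((inner ℝ ξ 1 : ℝ) : ℂ) + Complex.I * ((inner ℝ ξ Complex.I : ℝ) : ℂ) := by
      simp only [Complex.inner]
      apply Complex.ext <;> simp
    simp only [hb]
    linear_combination (2 * Real.pi * Complex.I * a ξ) * this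
  have e2 : ∀ ξ : ℂ, b ξ * (-16 * (starRingEnd ℂ ξ / ξ)) = -16 * (
      (2 * Real.pi * Complex.I) * ((inner ℝ ξ 1 : ℝ) : ℂ) * a ξ -
      Complex.I * ((2 * Real.pi * Complex.I) * ((inner ℝ ξ Complex.I : ℝ) : ℂ) * a ξ)) := by
    intro ξ
    have h1 : starRingEnd ℂ ξ = ((inner ℝ ξ 1 : ℝ) : ℂ) - Complex.I * ((inner ℝ ξ Complex.I : ℝ) : ℂ) := by
      simp only [Complex.inner]
      apply Complex.ext <;> simp
    have h2 : ξ * (starRingEnd ℂ ξ / ξ) = starRingEnd ℂ ξ := by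
      by_cases h : ξ = 0
      · simp [h]
      · field_simp
    simp only [hb]
    calc _ = -16 * (2 * Real.pi * Complex.I) * a ξ * (ξ * (starRingEnd ℂ ξ / ξ)) := by ring
      _ = _ := by rw [h2, h1]; ring
  have i1 := ha 1
  have i2 := ha Complex.I
  have hbi : Integrable b := by
    have := i1.1.add (i2.1.const_mul Complex.I)
    refine this.congr (Eventually.of_forall fun ξ => ?_)
    simp [e1]
  have hchi : ∀ {f : ℂ → ℂ} (x : ℂ), Integrable f → Integrable (fun ξ => f ξ * ch (inner ℝ x ξ)) := by
    intro f x hf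
    exact hf.mul_bdd (c := 1) (Continuous.aestronglyMeasurable (by fun_prop))
      (Eventually.of_forall fun q => (norm_ch _).le)
  have hdb : ∀ x, db v x = ∫ ξ, b ξ * ch (inner ℝ x ξ) := by
    intro x
    unfold db
    rw [i1.2, i2.2, ← integral_const_mul, ← integral_add (hchi x i1.1) ((hchi x i2.1).const_mul _)]
    congr 1; ext ξ; rw [e1]; ring
  have hdz : ∀ x, -16 * dz v x = ∫ ξ, (b ξ * (-16 * (starRingEnd ℂ ξ / ξ))) * ch (inner ℝ x ξ) := by
    intro x
    unfold dz
    rw [i1.2, i2.2, ← integral_const_mul, ← integral_sub (hchi x i1.1) ((hchi x i2.1).const_mul _),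
      ← integral_const_mul]
    congr 1; ext ξ; rw [e2]; ring
  have hdbm : Measurable (db v) := by
    have h := hv.continuous_fderiv (by simp)
    have : Continuous (db v) := by unfold db; fun_prop
    exact this.measurable
  have hlim := tendsto_Rt_Rt hbi hdb
  have hbd : ∀ n, ∫⁻ x, ‖Rt (Kk (yn n) (Yn n)) (Rt (Kk (yn n) (Yn n)) (db v)) x‖ₑ ^ p ≤
      A * (C * (A * C)) * ∫⁻ x, ‖db v x‖ₑ ^ p := by
    intro n
    have hm := (continuous_Kk (yn_pos n) (Yn_pos n)).measurable
    have h1 := Rt_bound hp hm (H _ _ (yn_pos n) (Yn_pos n)) hdbm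
    have h2 := Rt_bound hp hm (H _ _ (yn_pos n) (Yn_pos n)) (measurable_Rt hm hdbm)
    refine h2.trans ?_
    calc _ ≤ A * (C * (A * (C * ∫⁻ x, ‖db v x‖ₑ ^ p))) := by gcongr
      _ = _ := by ring
  have := fatou_enorm volume hp0 (fun n => ?_)
    (Eventually.of_forall fun x => hlim x) hbd
  · refine le_trans (lintegral_mono fun x => ?_) this
    rw [← hdz]
    gcongr
    rw [← ofReal_norm, ← ofReal_norm]
    apply ENNReal.ofReal_le_ofReal
    rw [norm_mul]
    have := norm_nonneg (dz v x)
    norm_num; linarith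
  · have hm := (continuous_Kk (yn_pos n) (Yn_pos n)).measurable
    exact measurable_Rt hm (measurable_Rt hm hdbm)

end BeurlingAux

namespace BeurlingAux

lemma locInt_inv : LocallyIntegrable (fun t : ℂ => t⁻¹) := by
  refine locallyIntegrable_of_norm_le_rpow (C := 1) (α := 1) (by simp) (by simp) ?_ ?_
  · refine Eventually.of_forall fun t => ?_
    rw [Real.rpow_neg_one]; simp
  · exact Measurable.aestronglyMeasurable (by fun_prop)

/-- regularised denominator -/
noncomputable def Dn (ε : ℝ) (t : ℂ) : ℂ := t * starRingEnd ℂ t + (ε : ℂ) ^ 2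

lemma Dn_eq (ε : ℝ) (t : ℂ) : Dn ε t = ((‖t‖ ^ 2 + ε ^ 2 : ℝ) : ℂ) := by
  unfold Dn; rw [Complex.mul_conj']; push_cast; rfl

lemma Dn_ne {ε : ℝ} (hε : 0 < ε) (t : ℂ) : Dn ε t ≠ 0 := by
  rw [Dn_eq]; norm_cast; positivity

lemma norm_Dn (ε : ℝ) (t : ℂ) : ‖Dn ε t‖ = ‖t‖ ^ 2 + ε ^ 2 := by
  rw [Dn_eq, Complex.norm_of_nonneg (by positivity)]

/-- regularised Cauchy kernel -/
noncomputable def ck (ε : ℝ) (t : ℂ) : ℂ := starRingEnd ℂ t * (Dn ε t)⁻¹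

lemma hasFDerivAt_ck {ε : ℝ} (hε : 0 < ε) (t : ℂ) :
    ∃ L : ℂ →L[ℝ] ℂ, HasFDerivAt (ck ε) L t ∧ ∀ m, L m = starRingEnd ℂ m * (Dn ε t)⁻¹ -
      starRingEnd ℂ t * (m * starRingEnd ℂ t + t * starRingEnd ℂ m) * ((Dn ε t) ^ 2)⁻¹ := by
  have h1 : HasFDerivAt (fun t : ℂ => starRingEnd ℂ t) (Complex.conjCLE : ℂ →L[ℝ] ℂ) t :=
    Complex.conjCLE.hasFDerivAt
  have h2 : HasFDerivAt (Dn ε) _ t := ((hasFDerivAt_id (𝕜 := ℝ) t).mul h1).add_const ((ε : ℂ) ^ 2)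
  have h3 := ((hasDerivAt_inv (Dn_ne hε t)).hasFDerivAt.restrictScalars ℝ).comp t h2
  have h4 := h1.mul h3
  refine ⟨_, h4, fun m => ?_⟩
  simp
  ring

lemma contDiff_ck {ε : ℝ} (hε : 0 < ε) : ContDiff ℝ (⊤ : ℕ∞) (ck ε) := by
  have h1 : ContDiff ℝ (⊤ : ℕ∞) (fun t : ℂ => starRingEnd ℂ t) := Complex.conjCLE.contDiff
  have h2 : ContDiff ℝ (⊤ : ℕ∞) (Dn ε) := (contDiff_id.mul h1).add contDiff_const
  exact h1.mul (h2.inv (Dn_ne hε))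

lemma db_ck {ε : ℝ} (hε : 0 < ε) (t : ℂ) : db (ck ε) t = 2 * ε ^ 2 * ((Dn ε t) ^ 2)⁻¹ := by
  obtain ⟨L, hL, h⟩ := hasFDerivAt_ck hε t
  unfold db
  rw [hL.fderiv, h, h]
  have h0 := Dn_ne hε t
  have : (Dn ε t)⁻¹ = Dn ε t * ((Dn ε t) ^ 2)⁻¹ := by field_simp
  rw [this]
  have : Dn ε t = t * starRingEnd ℂ t + (ε : ℂ) ^ 2 := rfl
  simp only [map_one, Complex.conj_I]
  generalize ((Dn ε t) ^ 2)⁻¹ = X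
  rw [this]
  ring_nf
  simp only [Complex.I_sq]
  ring

lemma dz_ck {ε : ℝ} (hε : 0 < ε) (t : ℂ) :
    dz (ck ε) t = -2 * (starRingEnd ℂ t) ^ 2 * ((Dn ε t) ^ 2)⁻¹ := by
  obtain ⟨L, hL, h⟩ := hasFDerivAt_ck hε t
  unfold dz
  rw [hL.fderiv, h, h]
  simp only [map_one, Complex.conj_I]
  generalize ((Dn ε t) ^ 2)⁻¹ = X
  ring_nf
  simp only [Complex.I_sq]
  ring

lemma ibp {k φ : ℂ → ℂ} (hk : ContDiff ℝ (⊤ : ℕ∞) k) (hφ : ContDiff ℝ (⊤ : ℕ∞) φ)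
    (hc : HasCompactSupport φ) :
    ∫ t, k t * db φ t = - ∫ t, db k t * φ t ∧ ∫ t, k t * dz φ t = - ∫ t, dz k t * φ t := by
  have dk := hk.continuous_fderiv (by simp)
  have dφ := hφ.continuous_fderiv (by simp)
  have ck := hk.continuous
  have cφ := hφ.continuous
  have i1 : ∀ m : ℂ, Integrable (fun t => fderiv ℝ k t m * φ t) := fun m =>
    Continuous.integrable_of_hasCompactSupport (by fun_prop) hc.mul_left
  have i2 : ∀ m : ℂ, Integrable (fun t => k t * fderiv ℝ φ t m) := fun m =>
    Continuous.integrable_of_hasCompactSupport (by fun_prop)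
      (HasCompactSupport.mul_left (hc.fderiv_apply (𝕜 := ℝ) m))
  have i3 : Integrable (fun t => k t * φ t) :=
    Continuous.integrable_of_hasCompactSupport (by fun_prop) hc.mul_left
  have h : ∀ m : ℂ, ∫ t, k t * fderiv ℝ φ t m = - ∫ t, fderiv ℝ k t m * φ t := fun m =>
    integral_mul_fderiv_eq_neg_fderiv_mul_of_integrable (i1 m) (i2 m) i3
      (fun x _ => (hk.differentiable (by simp)).differentiableAt)
      (fun x _ => (hφ.differentiable (by simp)).differentiableAt)
  have h1 := h 1
  have h2 := h Complex.I
  constructor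
  · have e1 : ∫ t, k t * db φ t = (∫ t, k t * fderiv ℝ φ t 1) +
        Complex.I * ∫ t, k t * fderiv ℝ φ t Complex.I := by
      rw [← integral_const_mul, ← integral_add (i2 _) ((i2 _).const_mul _)]
      congr 1; ext t; unfold db; ring
    have e2 : ∫ t, db k t * φ t = (∫ t, fderiv ℝ k t 1 * φ t) +
        Complex.I * ∫ t, fderiv ℝ k t Complex.I * φ t := by
      rw [← integral_const_mul, ← integral_add (i1 _) ((i1 _).const_mul _)]
      congr 1; ext t; unfold db; ring
    rw [e1, e2, h1, h2]; ring
  · have e1 : ∫ t, k t * dz φ t = (∫ t, k t * fderiv ℝ φ t 1) -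
        Complex.I * ∫ t, k t * fderiv ℝ φ t Complex.I := by
      rw [← integral_const_mul, ← integral_sub (i2 _) ((i2 _).const_mul _)]
      congr 1; ext t; unfold dz; ring
    have e2 : ∫ t, dz k t * φ t = (∫ t, fderiv ℝ k t 1 * φ t) -
        Complex.I * ∫ t, fderiv ℝ k t Complex.I * φ t := by
      rw [← integral_const_mul, ← integral_sub (i1 _) ((i1 _).const_mul _)]
      congr 1; ext t; unfold dz; ring
    rw [e1, e2, h1, h2]; ring

lemma norm_ck_le {ε : ℝ} (t : ℂ) : ‖ck ε t‖ ≤ ‖t⁻¹‖ := by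
  unfold ck
  rw [norm_mul, norm_inv, norm_inv, norm_Dn, RCLike.norm_conj]
  by_cases h : t = 0
  · simp [h]
  have := norm_pos_iff.2 h
  rw [← div_eq_mul_inv, div_le_iff₀ (by positivity), inv_mul_eq_div, le_div_iff₀ this]
  nlinarith [sq_nonneg ε]

lemma tendsto_ck {t : ℂ} (ht : t ≠ 0) {e : ℕ → ℝ} (he : Tendsto e atTop (𝓝 0)) :
    Tendsto (fun n => ck (e n) t) atTop (𝓝 t⁻¹) := by
  have h2 : starRingEnd ℂ t ≠ 0 := by simpa using ht
  have : Tendsto (fun n => Dn (e n) t) atTop (𝓝 (t * starRingEnd ℂ t)) := by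
    unfold Dn
    have := ((Complex.continuous_ofReal.tendsto _).comp he).pow 2
    simpa using (this.const_add (t * starRingEnd ℂ t))
  have := (this.inv₀ (mul_ne_zero ht h2)).const_mul (starRingEnd ℂ t)
  have e : t⁻¹ = starRingEnd ℂ t * (t * starRingEnd ℂ t)⁻¹ := by
    rw [mul_inv, mul_left_comm, mul_inv_cancel₀ h2, mul_one]
  rw [e]
  exact this

lemma ae_ne_zero : ∀ᵐ t : ℂ, t ≠ 0 := by simp [ae_iff, measure_singleton]

lemma tendsto_ck_int {ψ : ℂ → ℂ} (hψ : Continuous ψ) (hc : HasCompactSupport ψ) :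
    Integrable (fun t => t⁻¹ * ψ t) ∧
    Tendsto (fun n => ∫ t, ck (yn n) t * ψ t) atTop (𝓝 (∫ t, t⁻¹ * ψ t)) := by
  have hi : Integrable (fun t => t⁻¹ * ψ t) := by
    have := locInt_inv.integrable_smul_right_of_hasCompactSupport hψ hc
    simpa using this
  refine ⟨hi, ?_⟩
  refine tendsto_integral_of_dominated_convergence (fun t => ‖t⁻¹ * ψ t‖) (fun n => ?_) hi.norm
    (fun n => ?_) ?_
  · exact (((contDiff_ck (yn_pos n)).continuous).mul hψ).aestronglyMeasurable
  · refine Eventually.of_forall fun t => ?_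
    rw [norm_mul, norm_mul]
    gcongr
    exact norm_ck_le t
  · filter_upwards [ae_ne_zero] with t ht
    exact (tendsto_ck ht tendsto_one_div_add_atTop_nhds_zero_nat).mul_const _

end BeurlingAux

namespace BeurlingAux

lemma int_zero_of_rot {F : ℂ → ℂ} (h : ∀ t, F (Complex.I * t) = - F t) : ∫ t, F t = 0 := by
  have e := (rotation (Circle.exp (Real.pi / 2))).measurePreserving.integral_comp
    (rotation _).toHomeomorph.measurableEmbedding F
  have e2 : ∀ t, (rotation (Circle.exp (Real.pi / 2))) t = Complex.I * t := by
    intro t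
    rw [rotation_apply, Circle.coe_exp]
    push_cast
    rw [Complex.exp_pi_div_two_mul_I]
  simp only [e2, h, integral_neg] at e
  exact self_eq_neg.1 e.symm

lemma setInt_zero_of_rot {F : ℂ → ℂ} {s : Set ℂ} (hs : MeasurableSet s)
    (hI : ∀ t, Complex.I * t ∈ s ↔ t ∈ s) (h : ∀ t, F (Complex.I * t) = - F t) :
    ∫ t in s, F t = 0 := by
  rw [← integral_indicator hs]
  apply int_zero_of_rot
  intro t
  by_cases ht : t ∈ s
  · rw [indicator_of_mem ht, indicator_of_mem ((hI t).2 ht), h]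
  · rw [indicator_of_notMem ht, indicator_of_notMem (fun h => ht ((hI t).1 h))]; simp

lemma integrable_D1 : Integrable (fun s : ℂ => ((Dn 1 s) ^ 2)⁻¹) := by
  have h := integrable_rpow_neg_one_add_norm_sq (E := ℂ) (μ := volume) (r := 4) (by simp; norm_num)
  refine Integrable.mono' h ?_ (Eventually.of_forall fun s => ?_)
  · unfold Dn
    exact Measurable.aestronglyMeasurable (by fun_prop)
  · rw [norm_inv, norm_pow, norm_Dn]
    have : (-4 / 2 : ℝ) = -((2 : ℕ) : ℝ) := by norm_num
    rw [this, Real.rpow_neg (by positivity), Real.rpow_natCast, add_comm]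
    simp

/-- the constant in the Cauchy–Pompeiu formula -/
noncomputable def cP : ℂ := - (2 * ∫ s : ℂ, ((Dn 1 s) ^ 2)⁻¹)

lemma cauchy_db {φ : ℂ → ℂ} (hφ : ContDiff ℝ (⊤ : ℕ∞) φ) (hc : HasCompactSupport φ) :
    ∫ t, t⁻¹ * db φ t = cP * φ 0 := by
  have dφ := hφ.continuous_fderiv (by simp)
  have hdc : HasCompactSupport (db φ) := by
    unfold db
    exact (hc.fderiv_apply (𝕜 := ℝ) 1).add ((hc.fderiv_apply (𝕜 := ℝ) Complex.I).mul_left)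
  have h1 := (tendsto_ck_int (ψ := db φ) (by unfold db; fun_prop) hdc).2
  refine tendsto_nhds_unique h1 ?_
  obtain ⟨M, hM⟩ := hc.exists_bound_of_continuous hφ.continuous
  have h2 : ∀ n, ∫ t, ck (yn n) t * db φ t = - ∫ s, (2 * ((Dn 1 s) ^ 2)⁻¹) * φ (yn n • s) := by
    intro n
    have hy := yn_pos n
    rw [(ibp (contDiff_ck hy) hφ hc).1]
    congr 1
    have := Measure.integral_comp_smul (volume : Measure ℂ) (fun t => db (ck (yn n)) t * φ t) (yn n)
    rw [Complex.finrank_real_complex, abs_of_pos (by positivity)] at this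
    have e : ∫ t, db (ck (yn n)) t * φ t =
        (yn n ^ 2) • ∫ x : ℂ, db (ck (yn n)) (yn n • x) * φ (yn n • x) := by
      rw [this, smul_smul, mul_inv_cancel₀ (by positivity), one_smul]
    rw [e, ← integral_smul]
    congr 1; ext s
    rw [db_ck hy]
    have hD : Dn (yn n) (yn n • s) = (yn n : ℂ) ^ 2 * Dn 1 s := by
      unfold Dn; simp; ring
    rw [hD, Complex.real_smul]
    have hy' : (yn n : ℂ) ≠ 0 := by exact_mod_cast hy.ne'
    have := Dn_ne one_pos s
    push_cast
    field_simp
  simp_rw [h2]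
  have h3 : cP * φ 0 = - ∫ s, (2 * ((Dn 1 s) ^ 2)⁻¹) * φ 0 := by
    rw [integral_mul_const, integral_const_mul]; unfold cP; ring
  rw [h3]
  refine Tendsto.neg ?_
  refine tendsto_integral_of_dominated_convergence (fun s => ‖2 * ((Dn 1 s) ^ 2)⁻¹‖ * M)
    (fun n => ?_) ((integrable_D1.const_mul 2).norm.mul_const M) (fun n => ?_) ?_
  · refine (integrable_D1.const_mul 2).1.mul ?_
    have := hφ.continuous
    exact Continuous.aestronglyMeasurable (by fun_prop)
  · refine Eventually.of_forall fun s => ?_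
    rw [norm_mul]
    gcongr
    exact hM _
  · refine Eventually.of_forall fun s => ?_
    refine Tendsto.const_mul _ ?_
    have ht : Tendsto (fun n => yn n • s) atTop (𝓝 ((0 : ℝ) • s)) :=
      Tendsto.smul_const (tendsto_one_div_add_atTop_nhds_zero_nat (𝕜 := ℝ)) s
    have := (hφ.continuous.tendsto _).comp ht
    simpa [Function.comp_def] using this

lemma lip_bound {φ : ℂ → ℂ} (hφ : ContDiff ℝ (⊤ : ℕ∞) φ) (hc : HasCompactSupport φ) :
    ∃ K : ℝ, 0 ≤ K ∧ ∀ s t, ‖φ s - φ t‖ ≤ K * ‖s - t‖ := by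
  obtain ⟨C, hC⟩ := ContDiff.lipschitzWith_of_hasCompactSupport hc hφ (by simp)
  exact ⟨C, C.2, fun s t => by simpa [dist_eq_norm] using hC.dist_le_mul s t⟩

lemma integrableOn_inv_ball (R : ℝ) : IntegrableOn (fun t : ℂ => ‖t⁻¹‖) (ball 0 R) := by
  have := (locInt_inv.integrableOn_isCompact (isCompact_closedBall (0:ℂ) R)).norm
  exact IntegrableOn.mono_set this ball_subset_closedBall

lemma diffquot_bound {φ : ℂ → ℂ} {K : ℝ} (hK : ∀ s t, ‖φ s - φ t‖ ≤ K * ‖s - t‖) (t : ℂ) :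
    ‖(φ t - φ 0) / t ^ 2‖ ≤ K * ‖t⁻¹‖ := by
  by_cases h : t = 0
  · simp [h]
  have h0 := norm_pos_iff.2 h
  have := hK t 0
  rw [sub_zero] at this
  rw [norm_div, norm_pow, norm_inv, div_le_iff₀ (by positivity)]
  calc _ ≤ K * ‖t‖ := this
    _ = _ := by field_simp

lemma ckk_bound {ε : ℝ} (t : ℂ) :
    ‖(starRingEnd ℂ t) ^ 2 * ((Dn ε t) ^ 2)⁻¹‖ ≤ ‖t⁻¹‖ ^ 2 := by
  have := norm_ck_le (ε := ε) t
  unfold ck at this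
  rw [← inv_pow, ← mul_pow, norm_pow]
  gcongr

lemma cauchy_dz {φ : ℂ → ℂ} (hφ : ContDiff ℝ (⊤ : ℕ∞) φ) (hc : HasCompactSupport φ) {R : ℝ}
    (hR : ∀ t, φ t ≠ 0 → t ∈ ball (0:ℂ) R) :
    ∫ t, t⁻¹ * dz φ t = 2 * ∫ t in ball (0:ℂ) R, (φ t - φ 0) / t ^ 2 := by
  have dφ := hφ.continuous_fderiv (by simp)
  have hdc : HasCompactSupport (dz φ) := by
    unfold dz
    exact (hc.fderiv_apply (𝕜 := ℝ) 1).sub ((hc.fderiv_apply (𝕜 := ℝ) Complex.I).mul_left)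
  have h1 := (tendsto_ck_int (ψ := dz φ) (by unfold dz; fun_prop) hdc).2
  refine tendsto_nhds_unique h1 ?_
  obtain ⟨K, hK0, hK⟩ := lip_bound hφ hc
  have cφ := hφ.continuous
  have cck : ∀ n, Continuous (fun t => (starRingEnd ℂ t) ^ 2 * ((Dn (yn n) t) ^ 2)⁻¹) := by
    intro n
    have : Continuous (Dn (yn n)) := by
      unfold Dn; exact (continuous_id.mul Complex.continuous_conj).add continuous_const
    exact (Complex.continuous_conj.pow 2).mul
      ((this.pow 2).inv₀ fun t => pow_ne_zero 2 (Dn_ne (yn_pos n) t))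
  have ic : ∀ {f : ℂ → ℂ}, Continuous f → IntegrableOn f (ball 0 R) := fun hf =>
    (hf.locallyIntegrable.integrableOn_isCompact (isCompact_closedBall (0:ℂ) R)).mono_set
      ball_subset_closedBall
  have h2 : ∀ n, ∫ t, ck (yn n) t * dz φ t = 2 * ∫ t in ball (0:ℂ) R,
      (starRingEnd ℂ t) ^ 2 * ((Dn (yn n) t) ^ 2)⁻¹ * (φ t - φ 0) := by
    intro n
    have hy := yn_pos n
    rw [(ibp (contDiff_ck hy) hφ hc).2]
    have e1 : ∫ t in ball (0:ℂ) R, (starRingEnd ℂ t) ^ 2 * ((Dn (yn n) t) ^ 2)⁻¹ * φ 0 = 0 := by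
      refine setInt_zero_of_rot measurableSet_ball (by simp) ?_
      intro t
      have : Dn (yn n) (Complex.I * t) = Dn (yn n) t := by simp [Dn_eq]
      rw [this, map_mul, mul_pow, Complex.conj_I, neg_sq, Complex.I_sq]; ring
    simp_rw [mul_sub]
    have j1 : IntegrableOn (fun t => (starRingEnd ℂ t) ^ 2 * ((Dn (yn n) t) ^ 2)⁻¹ * φ t) (ball 0 R) :=
      ic ((cck n).mul cφ)
    have j2 : IntegrableOn (fun t => (starRingEnd ℂ t) ^ 2 * ((Dn (yn n) t) ^ 2)⁻¹ * φ 0) (ball 0 R) :=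
      ic ((cck n).mul continuous_const)
    rw [integral_sub j1 j2, e1, sub_zero,
      ← integral_const_mul, ← integral_neg,
      ← setIntegral_eq_integral_of_forall_compl_eq_zero (s := ball (0:ℂ) R)]
    · congr 1; ext t; rw [dz_ck hy]; ring
    · intro t ht
      have : φ t = 0 := by_contra fun h => ht (hR t h)
      simp [this]
  simp_rw [h2]
  refine Tendsto.const_mul _ ?_
  refine tendsto_integral_of_dominated_convergence (fun t => K * ‖t⁻¹‖)
    (fun n => ?_) ((integrableOn_inv_ball R).const_mul K) (fun n => ?_) ?_
  · exact ((cck n).mul (cφ.sub continuous_const)).aestronglyMeasurable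
  · refine Eventually.of_forall fun t => ?_
    refine le_trans ?_ (diffquot_bound hK t)
    rw [norm_mul, div_eq_inv_mul, norm_mul (t ^ 2)⁻¹]
    refine mul_le_mul_of_nonneg_right ?_ (norm_nonneg _)
    simpa using ckk_bound t
  · filter_upwards [ae_restrict_of_ae ae_ne_zero] with t ht
    have := ((tendsto_ck ht (tendsto_one_div_add_atTop_nhds_zero_nat (𝕜 := ℝ))).pow 2).mul_const
      (φ t - φ 0)
    rw [inv_pow, inv_mul_eq_div] at this
    refine this.congr fun n => ?_
    unfold ck yn
    rw [mul_pow, inv_pow]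

end BeurlingAux

namespace BeurlingAux

/-- Cauchy transform -/
noncomputable def cu (g : ℂ → ℂ) (z : ℂ) : ℂ := ∫ t, t⁻¹ * g (z - t)

/-- the principal value (without the factor) -/
noncomputable def Jg (g : ℂ → ℂ) (z : ℂ) : ℂ := ∫ t in ball (0:ℂ) 2, (g (z - t) - g z) / t ^ 2

open Convolution in
lemma cu_eq (g : ℂ → ℂ) : cu g = ((fun t : ℂ => t⁻¹) ⋆[ContinuousLinearMap.mul ℝ ℂ] g) := by
  ext z; rfl

lemma contDiff_cu {g : ℂ → ℂ} (hg : ContDiff ℝ (⊤ : ℕ∞) g) (hc : HasCompactSupport g) :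
    ContDiff ℝ (⊤ : ℕ∞) (cu g) := by
  rw [cu_eq]
  exact hc.contDiff_convolution_right _ locInt_inv hg

lemma refl_smooth {g : ℂ → ℂ} (hg : ContDiff ℝ (⊤ : ℕ∞) g) (hc : HasCompactSupport g) (z : ℂ) :
    ContDiff ℝ (⊤ : ℕ∞) (fun t => g (z - t)) ∧ HasCompactSupport (fun t => g (z - t)) ∧
    ∀ t m, fderiv ℝ (fun t => g (z - t)) t m = - fderiv ℝ g (z - t) m := by
  refine ⟨hg.comp (contDiff_const.sub contDiff_id),
    hc.comp_homeomorph (Homeomorph.subLeft z), fun t m => ?_⟩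
  have h1 : HasFDerivAt g (fderiv ℝ g (z - t)) (z - t) :=
    (hg.differentiable (by simp)).differentiableAt.hasFDerivAt
  have h2 : HasFDerivAt (fun t : ℂ => z - t) (-ContinuousLinearMap.id ℝ ℂ) t :=
    (hasFDerivAt_id (𝕜 := ℝ) t).const_sub z
  have := (h1.comp t h2).fderiv
  change fderiv ℝ (g ∘ fun t => z - t) t m = _
  rw [this]; simp

lemma fderiv_cu {g : ℂ → ℂ} (hg : ContDiff ℝ (⊤ : ℕ∞) g) (hc : HasCompactSupport g) (z m : ℂ) :
    Integrable (fun t => t⁻¹ * fderiv ℝ (fun t => g (z - t)) t m) ∧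
    fderiv ℝ (cu g) z m = - ∫ t, t⁻¹ * fderiv ℝ (fun t => g (z - t)) t m := by
  obtain ⟨s1, s2, s3⟩ := refl_smooth hg hc z
  have dφ := s1.continuous_fderiv (by simp)
  have hi : Integrable (fun t => t⁻¹ * fderiv ℝ (fun t => g (z - t)) t m) :=
    (tendsto_ck_int (by fun_prop) (s2.fderiv_apply (𝕜 := ℝ) m)).1
  refine ⟨hi, ?_⟩
  have h := hc.hasFDerivAt_convolution_right (ContinuousLinearMap.mul ℝ ℂ) (μ := volume) (locInt_inv)
    (hg.of_le (by simp)) z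
  rw [← cu_eq] at h
  rw [h.fderiv]
  have hci := (hc.fderiv (𝕜 := ℝ)).convolutionExists_right
    ((ContinuousLinearMap.mul ℝ ℂ).precompR ℂ) (μ := volume) locInt_inv
    (hg.continuous_fderiv (by simp)) z
  unfold convolution
  rw [ContinuousLinearMap.integral_apply hci, ← integral_neg]
  congr 1; ext t
  rw [s3]
  simp

lemma db_cu {g : ℂ → ℂ} (hg : ContDiff ℝ (⊤ : ℕ∞) g) (hc : HasCompactSupport g) (z : ℂ) :
    db (cu g) z = -cP * g z := by
  obtain ⟨s1, s2, s3⟩ := refl_smooth hg hc z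
  have h := cauchy_db s1 s2
  obtain ⟨i1, e1⟩ := fderiv_cu hg hc z 1
  obtain ⟨i2, e2⟩ := fderiv_cu hg hc z Complex.I
  rw [sub_zero] at h
  unfold db
  rw [e1, e2, neg_mul, ← h, mul_neg, ← neg_add, ← integral_const_mul, ← integral_add i1 (i2.const_mul _)]
  congr 2; ext t; unfold db; ring

lemma dz_cu {g : ℂ → ℂ} (hg : ContDiff ℝ (⊤ : ℕ∞) g) (hc : HasCompactSupport g)
    (hs : tsupport g ⊆ ball (0:ℂ) 1) {z : ℂ} (hz : z ∈ ball (0:ℂ) 1) :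
    dz (cu g) z = -2 * Jg g z := by
  obtain ⟨s1, s2, s3⟩ := refl_smooth hg hc z
  have h := cauchy_dz s1 s2 (R := 2) (fun t ht => by
    have h1 : z - t ∈ ball (0:ℂ) 1 := hs (subset_tsupport _ ht)
    simp only [mem_ball_zero_iff] at *
    calc ‖t‖ = ‖z - (z - t)‖ := by ring_nf
      _ ≤ ‖z‖ + ‖z - t‖ := norm_sub_le _ _
      _ < 2 := by linarith)
  obtain ⟨i1, e1⟩ := fderiv_cu hg hc z 1
  obtain ⟨i2, e2⟩ := fderiv_cu hg hc z Complex.I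
  rw [sub_zero] at h
  unfold Jg
  unfold dz
  rw [e1, e2, neg_mul, ← h, mul_neg, sub_neg_eq_add, neg_add_eq_sub, ← integral_const_mul,
    ← integral_sub (i2.const_mul _) i1, ← integral_neg]
  congr 1; ext t; unfold dz; ring

lemma pv {g : ℂ → ℂ} (hg : ContDiff ℝ (⊤ : ℕ∞) g) (hc : HasCompactSupport g)
    (hs : tsupport g ⊆ ball (0:ℂ) 1) {z : ℂ} (hz : z ∈ ball (0:ℂ) 1) :
    Tendsto (fun ε : ℝ => ∫ w in ball (0:ℂ) 1 \ ball z ε, g w / (w - z) ^ 2)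
      (𝓝[>] 0) (𝓝 (Jg g z)) := by
  obtain ⟨s1, s2, s3⟩ := refl_smooth hg hc z
  obtain ⟨K, hK0, hK⟩ := lip_bound s1 s2
  have cg := hg.continuous
  obtain ⟨M, hM⟩ := hc.exists_bound_of_continuous cg
  have hb : ∀ t, ‖(g (z - t) - g z) / t ^ 2‖ ≤ K * ‖t⁻¹‖ := by
    intro t
    have := diffquot_bound hK t
    simpa using this
  have hmeas : Measurable (fun t : ℂ => (g (z - t) - g z) / t ^ 2) := by fun_prop
  have key : ∀ ε : ℝ, 0 < ε → ∫ w in ball (0:ℂ) 1 \ ball z ε, g w / (w - z) ^ 2 =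
      ∫ t in ball (0:ℂ) 2, ((ball (0:ℂ) ε)ᶜ).indicator (fun t => (g (z - t) - g z) / t ^ 2) t := by
    intro ε hε
    have mA : MeasurableSet (ball (0:ℂ) 2 ∩ (ball (0:ℂ) ε)ᶜ) :=
      measurableSet_ball.inter measurableSet_ball.compl
    rw [setIntegral_indicator measurableSet_ball.compl,
      ← integral_indicator (measurableSet_ball.diff measurableSet_ball),
      ← integral_sub_left_eq_self _ volume z]
    have e1 : ∀ t, (ball (0:ℂ) 1 \ ball z ε).indicator (fun w => g w / (w - z) ^ 2) (z - t) =
        (ball (0:ℂ) 2 ∩ (ball (0:ℂ) ε)ᶜ).indicator (fun t => g (z - t) / t ^ 2) t := by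
      intro t
      have hiff : z - t ∈ ball z ε ↔ t ∈ ball (0:ℂ) ε := by simp [dist_eq_norm]
      by_cases h1 : z - t ∈ ball (0:ℂ) 1
      · have h2 : t ∈ ball (0:ℂ) 2 := by
          simp only [mem_ball_zero_iff] at *
          calc ‖t‖ = ‖z - (z - t)‖ := by ring_nf
            _ ≤ ‖z‖ + ‖z - t‖ := norm_sub_le _ _
            _ < 2 := by linarith
        by_cases h3 : t ∈ ball (0:ℂ) ε
        · rw [indicator_of_notMem (fun h => h.2 (hiff.2 h3)), indicator_of_notMem (fun h => h.2 h3)]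
        · have q1 : z - t ∈ ball (0:ℂ) 1 \ ball z ε := ⟨h1, fun h => h3 (hiff.1 h)⟩
          have q2 : t ∈ ball (0:ℂ) 2 ∩ (ball (0:ℂ) ε)ᶜ := ⟨h2, h3⟩
          rw [indicator_of_mem q1, indicator_of_mem q2]
          congr 1; ring
      · have h0 : g (z - t) = 0 := by
          by_contra h
          exact h1 (hs (subset_tsupport _ h))
        rw [indicator_of_notMem (fun h => h1 h.1)]
        symm
        apply indicator_apply_eq_zero.2
        intro _; simp [h0]
    simp_rw [e1]
    rw [integral_indicator mA]
    have e2 : ∫ t in ball (0:ℂ) 2 ∩ (ball (0:ℂ) ε)ᶜ, g z / t ^ 2 = 0 := by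
      refine setInt_zero_of_rot mA (by simp) fun t => ?_
      rw [mul_pow, Complex.I_sq]; ring
    have hbd : ∀ {f : ℂ → ℂ}, Measurable f → (∀ t, ‖f t‖ ≤ M) →
        IntegrableOn (fun t => f t / t ^ 2) (ball (0:ℂ) 2 ∩ (ball (0:ℂ) ε)ᶜ) := by
      intro f hf hfb
      refine Measure.integrableOn_of_bounded (M := M / ε ^ 2) ?_ ?_ ?_
      · exact ne_top_of_le_ne_top measure_ball_lt_top.ne (measure_mono inter_subset_left)
      · exact Measurable.aestronglyMeasurable (by fun_prop)
      · refine (ae_restrict_iff' mA).2 (Eventually.of_forall fun t ht => ?_)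
        have : ε ≤ ‖t‖ := by simpa using ht.2
        rw [norm_div, norm_pow]
        have hM0 : 0 ≤ M := (norm_nonneg _).trans (hfb 0)
        gcongr
        exact hfb t
    simp_rw [_root_.sub_div]
    rw [integral_sub (hbd (f := fun t => g (z - t)) (by fun_prop) (fun t => hM _))
      (hbd (f := fun _ => g z) (by fun_prop) (fun t => hM _)), e2, sub_zero]
  have : Tendsto (fun ε : ℝ => ∫ t in ball (0:ℂ) 2,
      ((ball (0:ℂ) ε)ᶜ).indicator (fun t => (g (z - t) - g z) / t ^ 2) t) (𝓝[>] 0) (𝓝 (Jg g z)) := by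
    unfold Jg
    refine tendsto_integral_filter_of_dominated_convergence (fun t => K * ‖t⁻¹‖)
      (Eventually.of_forall fun ε => ?_) (Eventually.of_forall fun ε => ?_)
      ((integrableOn_inv_ball 2).const_mul K) ?_
    · exact (hmeas.indicator measurableSet_ball.compl).aestronglyMeasurable
    · refine Eventually.of_forall fun t => ?_
      exact (norm_indicator_le_norm_self _ _).trans (hb t)
    · filter_upwards [ae_restrict_of_ae ae_ne_zero] with t ht
      refine tendsto_const_nhds.congr' ?_
      have : ∀ᶠ ε : ℝ in 𝓝[>] 0, ε < ‖t‖ :=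
        nhdsWithin_le_nhds (Iio_mem_nhds (norm_pos_iff.2 ht))
      filter_upwards [this] with ε hε
      rw [indicator_of_mem]
      simpa using hε.le
  refine this.congr' ?_
  filter_upwards [self_mem_nhdsWithin] with ε hε
  exact (key ε hε).symm

end BeurlingAux

namespace BeurlingAux

lemma cu_bound {g : ℂ → ℂ} (hg : ContDiff ℝ (⊤ : ℕ∞) g) (hc : HasCompactSupport g)
    (hs : tsupport g ⊆ ball (0:ℂ) 1) {z : ℂ} (hz : 2 ≤ ‖z‖) :
    ‖cu g z‖ ≤ 2 / ‖z‖ * ∫ t, ‖g t‖ := by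
  have cg := hg.continuous
  have hi : Integrable g := cg.integrable_of_hasCompactSupport hc
  have hi2 : Integrable (fun t => ‖g (z - t)‖) := (hi.comp_sub_left z).norm
  unfold cu
  calc ‖∫ t, t⁻¹ * g (z - t)‖ ≤ ∫ t, 2 / ‖z‖ * ‖g (z - t)‖ := by
        refine norm_integral_le_of_norm_le (hi2.const_mul _) (Eventually.of_forall fun t => ?_)
        rw [norm_mul, norm_inv]
        by_cases h : g (z - t) = 0
        · simp [h]
        have h1 : z - t ∈ ball (0:ℂ) 1 := hs (subset_tsupport _ h)
        rw [mem_ball_zero_iff] at h1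
        have h2 : ‖z‖ ≤ ‖z - t‖ + ‖t‖ := by simpa using norm_add_le (z - t) t
        have h3 : ‖z‖ / 2 ≤ ‖t‖ := by linarith
        gcongr
        rw [show 2 / ‖z‖ = (‖z‖ / 2)⁻¹ by rw [inv_div]]
        gcongr
    _ = _ := by
        rw [integral_const_mul, integral_sub_left_eq_self (fun t => ‖g t‖) volume z]

lemma db_mul {a b : ℂ → ℂ} {x : ℂ} (ha : DifferentiableAt ℝ a x) (hb : DifferentiableAt ℝ b x) :
    db (fun x => a x * b x) x = a x * db b x + db a x * b x := by
  unfold db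
  rw [fderiv_fun_mul ha hb]
  simp; ring

/-- a cutoff function -/
lemma cutoff : ∃ χ : ℂ → ℂ, ContDiff ℝ (⊤ : ℕ∞) χ ∧ HasCompactSupport χ ∧ (∀ x, ‖χ x‖ ≤ 1) ∧
    (∀ x, ‖x‖ ≤ 1 → χ x = 1) ∧ (∀ x, 2 ≤ ‖x‖ → χ x = 0) := by
  let f : ContDiffBump (0:ℂ) := ⟨1, 2, by norm_num, by norm_num⟩
  refine ⟨fun x => (f x : ℂ), Complex.ofRealCLM.contDiff.comp f.contDiff,
    f.hasCompactSupport.comp_left (g := Complex.ofReal) (by simp), fun x => ?_, fun x hx => ?_, fun x hx => ?_⟩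
  · rw [Complex.norm_real, Real.norm_of_nonneg f.nonneg]; exact f.le_one
  · change ((f x : ℝ) : ℂ) = 1
    rw [f.one_of_mem_closedBall (by simpa [f] using hx)]; simp
  · change ((f x : ℝ) : ℂ) = 0
    rw [f.zero_of_le_dist (by simpa [f] using hx)]; simp

lemma unweighted {p : ℝ} (hp : 1 < p) : ∃ C : ℝ≥0∞, C ≠ ⊤ ∧ ∀ g : ℂ → ℂ,
    ContDiff ℝ (⊤ : ℕ∞) g → HasCompactSupport g → tsupport g ⊆ ball (0:ℂ) 1 →
    ∫⁻ z in ball (0:ℂ) 1, ‖Jg g z‖ₑ ^ p ≤ C * ∫⁻ z, ‖g z‖ₑ ^ p := by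
  have hp0 : 0 < p := by linarith
  obtain ⟨C, hC, H⟩ := dz_le_db hp
  obtain ⟨χ, χs, χc, χ1, χi, χo⟩ := cutoff
  refine ⟨C * (2 ^ (p - 1) * ‖cP‖ₑ ^ p), ?_, fun g hg hc hs => ?_⟩
  · have : ‖cP‖ₑ ^ p ≠ ⊤ := ENNReal.rpow_ne_top_of_nonneg hp0.le enorm_ne_top
    have : (2 : ℝ≥0∞) ^ (p - 1) ≠ ⊤ := ENNReal.rpow_ne_top_of_nonneg (by linarith) (by simp)
    finiteness
  set u := cu g with hu
  have us : ContDiff ℝ (⊤ : ℕ∞) u := contDiff_cu hg hc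
  have ud : Differentiable ℝ u := us.differentiable (by simp)
  have χd : Differentiable ℝ χ := χs.differentiable (by simp)
  obtain ⟨M, hM⟩ : ∃ M, ∀ x, ‖db χ x‖ ≤ M := by
    have h := χs.continuous_fderiv (by simp)
    refine HasCompactSupport.exists_bound_of_continuous (f := db χ) ?_ (by unfold db; fun_prop)
    unfold db
    exact (χc.fderiv_apply (𝕜 := ℝ) 1).add ((χc.fderiv_apply (𝕜 := ℝ) Complex.I).mul_left)
  have hM0 : 0 ≤ M := (norm_nonneg _).trans (hM 0)
  set G := ∫ t, ‖g t‖ with hG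
  have hG0 : 0 ≤ G := integral_nonneg fun _ => norm_nonneg _
  have step : ∀ R : ℝ, 2 ≤ R → ∫⁻ z in ball (0:ℂ) 1, ‖Jg g z‖ₑ ^ p ≤
      C * (2 ^ (p - 1) * (‖cP‖ₑ ^ p * (∫⁻ z, ‖g z‖ₑ ^ p) +
        ENNReal.ofReal ((2 * G * M) ^ p * 4 * Real.pi * R ^ (-(2 * p - 2))))) := by
    intro R hR
    have hR0 : 0 < R := by linarith
    set χR : ℂ → ℂ := fun x => χ (R⁻¹ • x) with hχR
    have χRs : ContDiff ℝ (⊤ : ℕ∞) χR := χs.comp (contDiff_const_smul _)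
    have χRd : Differentiable ℝ χR := χRs.differentiable (by simp)
    have χRc : HasCompactSupport χR :=
      χc.comp_homeomorph (Homeomorph.smulOfNeZero R⁻¹ (by positivity))
    have hdb : ∀ x, ‖db χR x‖ ≤ M / R := by
      intro x
      have : db χR x = (R⁻¹ : ℂ) * db χ (R⁻¹ • x) := by
        have h1 : HasFDerivAt χ (fderiv ℝ χ (R⁻¹ • x)) (R⁻¹ • x) := (χd _).hasFDerivAt
        have h2 : HasFDerivAt (fun x : ℂ => R⁻¹ • x) (R⁻¹ • ContinuousLinearMap.id ℝ ℂ) x :=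
          (hasFDerivAt_id (𝕜 := ℝ) x).const_smul R⁻¹
        have h3 := (h1.comp x h2).fderiv
        have h4 : fderiv ℝ χR x = _ := h3
        unfold db
        rw [h4]
        simp; ring
      rw [this, norm_mul, ← Complex.ofReal_inv, Complex.norm_of_nonneg (by positivity),
        inv_mul_eq_div]
      gcongr
      exact hM _
    have nrm : ∀ x : ℂ, ‖R⁻¹ • x‖ = ‖x‖ / R := by
      intro x; rw [norm_smul, Real.norm_of_nonneg (by positivity), inv_mul_eq_div]
    have χin : ∀ x, ‖x‖ < R → χR =ᶠ[𝓝 x] fun _ => 1 := by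
      intro x hx
      have : ∀ᶠ y in 𝓝 x, ‖y‖ < R := continuous_norm.continuousAt.eventually_lt_const hx
      filter_upwards [this] with y hy
      apply χi
      rw [nrm, div_le_one hR0]; exact hy.le
    have χout : ∀ x, 2 * R < ‖x‖ → χR =ᶠ[𝓝 x] fun _ => 0 := by
      intro x hx
      have : ∀ᶠ y in 𝓝 x, 2 * R < ‖y‖ := continuous_norm.continuousAt.eventually_const_lt hx
      filter_upwards [this] with y hy
      apply χo
      rw [nrm, le_div_iff₀ hR0]; exact hy.le
    have hz1 : ∀ z ∈ ball (0:ℂ) 1, ‖Jg g z‖ₑ ^ p ≤ ‖dz (fun x => χR x * u x) z‖ₑ ^ p := by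
      intro z hz
      have hz' : ‖z‖ < R := by rw [mem_ball_zero_iff] at hz; linarith
      have e : (fun x => χR x * u x) =ᶠ[𝓝 z] u := by
        filter_upwards [χin z hz'] with y hy
        rw [hy, one_mul]
      have : dz (fun x => χR x * u x) z = dz u z := by unfold dz; rw [e.fderiv_eq]
      rw [this, dz_cu hg hc hs hz]
      gcongr
      rw [← ofReal_norm, ← ofReal_norm]
      apply ENNReal.ofReal_le_ofReal
      rw [norm_mul]
      have := norm_nonneg (Jg g z)
      norm_num; linarith
    have hz2 : ∀ z, ‖db χR z * u z‖ₑ ^ p ≤ (closedBall (0:ℂ) (2 * R)).indicator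
        (fun _ => ENNReal.ofReal ((2 * G * M) ^ p * R ^ (-(2 * p)))) z := by
      intro z
      have zero : ∀ c : ℂ, χR =ᶠ[𝓝 z] (fun _ => c) → ‖db χR z * u z‖ₑ ^ p = 0 := by
        intro c h
        have : db χR z = 0 := by unfold db; rw [h.fderiv_eq]; simp
        rw [this]; simp [hp0]
      rcases lt_or_ge ‖z‖ R with h | h
      · rw [zero 1 (χin z h)]; exact zero_le
      rcases lt_or_ge (2 * R) ‖z‖ with h' | h'
      · rw [zero 0 (χout z h')]; exact zero_le
      rw [indicator_of_mem (by simpa using h'), ← ofReal_norm,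
        ENNReal.ofReal_rpow_of_nonneg (norm_nonneg _) hp0.le]
      apply ENNReal.ofReal_le_ofReal
      have hb : ‖db χR z * u z‖ ≤ (2 * G * M) * R ^ (-2 : ℝ) := by
        rw [norm_mul]
        calc ‖db χR z‖ * ‖u z‖ ≤ (M / R) * (2 / R * G) := by
              gcongr
              · exact hdb z
              · refine (cu_bound hg hc hs (by linarith)).trans ?_
                gcongr
          _ = _ := by
              rw [Real.rpow_neg hR0.le, Real.rpow_two]; field_simp
      calc _ ≤ ((2 * G * M) * R ^ (-2 : ℝ)) ^ p := by gcongr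
        _ = _ := by
          rw [Real.mul_rpow (by positivity) (by positivity), ← Real.rpow_mul hR0.le]
          ring_nf
    have m1 : Measurable (fun z => ‖db χR z * u z‖ₑ ^ p) := by
      have h := χRs.continuous_fderiv (by simp)
      have : Continuous (fun z => db χR z * u z) := by
        have := us.continuous
        unfold db; fun_prop
      exact this.measurable.enorm.pow_const p
    calc ∫⁻ z in ball (0:ℂ) 1, ‖Jg g z‖ₑ ^ p
        ≤ ∫⁻ z in ball (0:ℂ) 1, ‖dz (fun x => χR x * u x) z‖ₑ ^ p :=
          setLIntegral_mono' measurableSet_ball hz1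
      _ ≤ ∫⁻ z, ‖dz (fun x => χR x * u x) z‖ₑ ^ p := setLIntegral_le_lintegral _ _
      _ ≤ C * ∫⁻ z, ‖db (fun x => χR x * u x) z‖ₑ ^ p := H _ (χRs.mul us) χRc.mul_right
      _ ≤ C * ∫⁻ z, 2 ^ (p - 1) * (‖cP‖ₑ ^ p * ‖g z‖ₑ ^ p + ‖db χR z * u z‖ₑ ^ p) := by
          gcongr with z
          rw [db_mul (χRd z) (ud z), db_cu hg hc]
          calc _ ≤ (‖cP‖ₑ * ‖g z‖ₑ + ‖db χR z * u z‖ₑ) ^ p := by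
                gcongr
                refine (enorm_add_le _ _).trans ?_
                gcongr
                rw [enorm_mul, enorm_mul, enorm_neg]
                have : ‖χR z‖ₑ ≤ 1 := by
                  rw [← ofReal_norm]; exact ENNReal.ofReal_le_one.2 (χ1 _)
                calc _ ≤ 1 * (‖cP‖ₑ * ‖g z‖ₑ) := by gcongr
                  _ = _ := one_mul _
            _ ≤ _ := by
                refine (add_rpow_le' hp _ _).trans ?_
                rw [ENNReal.mul_rpow_of_nonneg _ _ hp0.le]
      _ = C * (2 ^ (p - 1) * (‖cP‖ₑ ^ p * (∫⁻ z, ‖g z‖ₑ ^ p) + ∫⁻ z, ‖db χR z * u z‖ₑ ^ p)) := by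
          have := hg.continuous.measurable
          rw [lintegral_const_mul _ (by fun_prop), lintegral_add_right _ m1,
            lintegral_const_mul _ (by fun_prop)]
      _ ≤ _ := by
          gcongr
          refine (lintegral_mono hz2).trans ?_
          rw [lintegral_indicator measurableSet_closedBall, setLIntegral_const,
            Complex.volume_closedBall, ← ENNReal.ofReal_pow (by positivity),
            show ((NNReal.pi : ℝ≥0∞)) = ENNReal.ofReal Real.pi by
              rw [ENNReal.ofReal, ← NNReal.coe_real_pi, Real.toNNReal_coe],
            ← ENNReal.ofReal_mul (by positivity),
            ← ENNReal.ofReal_mul (by positivity)]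
          apply ENNReal.ofReal_le_ofReal
          apply le_of_eq
          rw [show -(2 * p - 2) = -(2 * p) + 2 by ring, Real.rpow_add hR0, Real.rpow_two]
          ring
  have lim : Tendsto (fun n : ℕ => C * (2 ^ (p - 1) * (‖cP‖ₑ ^ p * (∫⁻ z, ‖g z‖ₑ ^ p) +
        ENNReal.ofReal ((2 * G * M) ^ p * 4 * Real.pi * (n : ℝ) ^ (-(2 * p - 2)))))) atTop
      (𝓝 (C * (2 ^ (p - 1) * (‖cP‖ₑ ^ p * (∫⁻ z, ‖g z‖ₑ ^ p) + ENNReal.ofReal 0)))) := by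
    refine ENNReal.Tendsto.const_mul (ENNReal.Tendsto.const_mul (tendsto_const_nhds.add ?_) ?_) ?_
    · refine ENNReal.tendsto_ofReal ?_
      have := (tendsto_rpow_neg_atTop (y := 2 * p - 2) (by linarith)).comp tendsto_natCast_atTop_atTop
      simpa [Function.comp_def] using (this.const_mul ((2 * G * M) ^ p * 4 * Real.pi))
    · right; exact ENNReal.rpow_ne_top_of_nonneg (by linarith) (by simp)
    · right; exact hC
  have := ge_of_tendsto lim (b := ∫⁻ z in ball (0:ℂ) 1, ‖Jg g z‖ₑ ^ p) (by
    filter_upwards [eventually_ge_atTop 2] with n hn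
    exact step n (by exact_mod_cast hn))
  simpa [mul_assoc] using this

end BeurlingAux

namespace BeurlingAux

/-- scaling kernel -/
noncomputable def kl (a : ℝ) (l : ℂ) : ℝ := |‖l‖ ^ a - 1| / ‖l - 1‖ ^ 2

lemma kl_nonneg (a : ℝ) (l : ℂ) : 0 ≤ kl a l := by unfold kl; positivity

lemma measurable_kl (a : ℝ) : Measurable (kl a) := by
  unfold kl
  have : Measurable (fun l : ℂ => ‖l‖ ^ a) := measurable_norm.pow_const a
  simp_rw [← Real.norm_eq_abs]
  fun_prop

lemma kl_bound {a : ℝ} (ha : 0 < a) (ha1 : a < 1) (l : ℂ) :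
    kl a l * ‖l‖ ^ (-(2 * a)) ≤ (ball (0:ℂ) 1).indicator (fun l => 4 * ‖l‖ ^ (-(2 * a))) l
      + (ball (0:ℂ) 4).indicator (fun t => 4 * ‖t⁻¹‖) (l - 1) + 32 * (1 + ‖l‖) ^ (-(2 + a)) := by
  have n1 : 0 ≤ (ball (0:ℂ) 1).indicator (fun l => 4 * ‖l‖ ^ (-(2 * a))) l :=
    indicator_nonneg (fun _ _ => by positivity) _
  have n2 : 0 ≤ (ball (0:ℂ) 4).indicator (fun t => 4 * ‖t⁻¹‖) (l - 1) :=
    indicator_nonneg (fun _ _ => by positivity) _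
  have n3 : 0 ≤ 32 * (1 + ‖l‖) ^ (-(2 + a)) := by positivity
  have tri1 : ‖l‖ ≤ ‖l - 1‖ + 1 := by simpa using norm_add_le (l - 1) 1
  have tri2 : 1 ≤ ‖l‖ + ‖l - 1‖ := by
    have := norm_sub_le l (l - 1)
    simpa using this
  have tri3 : ‖l - 1‖ ≤ ‖l‖ + 1 := by simpa using norm_sub_le l 1
  rcases lt_or_ge ‖l‖ (1/2) with h | h
  · have h1 : kl a l ≤ 4 := by
      unfold kl
      have q0 : 0 ≤ ‖l‖ ^ a := by positivity
      have q1 : ‖l‖ ^ a ≤ 1 := Real.rpow_le_one (norm_nonneg _) (by linarith) ha.le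
      have : |‖l‖ ^ a - 1| ≤ 1 := by rw [abs_le]; constructor <;> linarith
      rw [div_le_iff₀ (by nlinarith)]
      nlinarith
    rw [indicator_of_mem (by rw [mem_ball_zero_iff]; linarith)]
    have : kl a l * ‖l‖ ^ (-(2 * a)) ≤ 4 * ‖l‖ ^ (-(2 * a)) := by gcongr
    linarith
  rcases lt_or_ge ‖l‖ 2 with h2 | h2
  · have l0 : 0 < ‖l‖ := by linarith
    have h1 : kl a l ≤ ‖(l - 1)⁻¹‖ := by
      unfold kl
      have : |‖l‖ ^ a - 1| ≤ ‖l - 1‖ := by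
        rcases le_total ‖l‖ 1 with c | c
        · have q0 : ‖l‖ ^ (1:ℝ) ≤ ‖l‖ ^ a := Real.rpow_le_rpow_of_exponent_ge l0 c ha1.le
          have q1 : ‖l‖ ^ a ≤ 1 := Real.rpow_le_one (norm_nonneg _) c ha.le
          rw [Real.rpow_one] at q0
          rw [abs_le]; constructor <;> linarith
        · have q0 : ‖l‖ ^ a ≤ ‖l‖ ^ (1:ℝ) := Real.rpow_le_rpow_of_exponent_le c ha1.le
          have q1 : 1 ≤ ‖l‖ ^ a := Real.one_le_rpow c ha.le
          rw [Real.rpow_one] at q0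
          rw [abs_le]; constructor <;> linarith
      rw [norm_inv]
      rcases eq_or_ne l 1 with e | e
      · simp [e]
      have : 0 < ‖l - 1‖ := norm_pos_iff.2 (sub_ne_zero.2 e)
      rw [div_le_iff₀ (by positivity)]
      field_simp
      assumption
    have h4 : ‖l‖ ^ (-(2 * a)) ≤ 4 := by
      calc ‖l‖ ^ (-(2 * a)) ≤ (1/2 : ℝ) ^ (-(2 * a)) :=
            Real.rpow_le_rpow_of_nonpos (by norm_num) h (by linarith)
        _ = 2 ^ (2 * a) := by
            rw [Real.rpow_neg (by norm_num), one_div, Real.inv_rpow (by norm_num), inv_inv]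
        _ ≤ 2 ^ (2:ℝ) := Real.rpow_le_rpow_of_exponent_le (by norm_num) (by linarith)
        _ = 4 := by norm_num
    rw [indicator_of_mem (a := l - 1) (by rw [mem_ball_zero_iff]; linarith)]
    have : kl a l * ‖l‖ ^ (-(2 * a)) ≤ ‖(l - 1)⁻¹‖ * 4 := by gcongr
    linarith
  · have l0 : 0 < ‖l‖ := by linarith
    have h1 : kl a l ≤ 4 * ‖l‖ ^ (a - 2) := by
      unfold kl
      have q1 : 1 ≤ ‖l‖ ^ a := Real.one_le_rpow (by linarith) ha.le
      rw [abs_of_nonneg (by linarith), div_le_iff₀ (by nlinarith)]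
      rw [show a - 2 = a + (-2) by ring, Real.rpow_add l0, Real.rpow_neg l0.le, Real.rpow_two]
      have : ‖l‖ ^ 2 ≤ 4 * ‖l - 1‖ ^ 2 := by nlinarith
      have : 1 ≤ (‖l‖ ^ 2)⁻¹ * (4 * ‖l - 1‖ ^ 2) := by
        rw [inv_mul_eq_div, le_div_iff₀ (by positivity)]; linarith
      nlinarith
    have : kl a l * ‖l‖ ^ (-(2 * a)) ≤ 32 * (1 + ‖l‖) ^ (-(2 + a)) := by
      calc kl a l * ‖l‖ ^ (-(2 * a)) ≤ 4 * ‖l‖ ^ (a - 2) * ‖l‖ ^ (-(2 * a)) := by gcongr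
        _ = 4 * ‖l‖ ^ (-(2 + a)) := by
            rw [mul_assoc, ← Real.rpow_add l0]; congr 2; ring
        _ ≤ 4 * ((1 + ‖l‖) / 2) ^ (-(2 + a)) := by
            refine mul_le_mul_of_nonneg_left ?_ (by norm_num)
            exact Real.rpow_le_rpow_of_nonpos (by positivity) (by linarith) (by linarith)
        _ = 4 * (2 ^ (2 + a) * (1 + ‖l‖) ^ (-(2 + a))) := by
            rw [Real.div_rpow (by positivity) (by norm_num), Real.rpow_neg (x := 2) (by norm_num)]
            field_simp
        _ ≤ 4 * (2 ^ (3:ℝ) * (1 + ‖l‖) ^ (-(2 + a))) := by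
            gcongr
            · norm_num
            · linarith
        _ = _ := by norm_num; ring
    linarith

lemma kl_finite {a : ℝ} (ha : 0 < a) (ha1 : a < 1) :
    ∫⁻ l : ℂ, ENNReal.ofReal (kl a l * ‖l‖ ^ (-(2 * a))) ≠ ⊤ := by
  have i1 : Integrable ((ball (0:ℂ) 1).indicator (fun l : ℂ => 4 * ‖l‖ ^ (-(2 * a)))) := by
    rw [integrable_indicator_iff measurableSet_ball]
    refine integrableOn_ball_of_norm_le_rpow (C := 4) (α := 2 * a) (by simp) (by simp; linarith)
      (Eventually.of_forall fun x => ?_) ?_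
    · rw [Real.norm_of_nonneg (by positivity)]
    · exact ((measurable_norm.pow_const _).const_mul _).aestronglyMeasurable
  have i2 : Integrable ((ball (0:ℂ) 4).indicator (fun t : ℂ => 4 * ‖t⁻¹‖)) := by
    rw [integrable_indicator_iff measurableSet_ball]
    exact (integrableOn_inv_ball 4).const_mul 4
  have i3 : Integrable (fun l : ℂ => 32 * (1 + ‖l‖) ^ (-(2 + a))) :=
    (integrable_one_add_norm (by simp; linarith)).const_mul _
  have := ((i1.add (i2.comp_sub_right 1)).add i3).lintegral_lt_top
  refine ne_top_of_le_ne_top this.ne (lintegral_mono fun l => ENNReal.ofReal_le_ofReal ?_)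
  exact kl_bound ha ha1 l

lemma lintegral_cmul {z : ℂ} (hz : z ≠ 0) {f : ℂ → ℝ≥0∞} (hf : Measurable f) :
    ∫⁻ l, f (z * l) = ENNReal.ofReal ((‖z‖ ^ 2)⁻¹) * ∫⁻ w, f w := by
  have n0 : 0 < ‖z‖ := norm_pos_iff.2 hz
  let e : Circle := ⟨z / ‖z‖, by simp [Submonoid.unitSphere, n0.ne']⟩
  have h := (rotation e).measurePreserving
  have h1 := h.lintegral_comp_emb (rotation e).toHomeomorph.measurableEmbedding (fun t => f (‖z‖ • t))
  have h2 : ∀ l, ‖z‖ • (rotation e l) = z * l := by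
    intro l
    rw [rotation_apply]
    change ((‖z‖ : ℝ) : ℂ) * ((z / ‖z‖) * l) = z * l
    have : (‖z‖ : ℂ) ≠ 0 := by exact_mod_cast n0.ne'
    field_simp
  simp_rw [h2] at h1
  rw [h1]
  have h3 := Measure.map_addHaar_smul (volume : Measure ℂ) n0.ne'
  rw [← lintegral_map (μ := (volume : Measure ℂ)) hf (measurable_const_smul ‖z‖), h3,
    lintegral_smul_measure]
  simp [abs_of_nonneg]

end BeurlingAux

namespace BeurlingAux

/-- regularised weight -/
noncomputable def om (a δ : ℝ) (w : ℂ) : ℝ := (‖w‖ ^ 2 + δ ^ 2) ^ (a / 2)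

lemma om_pos {a δ : ℝ} (hδ : 0 < δ) (w : ℂ) : 0 < om a δ w := by unfold om; positivity

lemma contDiff_om {a δ : ℝ} (hδ : 0 < δ) : ContDiff ℝ (⊤ : ℕ∞) (om a δ) := by
  unfold om
  refine ContDiff.rpow_const_of_ne ((contDiff_norm_sq ℝ).add contDiff_const) fun x => ?_
  positivity

lemma norm_rpow_eq {a : ℝ} (w : ℂ) : ‖w‖ ^ a = (‖w‖ ^ 2) ^ (a / 2) := by
  rw [← Real.rpow_two, ← Real.rpow_mul (norm_nonneg _)]; congr 1; ring

lemma le_om {a δ : ℝ} (ha : 0 < a) (w : ℂ) : ‖w‖ ^ a ≤ om a δ w := by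
  rw [norm_rpow_eq]; unfold om
  gcongr
  nlinarith [sq_nonneg δ]

lemma om_ratio {a δ : ℝ} (ha : 0 < a) (hδ : 0 < δ) {z : ℂ} (hz : z ≠ 0) (w : ℂ) :
    |om a δ w - om a δ z| ≤ om a δ z * |(‖w‖ / ‖z‖) ^ a - 1| := by
  have n0 : 0 < ‖z‖ := norm_pos_iff.2 hz
  have o := om_pos (a := a) hδ z
  have e1 : (‖w‖ / ‖z‖) ^ a = ((‖w‖ / ‖z‖) ^ 2) ^ (a / 2) := by
    rw [← Real.rpow_two, ← Real.rpow_mul (by positivity)]; congr 1; ring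
  have e2 : om a δ w = om a δ z * ((‖w‖ ^ 2 + δ ^ 2) / (‖z‖ ^ 2 + δ ^ 2)) ^ (a / 2) := by
    rw [Real.div_rpow (by positivity) (by positivity)]
    unfold om at o ⊢
    field_simp
  have d2 : 0 < δ ^ 2 := by positivity
  have e3 : om a δ w - om a δ z =
    om a δ z * (((‖w‖ ^ 2 + δ ^ 2) / (‖z‖ ^ 2 + δ ^ 2)) ^ (a / 2) - 1) := by
    rw [mul_sub, mul_one, ← e2]
  rw [e3, abs_mul, abs_of_pos o]
  refine mul_le_mul_of_nonneg_left ?_ o.le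
  rw [e1]
  rcases le_total ‖w‖ ‖z‖ with h | h
  · have hsq : ‖w‖ ^ 2 ≤ ‖z‖ ^ 2 := by gcongr
    have q : (‖w‖ / ‖z‖) ^ 2 ≤ (‖w‖ ^ 2 + δ ^ 2) / (‖z‖ ^ 2 + δ ^ 2) := by
      rw [div_pow, div_le_div_iff₀ (by positivity) (by positivity)]; nlinarith
    have q1 : (‖w‖ ^ 2 + δ ^ 2) / (‖z‖ ^ 2 + δ ^ 2) ≤ 1 := by
      rw [div_le_one (by positivity)]; linarith
    have r : ((‖w‖ / ‖z‖) ^ 2) ^ (a / 2) ≤ ((‖w‖ ^ 2 + δ ^ 2) / (‖z‖ ^ 2 + δ ^ 2)) ^ (a / 2) := by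
      gcongr
    have r1 : ((‖w‖ ^ 2 + δ ^ 2) / (‖z‖ ^ 2 + δ ^ 2)) ^ (a / 2) ≤ 1 :=
      Real.rpow_le_one (by positivity) q1 (by positivity)
    rw [abs_of_nonpos (by linarith), abs_of_nonpos (by linarith)]; linarith
  · have hsq : ‖z‖ ^ 2 ≤ ‖w‖ ^ 2 := by gcongr
    have q : (‖w‖ ^ 2 + δ ^ 2) / (‖z‖ ^ 2 + δ ^ 2) ≤ (‖w‖ / ‖z‖) ^ 2 := by
      rw [div_pow, div_le_div_iff₀ (by positivity) (by positivity)]; nlinarith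
    have q1 : 1 ≤ (‖w‖ ^ 2 + δ ^ 2) / (‖z‖ ^ 2 + δ ^ 2) := by
      rw [one_le_div (by positivity)]; linarith
    have r : ((‖w‖ ^ 2 + δ ^ 2) / (‖z‖ ^ 2 + δ ^ 2)) ^ (a / 2) ≤ ((‖w‖ / ‖z‖) ^ 2) ^ (a / 2) := by
      gcongr
    have r1 : 1 ≤ ((‖w‖ ^ 2 + δ ^ 2) / (‖z‖ ^ 2 + δ ^ 2)) ^ (a / 2) :=
      Real.one_le_rpow q1 (by positivity)
    rw [abs_of_nonneg (by linarith), abs_of_nonneg (by linarith)]; linarith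

/-- regularised quotient -/
noncomputable def Gd (a δ : ℝ) (g : ℂ → ℂ) (w : ℂ) : ℂ := ((om a δ w)⁻¹ : ℝ) * g w

lemma Gd_props {a δ : ℝ} (hδ : 0 < δ) {g : ℂ → ℂ} (hg : ContDiff ℝ (⊤ : ℕ∞) g)
    (hc : HasCompactSupport g) (hs : tsupport g ⊆ ball (0:ℂ) 1) :
    ContDiff ℝ (⊤ : ℕ∞) (Gd a δ g) ∧ HasCompactSupport (Gd a δ g) ∧
      tsupport (Gd a δ g) ⊆ ball (0:ℂ) 1 := by
  refine ⟨?_, ?_, ?_⟩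
  · have : ContDiff ℝ (⊤ : ℕ∞) (fun w => (om a δ w)⁻¹) :=
      (contDiff_om hδ).inv fun w => (om_pos hδ w).ne'
    exact (Complex.ofRealCLM.contDiff.comp this).mul hg
  · exact hc.mul_left
  · exact (tsupport_mul_subset_right).trans hs

/-- weighted function -/
noncomputable def Gw (a : ℝ) (g : ℂ → ℂ) (w : ℂ) : ℝ≥0∞ := ENNReal.ofReal (‖w‖ ^ (-a)) * ‖g w‖ₑ

lemma measurable_Gw (a : ℝ) {g : ℂ → ℂ} (hg : Measurable g) : Measurable (Gw a g) := by
  unfold Gw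
  have : Measurable (fun l : ℂ => ‖l‖ ^ (-a)) := measurable_norm.pow_const _
  fun_prop

lemma Gd_le {a δ : ℝ} (ha : 0 < a) (hδ : 0 < δ) (g : ℂ → ℂ) {w : ℂ} (hw : w ≠ 0) :
    ‖Gd a δ g w‖ₑ ≤ Gw a g w := by
  unfold Gd Gw
  have n0 : 0 < ‖w‖ := norm_pos_iff.2 hw
  rw [enorm_mul]
  gcongr
  have o := om_pos (a := a) hδ w
  rw [← ofReal_norm, Complex.norm_of_nonneg (by positivity)]
  apply ENNReal.ofReal_le_ofReal
  rw [Real.rpow_neg n0.le]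
  gcongr
  exact le_om ha w

lemma integrableOn_pv {g : ℂ → ℂ} (hg : Continuous g) (hc : HasCompactSupport g) (z : ℂ) {ε : ℝ}
    (hε : 0 < ε) : IntegrableOn (fun w => g w / (w - z) ^ 2) (ball (0:ℂ) 1 \ ball z ε) := by
  have hi : Integrable g := hg.integrable_of_hasCompactSupport hc
  have m := hg.measurable
  refine Integrable.mono' (g := fun w => (ε ^ 2)⁻¹ * ‖g w‖) (hi.norm.const_mul _).integrableOn
    (Measurable.aestronglyMeasurable (by fun_prop)) ?_
  refine (ae_restrict_iff' (measurableSet_ball.diff measurableSet_ball)).2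
    (Eventually.of_forall fun w hw => ?_)
  have h : ε ≤ ‖w - z‖ := by
    have := hw.2; rw [mem_ball, dist_eq_norm, not_lt] at this; exact this
  rw [norm_div, norm_pow, div_eq_inv_mul]
  gcongr

lemma pointwise {a δ : ℝ} (ha : 0 < a) (hδ : 0 < δ) {g : ℂ → ℂ} (hg : ContDiff ℝ (⊤ : ℕ∞) g)
    (hc : HasCompactSupport g) (hs : tsupport g ⊆ ball (0:ℂ) 1) {z : ℂ} (hz : z ∈ ball (0:ℂ) 1)
    (hz0 : z ≠ 0) :
    ‖((om a δ z)⁻¹ : ℝ) * Jg g z‖ₑ ≤ ‖Jg (Gd a δ g) z‖ₑ +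
      ∫⁻ l, ENNReal.ofReal (kl a l) * Gw a g (z * l) := by
  obtain ⟨Gs, Gc, Gt⟩ := Gd_props (a := a) hδ hg hc hs
  have n0 : 0 < ‖z‖ := norm_pos_iff.2 hz0
  have o := om_pos (a := a) hδ z
  have l1 := (pv hg hc hs hz).const_mul (((om a δ z)⁻¹ : ℝ) : ℂ)
  have l2 := pv Gs Gc Gt hz
  have l3 := (l1.sub l2).enorm
  have key : ‖((om a δ z)⁻¹ : ℝ) * Jg g z - Jg (Gd a δ g) z‖ₑ ≤
      ∫⁻ l, ENNReal.ofReal (kl a l) * Gw a g (z * l) := by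
    refine le_of_tendsto l3 ?_
    filter_upwards [self_mem_nhdsWithin] with ε hε
    have hε' : 0 < ε := hε
    rw [← integral_const_mul, ← integral_sub ((integrableOn_pv hg.continuous hc z hε').const_mul _)
      (integrableOn_pv Gs.continuous Gc z hε')]
    refine (enorm_integral_le_lintegral_enorm _).trans ?_
    refine (setLIntegral_le_lintegral _ _).trans ?_
    have mk : Measurable (fun w => ENNReal.ofReal (kl a (w / z) * (‖z‖ ^ 2)⁻¹) * Gw a g w) := by
      have := measurable_Gw a hg.continuous.measurable
      have := measurable_kl a
      fun_prop
    calc _ ≤ ∫⁻ w, ENNReal.ofReal (kl a (w / z) * (‖z‖ ^ 2)⁻¹) * Gw a g w := by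
          refine lintegral_mono_ae ?_
          filter_upwards [ae_ne_zero] with w hw
          refine le_trans (b := ENNReal.ofReal (kl a (w / z) * (‖z‖ ^ 2)⁻¹) * ‖Gd a δ g w‖ₑ) ?_
            (by gcongr; exact Gd_le ha hδ g hw)
          have ow := om_pos (a := a) hδ w
          have e : (((om a δ z)⁻¹ : ℝ) : ℂ) * (g w / (w - z) ^ 2) - Gd a δ g w / (w - z) ^ 2 =
              ((om a δ w - om a δ z : ℝ) : ℂ) * (((om a δ z)⁻¹ : ℝ) : ℂ) / (w - z) ^ 2
                * Gd a δ g w := by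
            unfold Gd
            have : (om a δ w : ℂ) ≠ 0 := by exact_mod_cast ow.ne'
            have : (om a δ z : ℂ) ≠ 0 := by exact_mod_cast o.ne'
            push_cast
            field_simp
          rw [e, enorm_mul]
          gcongr
          rw [← ofReal_norm]
          apply ENNReal.ofReal_le_ofReal
          rw [norm_div, norm_mul, Complex.norm_real, Complex.norm_real, norm_pow, Real.norm_eq_abs,
            Real.norm_of_nonneg (by positivity)]
          have e5 : kl a (w / z) * (‖z‖ ^ 2)⁻¹ = |(‖w‖ / ‖z‖) ^ a - 1| / ‖w - z‖ ^ 2 := by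
            unfold kl
            rw [show w / z - 1 = (w - z) / z by field_simp, norm_div, norm_div, div_pow]
            field_simp
          rw [e5]
          gcongr
          rw [← div_eq_mul_inv, div_le_iff₀ o, mul_comm]
          exact om_ratio ha hδ hz0 w
      _ = ENNReal.ofReal (‖z‖ ^ 2) * (ENNReal.ofReal ((‖z‖ ^ 2)⁻¹) *
          ∫⁻ w, ENNReal.ofReal (kl a (w / z) * (‖z‖ ^ 2)⁻¹) * Gw a g w) := by
          rw [← mul_assoc, ← ENNReal.ofReal_mul (by positivity), mul_inv_cancel₀ (by positivity)]
          simp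
      _ = ENNReal.ofReal (‖z‖ ^ 2) *
          ∫⁻ l, ENNReal.ofReal (kl a (z * l / z) * (‖z‖ ^ 2)⁻¹) * Gw a g (z * l) := by
          rw [lintegral_cmul hz0 mk]
      _ = ∫⁻ l, ENNReal.ofReal (‖z‖ ^ 2) *
            (ENNReal.ofReal (kl a (z * l / z) * (‖z‖ ^ 2)⁻¹) * Gw a g (z * l)) := by
          rw [lintegral_const_mul' _ _ ENNReal.ofReal_ne_top]
      _ = _ := by
          refine lintegral_congr fun l => ?_
          rw [mul_div_cancel_left₀ _ hz0, ← mul_assoc, ← ENNReal.ofReal_mul (by positivity)]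
          congr 2
          field_simp
  calc ‖((om a δ z)⁻¹ : ℝ) * Jg g z‖ₑ
      = ‖Jg (Gd a δ g) z + (((om a δ z)⁻¹ : ℝ) * Jg g z - Jg (Gd a δ g) z)‖ₑ := by
        congr 1; ring
    _ ≤ _ := (enorm_add_le _ _).trans (by gcongr)

end BeurlingAux

namespace BeurlingAux

lemma hardy {p : ℝ} (hp : 1 < p) {g : ℂ → ℂ} (hg : Measurable g) :
    ∫⁻ z, (∫⁻ l, ENNReal.ofReal (kl (1/p) l) * Gw (1/p) g (z * l)) ^ p ≤
      (∫⁻ l : ℂ, ENNReal.ofReal (kl (1/p) l * ‖l‖ ^ (-(2 * (1/p))))) ^ p *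
        ∫⁻ w, Gw (1/p) g w ^ p := by
  have hp0 : 0 < p := by linarith
  set a := 1/p with ha
  have a0 : 0 < a := by positivity
  have mG := measurable_Gw a hg
  have mk := measurable_kl a
  have mn : Measurable (fun l : ℂ => ‖l‖ ^ (-(2 * a))) := measurable_norm.pow_const _
  have mn' : Measurable (fun l : ℂ => ‖l‖ ^ (2 * a)) := measurable_norm.pow_const _
  have M := minkowski (volume : Measure ℂ) (volume : Measure ℂ) hp
    (k := fun l => ENNReal.ofReal (kl a l * ‖l‖ ^ (-(2 * a))))
    (F := fun z l => ENNReal.ofReal (‖l‖ ^ (2 * a)) * Gw a g (z * l)) (by fun_prop)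
    (by
      have h1 : Measurable (fun q : ℂ × ℂ => ENNReal.ofReal (‖q.2‖ ^ (2 * a))) :=
        (mn'.comp measurable_snd).ennreal_ofReal
      have h2 : Measurable (fun q : ℂ × ℂ => Gw a g (q.1 * q.2)) :=
        mG.comp (by fun_prop)
      exact h1.mul h2) (M := ∫⁻ w, Gw a g w ^ p) (by
      intro l
      rcases eq_or_ne l 0 with h | h
      · simp [h, Real.zero_rpow (show (2 * a) ≠ 0 by positivity), hp0]
      have n0 : 0 < ‖l‖ := norm_pos_iff.2 h
      have e : ∀ z, (ENNReal.ofReal (‖l‖ ^ (2 * a)) * Gw a g (z * l)) ^ p =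
          ENNReal.ofReal (‖l‖ ^ 2) * (fun w => Gw a g w ^ p) (l * z) := by
        intro z
        rw [ENNReal.mul_rpow_of_nonneg _ _ hp0.le, ENNReal.ofReal_rpow_of_nonneg (by positivity) hp0.le,
          ← Real.rpow_mul n0.le, mul_comm z l, show 2 * a * p = 2 by rw [ha]; field_simp, Real.rpow_two]
      simp_rw [e]
      rw [lintegral_const_mul' _ _ ENNReal.ofReal_ne_top, lintegral_cmul h (mG.pow_const p),
        ← mul_assoc, ← ENNReal.ofReal_mul (by positivity), mul_inv_cancel₀ (by positivity)]
      simp)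
  refine le_trans (le_of_eq ?_) M
  refine lintegral_congr fun z => ?_
  congr 1
  refine lintegral_congr_ae ?_
  filter_upwards [ae_ne_zero] with l hl
  have n0 : 0 < ‖l‖ := norm_pos_iff.2 hl
  rw [← mul_assoc, ← ENNReal.ofReal_mul (mul_nonneg (kl_nonneg _ _) (by positivity)), mul_assoc,
    ← Real.rpow_add n0]
  simp

lemma measurable_Jg {g : ℂ → ℂ} (hg : Continuous g) : Measurable (Jg g) := by
  have m := hg.measurable
  have : StronglyMeasurable (fun q : ℂ × ℂ => (g (q.1 - q.2) - g q.1) / q.2 ^ 2) :=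
    Measurable.stronglyMeasurable (by fun_prop)
  exact (this.integral_prod_right' (ν := volume.restrict (ball (0:ℂ) 2))).measurable

lemma Gw_pow {p : ℝ} (hp : 1 < p) (g : ℂ → ℂ) {z : ℂ} (hz : z ≠ 0) :
    Gw (1/p) g z ^ p = ‖g z‖ₑ ^ p * ‖z‖ₑ⁻¹ := by
  have n0 : 0 < ‖z‖ := norm_pos_iff.2 hz
  unfold Gw
  rw [ENNReal.mul_rpow_of_nonneg _ _ (by linarith), mul_comm,
    ENNReal.ofReal_rpow_of_nonneg (by positivity) (by linarith), ← Real.rpow_mul n0.le,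
    show -(1/p) * p = -1 by field_simp, Real.rpow_neg_one, ENNReal.ofReal_inv_of_pos n0, ofReal_norm]

lemma weighted {p : ℝ} (hp : 1 < p) : ∃ C : ℝ≥0∞, C ≠ ⊤ ∧ ∀ g : ℂ → ℂ,
    ContDiff ℝ (⊤ : ℕ∞) g → HasCompactSupport g → tsupport g ⊆ ball (0:ℂ) 1 →
    ∫⁻ z in ball (0:ℂ) 1, ‖Jg g z‖ₑ ^ p * ‖z‖ₑ⁻¹ ≤
      C * ∫⁻ z in ball (0:ℂ) 1, ‖g z‖ₑ ^ p * ‖z‖ₑ⁻¹ := by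
  have hp0 : 0 < p := by linarith
  obtain ⟨C, hC, H⟩ := unweighted hp
  have a0 : 0 < 1/p := by positivity
  have a1 : 1/p < 1 := by rw [div_lt_one hp0]; exact hp
  set N := ∫⁻ l : ℂ, ENNReal.ofReal (kl (1/p) l * ‖l‖ ^ (-(2 * (1/p)))) with hN
  have N1 : N ≠ ⊤ := kl_finite a0 a1
  refine ⟨2 ^ (p - 1) * (C + N ^ p), ?_, fun g hg hc hs => ?_⟩
  · have : N ^ p ≠ ⊤ := ENNReal.rpow_ne_top_of_nonneg hp0.le N1
    have : (2 : ℝ≥0∞) ^ (p - 1) ≠ ⊤ := ENNReal.rpow_ne_top_of_nonneg (by linarith) (by simp)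
    finiteness
  have mg := hg.continuous.measurable
  have rhs : ∫⁻ z in ball (0:ℂ) 1, ‖g z‖ₑ ^ p * ‖z‖ₑ⁻¹ = ∫⁻ z, Gw (1/p) g z ^ p := by
    rw [← lintegral_indicator measurableSet_ball]
    refine lintegral_congr_ae ?_
    filter_upwards [ae_ne_zero] with z hz
    by_cases h : z ∈ ball (0:ℂ) 1
    · rw [indicator_of_mem h, Gw_pow hp g hz]
    · have : g z = 0 := by
        by_contra h'
        exact h (hs (subset_tsupport _ h'))
      rw [indicator_of_notMem h, Gw_pow hp g hz, this]
      simp [hp0]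
  have step : ∀ δ : ℝ, 0 < δ → ∫⁻ z in ball (0:ℂ) 1, ‖((om (1/p) δ z)⁻¹ : ℝ) * Jg g z‖ₑ ^ p ≤
      2 ^ (p - 1) * (C + N ^ p) * ∫⁻ z, Gw (1/p) g z ^ p := by
    intro δ hδ
    obtain ⟨Gs, Gc, Gt⟩ := Gd_props (a := 1/p) hδ hg hc hs
    have mJ := measurable_Jg Gs.continuous
    calc _ ≤ ∫⁻ z in ball (0:ℂ) 1, 2 ^ (p - 1) * (‖Jg (Gd (1/p) δ g) z‖ₑ ^ p +
          (∫⁻ l, ENNReal.ofReal (kl (1/p) l) * Gw (1/p) g (z * l)) ^ p) := by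
          refine lintegral_mono_ae ?_
          filter_upwards [ae_restrict_mem measurableSet_ball, ae_restrict_of_ae ae_ne_zero] with z h1 h2
          refine le_trans ?_ (add_rpow_le' hp _ _)
          gcongr
          exact pointwise a0 hδ hg hc hs h1 h2
      _ = 2 ^ (p - 1) * ((∫⁻ z in ball (0:ℂ) 1, ‖Jg (Gd (1/p) δ g) z‖ₑ ^ p) +
          ∫⁻ z in ball (0:ℂ) 1,
            (∫⁻ l, ENNReal.ofReal (kl (1/p) l) * Gw (1/p) g (z * l)) ^ p) := by
          rw [lintegral_const_mul' _ _ (ENNReal.rpow_ne_top_of_nonneg (by linarith) (by simp)),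
            lintegral_add_left (mJ.enorm.pow_const p)]
      _ ≤ 2 ^ (p - 1) * (C * (∫⁻ z, Gw (1/p) g z ^ p) + N ^ p * ∫⁻ z, Gw (1/p) g z ^ p) := by
          gcongr
          · refine (H _ Gs Gc Gt).trans ?_
            refine mul_le_mul_right (lintegral_mono_ae ?_) _
            filter_upwards [ae_ne_zero] with z hz
            gcongr
            exact Gd_le a0 hδ g hz
          · exact (setLIntegral_le_lintegral _ _).trans (hardy hp mg)
      _ = _ := by ring
  have fin := fatou_enorm (volume.restrict (ball (0:ℂ) 1)) hp0
    (F := fun n z => (((om (1/p) (1 / ((n:ℝ) + 1)) z)⁻¹ : ℝ) : ℂ) * Jg g z)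
    (G := fun z => ((‖z‖ ^ (-(1/p)) : ℝ) : ℂ) * Jg g z) (by
      intro n
      have := (contDiff_om (a := 1/p) (δ := 1 / ((n:ℝ) + 1)) (by positivity)).continuous.measurable
      have := measurable_Jg hg.continuous
      fun_prop) (by
      filter_upwards [ae_restrict_of_ae ae_ne_zero] with z hz
      have n0 : 0 < ‖z‖ := norm_pos_iff.2 hz
      refine Tendsto.mul_const _ ?_
      refine (Complex.continuous_ofReal.tendsto _).comp ?_
      rw [Real.rpow_neg n0.le]
      refine Tendsto.inv₀ ?_ (by positivity)
      rw [norm_rpow_eq]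
      unfold om
      refine Tendsto.rpow_const ?_ (Or.inl (by positivity))
      have := (tendsto_one_div_add_atTop_nhds_zero_nat (𝕜 := ℝ)).pow 2
      simpa using this.const_add (‖z‖ ^ 2)) (fun n => step _ (by positivity))
  rw [rhs]
  refine le_trans (le_of_eq ?_) fin
  refine lintegral_congr_ae ?_
  filter_upwards [ae_restrict_of_ae ae_ne_zero] with z hz
  rw [← Gw_pow hp (Jg g) hz]
  unfold Gw
  rw [enorm_mul, ← ofReal_norm ((‖z‖ ^ (-(1/p)) : ℝ) : ℂ), Complex.norm_of_nonneg (by positivity)]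

end BeurlingAux

/-- The principal value singular integral `Sg(z) = p.v. -(1/π)∫_𝔻 g(w)/(w-z)² dμ(w)` exists
pointwise on the unit disk 𝔻 and is bounded on `Lᵖ(𝔻)` with respect to the Muckenhoupt
weight `|z|⁻¹` (Proposition `CalderonZygmund`). -/
theorem singular_integral_bounded_weighted_Lp (p : ℝ) (hp : 1 < p) :
    -- (i) the principal value limit exists for every z ∈ 𝔻
    (∀ g : ℂ → ℂ, ContDiff ℝ (⊤ : ℕ∞) g → HasCompactSupport g →
      tsupport g ⊆ ball (0:ℂ) 1 →
      ∀ z ∈ ball (0:ℂ) 1, ∃ L : ℂ,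
        Tendsto (fun ε : ℝ =>
            -(Real.pi : ℂ)⁻¹ * ∫ w in ball (0:ℂ) 1 \ ball z ε, g w / (w - z) ^ 2)
          (𝓝[>] 0) (𝓝 L)) ∧
    -- (ii) S is bounded on Lᵖ of the disk with weight |z|⁻¹
    (∃ C : ℝ, 0 < C ∧
      ∀ g : ℂ → ℂ, ContDiff ℝ (⊤ : ℕ∞) g → HasCompactSupport g →
        tsupport g ⊆ ball (0:ℂ) 1 →
        ∀ Sg : ℂ → ℂ,
          (∀ z ∈ ball (0:ℂ) 1,
            Tendsto (fun ε : ℝ =>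
                -(Real.pi : ℂ)⁻¹ * ∫ w in ball (0:ℂ) 1 \ ball z ε, g w / (w - z) ^ 2)
              (𝓝[>] 0) (𝓝 (Sg z))) →
          ∫⁻ z in ball (0:ℂ) 1, (‖Sg z‖₊ : ℝ≥0∞) ^ p * (‖z‖₊ : ℝ≥0∞)⁻¹ ≤
            ENNReal.ofReal C *
              ∫⁻ z in ball (0:ℂ) 1, (‖g z‖₊ : ℝ≥0∞) ^ p * (‖z‖₊ : ℝ≥0∞)⁻¹) := by
  refine ⟨fun g hg hc hs z hz => ⟨_, (BeurlingAux.pv hg hc hs hz).const_mul _⟩, ?_⟩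
  obtain ⟨C, hC, H⟩ := BeurlingAux.weighted hp
  refine ⟨C.toReal + 1, by positivity, fun g hg hc hs Sg hS => ?_⟩
  have h1 : ∀ z ∈ ball (0:ℂ) 1, (‖Sg z‖₊ : ℝ≥0∞) ≤ ‖BeurlingAux.Jg g z‖ₑ := by
    intro z hz
    have e : Sg z = -(Real.pi : ℂ)⁻¹ * BeurlingAux.Jg g z :=
      tendsto_nhds_unique (hS z hz) ((BeurlingAux.pv hg hc hs hz).const_mul _)
    rw [e, ← enorm_eq_nnnorm, ← ofReal_norm, ← ofReal_norm]
    apply ENNReal.ofReal_le_ofReal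
    rw [norm_mul, norm_neg, norm_inv, Complex.norm_of_nonneg Real.pi_pos.le]
    have h3 : Real.pi⁻¹ ≤ 1 := inv_le_one_of_one_le₀ (by linarith [Real.pi_gt_three])
    exact mul_le_of_le_one_left (norm_nonneg _) h3
  calc ∫⁻ z in ball (0:ℂ) 1, (‖Sg z‖₊ : ℝ≥0∞) ^ p * (‖z‖₊ : ℝ≥0∞)⁻¹
      ≤ ∫⁻ z in ball (0:ℂ) 1, ‖BeurlingAux.Jg g z‖ₑ ^ p * ‖z‖ₑ⁻¹ := by
        refine setLIntegral_mono' measurableSet_ball fun z hz => ?_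
        have := h1 z hz
        rw [← enorm_eq_nnnorm z]
        gcongr
    _ ≤ C * ∫⁻ z in ball (0:ℂ) 1, ‖g z‖ₑ ^ p * ‖z‖ₑ⁻¹ := H g hg hc hs
    _ ≤ ENNReal.ofReal (C.toReal + 1) * ∫⁻ z in ball (0:ℂ) 1, ‖g z‖ₑ ^ p * ‖z‖ₑ⁻¹ := by
        gcongr
        calc C = ENNReal.ofReal C.toReal := (ENNReal.ofReal_toReal hC).symm
          _ ≤ _ := ENNReal.ofReal_le_ofReal (by linarith)
end
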